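/- Let j ≥ −1, k ∈ {−1,0,1}, l ≥ 0, and let m be an integer with 0 ≤ m < j. Suppose 1 ≤ p ≤ q and 1/p + 1/q ≤ 1. Then there is a constant C (independent of j, l, m, g) such that ‖ φ_{k,l}(r,t) 𝒰_t 𝒫_{j,m} g ‖_{L^q(ℝ²×[1,2], dr dx₃ dt)} ≤ C · 2^{−j/2} 2^{l/q} 2^{(2/q)(m/2 − l) + ((j−m)/2)(1 − 1/p − 1/q) + (3j/2)(1/p − 1/q)} ‖g‖_{L^p}. -/

import Mathlib

open MeasureTheory Real Set
open scoped ENNReal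

noncomputable section

/-- Euclidean norm on `ℝ²` (the product norm on `ℝ × ℝ` is the sup norm, so we
spell out the Euclidean one). -/
def enorm2 (ξ : ℝ × ℝ) : ℝ := Real.sqrt (ξ.1 ^ 2 + ξ.2 ^ 2)

/-- Fourier transform on `ℝ²` (nonunitary convention). -/
def ft2 (g : ℝ × ℝ → ℂ) (ξ : ℝ × ℝ) : ℂ :=
  ∫ y : ℝ × ℝ, Complex.exp (-(Complex.I) * ((y.1 * ξ.1 + y.2 * ξ.2 : ℝ) : ℂ)) * g y

/-- Fourier transform of the arclength measure `dσ` on the unit circle in `ℝ²`. -/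
def sigmaHat (ξ : ℝ × ℝ) : ℂ :=
  ∫ θ in Set.Ioc (0:ℝ) (2 * π),
    Complex.exp (-(Complex.I) * ((ξ.1 * Real.cos θ + ξ.2 * Real.sin θ : ℝ) : ℂ))

/-- The operator `𝒜_t g(r,x₃) = (2π)⁻² ∫ e^{i(((r²+t²)/2)ξ₁+x₃ξ₂)} \widehat{dσ}(trξ) ĝ(ξ) dξ`. -/
def Aop (g : ℝ × ℝ → ℂ) (t r x₃ : ℝ) : ℂ :=
  (((2 * π) ^ (-2 : ℤ) : ℝ) : ℂ) *
    ∫ ξ : ℝ × ℝ,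
      Complex.exp (Complex.I * ((((r ^ 2 + t ^ 2) / 2) * ξ.1 + x₃ * ξ.2 : ℝ) : ℂ)) *
        sigmaHat (t * r * ξ.1, t * r * ξ.2) * ft2 g ξ

/-- A Littlewood–Paley bump: nonnegative, smooth, supported in `[1−10⁻³, 2+10⁻³]`,
with `∑_{j∈ℤ} φ(2^{−j}s) = 1` for all `s > 0`. -/
def IsLPBump (φ : ℝ → ℝ) : Prop :=
  ContDiff ℝ (⊤ : ℕ∞) φ ∧ (∀ s, 0 ≤ φ s) ∧
    Function.support φ ⊆ Set.Icc (1 - 1/1000) (2 + 1/1000) ∧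
    ∀ s : ℝ, 0 < s → HasSum (fun j : ℤ => φ ((2:ℝ) ^ (-j) * s)) 1

/-- The Littlewood–Paley projection `𝒫_j`, defined via its multiplier `φ(2^{−j}|ξ|)`. -/
def proj (φ : ℝ → ℝ) (j : ℤ) (g : ℝ × ℝ → ℂ) (x : ℝ × ℝ) : ℂ :=
  (((2 * π) ^ (-2 : ℤ) : ℝ) : ℂ) *
    ∫ ξ : ℝ × ℝ,
      Complex.exp (Complex.I * ((x.1 * ξ.1 + x.2 * ξ.2 : ℝ) : ℂ)) *
        ((φ ((2:ℝ) ^ (-j) * enorm2 ξ) : ℝ) : ℂ) * ft2 g ξ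

/-- `φ_{<ℓ}(s) = ∑_{j<ℓ} φ(2^{−j} s)`. -/
def philt (φ : ℝ → ℝ) (l : ℤ) (s : ℝ) : ℝ :=
  ∑' j : ℤ, if j < l then φ ((2:ℝ) ^ (-j) * s) else 0

/-- The projection `𝒫_{<ℓ}`, with multiplier `φ_{<ℓ}(|ξ|)`. -/
def projLt (φ : ℝ → ℝ) (l : ℤ) (g : ℝ × ℝ → ℂ) (x : ℝ × ℝ) : ℂ :=
  (((2 * π) ^ (-2 : ℤ) : ℝ) : ℂ) *
    ∫ ξ : ℝ × ℝ,
      Complex.exp (Complex.I * ((x.1 * ξ.1 + x.2 * ξ.2 : ℝ) : ℂ)) *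
        ((philt φ l (enorm2 ξ) : ℝ) : ℂ) * ft2 g ξ

/-- The operator `𝒰_t g(r,x₃) = ∫ e^{i(((r²+t²)/2)ξ₁+x₃ξ₂+tr|ξ|)} |rξ|^{−1/2} ĝ(ξ) dξ`. -/
def Uop (g : ℝ × ℝ → ℂ) (t r x₃ : ℝ) : ℂ :=
  ∫ ξ : ℝ × ℝ,
    Complex.exp (Complex.I *
        ((((r ^ 2 + t ^ 2) / 2) * ξ.1 + x₃ * ξ.2 + t * r * enorm2 ξ : ℝ) : ℂ)) *
      (((|r| * enorm2 ξ) ^ (-(1:ℝ)/2) : ℝ) : ℂ) * ft2 g ξ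

/-- The angular cutoff `ψ_m(ξ) = φ(2^m |ξ₁/|ξ| + 1|)`. -/
def psiA (φ : ℝ → ℝ) (m : ℤ) (ξ : ℝ × ℝ) : ℝ :=
  φ ((2:ℝ) ^ m * |ξ.1 / enorm2 ξ + 1|)

/-- The projection `𝒫_{j,m}` with multiplier `φ_j(|ξ|) ψ_m(ξ)`. -/
def projJM (φ : ℝ → ℝ) (j m : ℤ) (g : ℝ × ℝ → ℂ) (x : ℝ × ℝ) : ℂ :=
  (((2 * π) ^ (-2 : ℤ) : ℝ) : ℂ) *
    ∫ ξ : ℝ × ℝ,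
      Complex.exp (Complex.I * ((x.1 * ξ.1 + x.2 * ξ.2 : ℝ) : ℂ)) *
        ((φ ((2:ℝ) ^ (-j) * enorm2 ξ) * psiA φ m ξ : ℝ) : ℂ) * ft2 g ξ

/-- `φ_{k,l}(r,t) = φ_k(r) φ(2^l |r−t|)`. -/
def phikl (φ : ℝ → ℝ) (k l : ℤ) (r t : ℝ) : ℝ :=
  φ ((2:ℝ) ^ (-k) * r) * φ ((2:ℝ) ^ l * |r - t|)

/-- The oscillating exponential `e^{ix}`. -/
def osc (x : ℝ) : ℂ := Complex.exp (Complex.I * (x : ℂ))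

lemma osc_add (x y : ℝ) : osc (x + y) = osc x * osc y := by
  simp [osc, mul_add, Complex.exp_add]

lemma norm_osc (x : ℝ) : ‖osc x‖ = 1 := by
  rw [osc, mul_comm]; exact Complex.norm_exp_ofReal_mul_I x

lemma enorm_osc (x : ℝ) : ‖osc x‖ₑ = 1 := by
  rw [← ofReal_norm, norm_osc, ENNReal.ofReal_one]

lemma continuous_osc : Continuous osc := by unfold osc; fun_prop

@[fun_prop]
lemma measurable_osc : Measurable osc := continuous_osc.measurable

lemma conj_osc (x : ℝ) : starRingEnd ℂ (osc x) = osc (-x) := by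
  simp [osc, ← Complex.exp_conj]

lemma integral_gaussian_osc {ε : ℝ} (hε : 0 < ε) (a b : ℝ) :
    ∫ x : ℝ × ℝ, ((Real.exp (-ε * (x.1 ^ 2 + x.2 ^ 2)) : ℝ) : ℂ) * osc (x.1 * a + x.2 * b) =
      ((π / ε * Real.exp (-(a ^ 2 + b ^ 2) / (4 * ε)) : ℝ) : ℂ) := by
  have h1 : ∀ t : ℝ, ∫ x : ℝ, ((Real.exp (-ε * x ^ 2) : ℝ) : ℂ) * osc (x * t) =
      (π / ε : ℂ) ^ (1 / 2 : ℂ) * Complex.exp (-t ^ 2 / (4 * ε)) := by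
    intro t
    rw [← fourierIntegral_gaussian (b := (ε : ℂ)) (by simpa using hε) (t : ℂ)]
    refine integral_congr_ae (.of_forall fun x => ?_)
    simp only [osc]
    push_cast
    rw [mul_comm]
    congr 2
    ring
  have h2 : ∀ x : ℝ × ℝ,
      ((Real.exp (-ε * (x.1 ^ 2 + x.2 ^ 2)) : ℝ) : ℂ) * osc (x.1 * a + x.2 * b) =
      (((Real.exp (-ε * x.1 ^ 2) : ℝ) : ℂ) * osc (x.1 * a)) *
        (((Real.exp (-ε * x.2 ^ 2) : ℝ) : ℂ) * osc (x.2 * b)) := by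
    intro x
    rw [osc_add, mul_add, Real.exp_add]
    push_cast
    ring
  simp_rw [h2]
  rw [Measure.volume_eq_prod, integral_prod_mul (μ := volume) (ν := volume)
    (fun x : ℝ => ((Real.exp (-ε * x ^ 2) : ℝ) : ℂ) * osc (x * a))
    (fun x : ℝ => ((Real.exp (-ε * x ^ 2) : ℝ) : ℂ) * osc (x * b)), h1, h1]
  have h3 : (π / ε : ℂ) ^ (1 / 2 : ℂ) * (π / ε : ℂ) ^ (1 / 2 : ℂ) = π / ε := by
    rw [← Complex.cpow_add _ _ (by
      simp [Real.pi_ne_zero, hε.ne'])]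
    norm_num
  calc _ = ((π / ε : ℂ) ^ (1 / 2 : ℂ) * (π / ε : ℂ) ^ (1 / 2 : ℂ)) *
        (Complex.exp (-a ^ 2 / (4 * ε)) * Complex.exp (-b ^ 2 / (4 * ε))) := by ring
    _ = _ := by
      rw [h3, ← Complex.exp_add]
      push_cast
      congr 2
      ring

lemma integrable_gaussian_prod {ε : ℝ} (hε : 0 < ε) :
    Integrable (fun x : ℝ × ℝ => Real.exp (-ε * (x.1 ^ 2 + x.2 ^ 2))) := by
  have h := (integrable_exp_neg_mul_sq hε).mul_prod (integrable_exp_neg_mul_sq hε)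
  refine h.congr (.of_forall fun x => ?_)
  simp only
  rw [← Real.exp_add]
  ring_nf

lemma lintegral_gaussian_prod {ε : ℝ} (hε : 0 < ε) :
    ∫⁻ x : ℝ × ℝ, ENNReal.ofReal (Real.exp (-ε * (x.1 ^ 2 + x.2 ^ 2))) =
      ENNReal.ofReal (π / ε) := by
  rw [← ofReal_integral_eq_lintegral_ofReal (integrable_gaussian_prod hε)
    (.of_forall fun x => (Real.exp_pos _).le)]
  congr 1
  have h := integral_gaussian_osc hε 0 0
  have h0 : osc 0 = 1 := by simp [osc]
  simp only [mul_zero, add_zero, h0, mul_one, integral_complex_ofReal] at h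
  simpa using Complex.ofReal_injective h

/-- Gaussian-weighted form of `lintegral_oscillatory_sq_le`. -/
lemma lintegral_gaussian_oscillatory_sq_le {X : Type*} [MeasurableSpace X] (μ : Measure X)
    [SFinite μ] {Φ : X → ℝ × ℝ} (hΦ : Measurable Φ) {h : X → ℂ} (hh : Integrable h μ)
    {M : ℝ≥0∞} (hM : ∀ f : ℝ × ℝ → ℝ≥0∞, Measurable f → ∫⁻ ξ, f (Φ ξ) ∂μ ≤ M * ∫⁻ x, f x)
    {ε : ℝ} (hε : 0 < ε) :
    ∫⁻ x : ℝ × ℝ, ENNReal.ofReal (Real.exp (-ε * (x.1 ^ 2 + x.2 ^ 2))) *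
        ‖∫ ξ, osc (x.1 * (Φ ξ).1 + x.2 * (Φ ξ).2) * h ξ ∂μ‖ₑ ^ 2 ≤
      ENNReal.ofReal ((2 * π) ^ 2) * M * ∫⁻ ξ, ‖h ξ‖ₑ ^ 2 ∂μ := by
  set I : ℝ × ℝ → ℂ := fun x => ∫ ξ, osc (x.1 * (Φ ξ).1 + x.2 * (Φ ξ).2) * h ξ ∂μ with hI
  set W : ℝ × ℝ → ℝ := fun x => Real.exp (-ε * (x.1 ^ 2 + x.2 ^ 2)) with hW
  set F : (ℝ × ℝ) → X × X → ℂ := fun x p => (W x : ℂ) *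
    ((osc (x.1 * (Φ p.1).1 + x.2 * (Φ p.1).2) * h p.1) *
      starRingEnd ℂ (osc (x.1 * (Φ p.2).1 + x.2 * (Φ p.2).2) * h p.2)) with hF
  have hInt : Integrable (Function.uncurry F) (volume.prod (μ.prod μ)) := by
    have h1 : Integrable (fun z : (ℝ × ℝ) × (X × X) =>
        (W z.1 : ℂ) * (h z.2.1 * starRingEnd ℂ (h z.2.2))) (volume.prod (μ.prod μ)) := by
      refine Integrable.mul_prod (f := fun x => (W x : ℂ))
        (g := fun p : X × X => h p.1 * starRingEnd ℂ (h p.2)) ?_ ?_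
      · exact (integrable_gaussian_prod hε).ofReal
      · refine Integrable.mul_prod (f := h) (g := fun p => starRingEnd ℂ (h p)) hh ?_
        exact (Complex.conjLIE.toContinuousLinearEquiv.toContinuousLinearMap.integrable_comp hh)
    have h2 := h1.bdd_mul (c := 1) (f := fun z : (ℝ × ℝ) × (X × X) =>
      osc (z.1.1 * (Φ z.2.1).1 + z.1.2 * (Φ z.2.1).2) *
        osc (-(z.1.1 * (Φ z.2.2).1 + z.1.2 * (Φ z.2.2).2)))
      (by
        apply Measurable.aestronglyMeasurable
        fun_prop)
      (.of_forall fun z => by simp [norm_osc])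
    refine h2.congr (.of_forall fun z => ?_)
    simp only [hF, Function.uncurry, map_mul, conj_osc]
    ring
  have hsq : ∀ x, ((W x * ‖I x‖ ^ 2 : ℝ) : ℂ) = ∫ p, F x p ∂(μ.prod μ) := by
    intro x
    simp only [hF]
    rw [integral_const_mul]
    rw [integral_prod_mul (fun ξ => osc (x.1 * (Φ ξ).1 + x.2 * (Φ ξ).2) * h ξ)
      (fun ξ => starRingEnd ℂ (osc (x.1 * (Φ ξ).1 + x.2 * (Φ ξ).2) * h ξ)), integral_conj]
    push_cast
    rw [← Complex.mul_conj']
  have hWI : Integrable (fun x => W x * ‖I x‖ ^ 2) := by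
    have := hInt.integral_prod_left
    simp only [Function.uncurry] at this
    simp_rw [← hsq] at this
    have h2 := this.re
    simp only [RCLike.re_to_complex, Complex.ofReal_re] at h2
    exact h2
  have hstep1 : ∫⁻ x : ℝ × ℝ, ENNReal.ofReal (W x) * ‖I x‖ₑ ^ 2 =
      ‖∫ p, ∫ x, F x p ∂volume ∂(μ.prod μ)‖ₑ := by
    rw [← integral_integral_swap hInt]
    simp_rw [← hsq]
    rw [integral_complex_ofReal]
    rw [← ofReal_norm, Complex.norm_real, Real.norm_eq_abs, abs_of_nonneg
      (integral_nonneg fun x => mul_nonneg (Real.exp_pos _).le (by positivity)),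
      ofReal_integral_eq_lintegral_ofReal hWI
        (.of_forall fun x => mul_nonneg (Real.exp_pos _).le (by positivity))]
    refine lintegral_congr fun x => ?_
    rw [ENNReal.ofReal_mul (Real.exp_pos _).le, ENNReal.ofReal_pow (norm_nonneg _),
      ofReal_norm]
  set G : ℝ × ℝ → ℝ≥0∞ := fun y =>
    ENNReal.ofReal (π / ε) * ENNReal.ofReal (Real.exp (-(1 / (4 * ε)) * (y.1 ^ 2 + y.2 ^ 2)))
    with hG
  have hGm : Measurable G := by simp only [hG]; fun_prop
  have hGint : ∫⁻ y, G y = ENNReal.ofReal ((2 * π) ^ 2) := by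
    simp only [hG]
    rw [lintegral_const_mul _ (by fun_prop), lintegral_gaussian_prod (by positivity),
      ← ENNReal.ofReal_mul (by positivity)]
    congr 1
    field_simp
    ring
  have hFint : ∀ p : X × X, ‖∫ x, F x p‖ₑ = ‖h p.1‖ₑ * ‖h p.2‖ₑ * G (Φ p.1 - Φ p.2) := by
    intro p
    have h1 : ∀ x, F x p = (h p.1 * starRingEnd ℂ (h p.2)) *
        (((Real.exp (-ε * (x.1 ^ 2 + x.2 ^ 2)) : ℝ) : ℂ) *
          osc (x.1 * ((Φ p.1).1 - (Φ p.2).1) + x.2 * ((Φ p.1).2 - (Φ p.2).2))) := by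
      intro x
      have : x.1 * ((Φ p.1).1 - (Φ p.2).1) + x.2 * ((Φ p.1).2 - (Φ p.2).2) =
        (x.1 * (Φ p.1).1 + x.2 * (Φ p.1).2) + -(x.1 * (Φ p.2).1 + x.2 * (Φ p.2).2) := by ring
      rw [this, osc_add]
      simp only [hF, hW, map_mul, conj_osc]
      ring
    simp_rw [h1]
    rw [integral_const_mul, integral_gaussian_osc hε, enorm_mul, enorm_mul]
    congr 1
    · congr 1
      rw [← ofReal_norm, ← ofReal_norm, RCLike.norm_conj]
    · rw [← ofReal_norm, Complex.norm_real, Real.norm_of_nonneg (by positivity),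
        ENNReal.ofReal_mul (by positivity)]
      simp only [hG, Prod.fst_sub, Prod.snd_sub]
      congr 3
      ring
  have hham := hh.1.enorm
  have hGneg : ∀ y, G (-y) = G y := by intro y; simp [hG]
  have hinner : ∀ y : ℝ × ℝ, ∫⁻ η, G (y - Φ η) ∂μ ≤ M * ENNReal.ofReal ((2 * π) ^ 2) := by
    intro y
    refine (hM (fun z => G (y - z)) (by fun_prop)).trans_eq ?_
    rw [lintegral_sub_left_eq_self G y, hGint]
  have hterm : ∫⁻ p : X × X, ‖h p.1‖ₑ ^ 2 * G (Φ p.1 - Φ p.2) ∂(μ.prod μ) ≤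
      ENNReal.ofReal ((2 * π) ^ 2) * M * ∫⁻ ξ, ‖h ξ‖ₑ ^ 2 ∂μ := by
    rw [lintegral_prod _ (by
      refine AEMeasurable.mul ((hham.comp_fst).pow_const 2) ?_
      exact Measurable.aemeasurable (by fun_prop))]
    calc _ = ∫⁻ ξ, ‖h ξ‖ₑ ^ 2 * ∫⁻ η, G (Φ ξ - Φ η) ∂μ ∂μ := by
          refine lintegral_congr fun ξ => ?_
          have hm : Measurable fun η => G (Φ ξ - Φ η) := by fun_prop
          exact lintegral_const_mul (‖h ξ‖ₑ ^ 2) hm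
      _ ≤ ∫⁻ ξ, (M * ENNReal.ofReal ((2 * π) ^ 2)) * ‖h ξ‖ₑ ^ 2 ∂μ := by
          refine lintegral_mono fun ξ => ?_
          rw [mul_comm]
          gcongr
          exact hinner _
      _ = _ := by
          rw [lintegral_const_mul'' _ (hham.pow_const 2), mul_comm M]
  have hswap : ∫⁻ p : X × X, ‖h p.2‖ₑ ^ 2 * G (Φ p.1 - Φ p.2) ∂(μ.prod μ) =
      ∫⁻ p : X × X, ‖h p.1‖ₑ ^ 2 * G (Φ p.1 - Φ p.2) ∂(μ.prod μ) := by
    rw [← lintegral_prod_swap]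
    refine lintegral_congr fun p => ?_
    simp only [Prod.fst_swap, Prod.snd_swap]
    rw [← hGneg, neg_sub]
  rw [hstep1]
  calc _ ≤ ∫⁻ p, ‖∫ x, F x p‖ₑ ∂(μ.prod μ) := enorm_integral_le_lintegral_enorm _
    _ = ∫⁻ p, ‖h p.1‖ₑ * ‖h p.2‖ₑ * G (Φ p.1 - Φ p.2) ∂(μ.prod μ) := by simp_rw [hFint]
    _ ≤ ∫⁻ p, (2⁻¹ * (‖h p.1‖ₑ ^ 2 * G (Φ p.1 - Φ p.2)) +
          2⁻¹ * (‖h p.2‖ₑ ^ 2 * G (Φ p.1 - Φ p.2))) ∂(μ.prod μ) := by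
        refine lintegral_mono fun p => ?_
        have h2 : ‖h p.1‖ₑ * ‖h p.2‖ₑ ≤ 2⁻¹ * (‖h p.1‖ₑ ^ 2 + ‖h p.2‖ₑ ^ 2) := by
          rw [← ofReal_norm, ← ofReal_norm, ← ENNReal.ofReal_mul (norm_nonneg _),
            ← ENNReal.ofReal_pow (norm_nonneg _), ← ENNReal.ofReal_pow (norm_nonneg _),
            ← ENNReal.ofReal_add (by positivity) (by positivity),
            show (2⁻¹ : ℝ≥0∞) = ENNReal.ofReal 2⁻¹ by
              rw [ENNReal.ofReal_inv_of_pos (by norm_num)]; simp,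
            ← ENNReal.ofReal_mul (by norm_num)]
          refine ENNReal.ofReal_le_ofReal ?_
          nlinarith [sq_nonneg (‖h p.1‖ - ‖h p.2‖)]
        calc _ ≤ 2⁻¹ * (‖h p.1‖ₑ ^ 2 + ‖h p.2‖ₑ ^ 2) * G (Φ p.1 - Φ p.2) := by gcongr
          _ = _ := by ring
    _ = ∫⁻ p : X × X, ‖h p.1‖ₑ ^ 2 * G (Φ p.1 - Φ p.2) ∂(μ.prod μ) := by
        rw [lintegral_add_left', lintegral_const_mul', lintegral_const_mul', hswap, ← add_mul,
          ENNReal.inv_two_add_inv_two, one_mul]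
        · simp
        · simp
        · refine AEMeasurable.const_mul (AEMeasurable.mul ((hham.comp_fst).pow_const 2) ?_) _
          exact Measurable.aemeasurable (by fun_prop)
    _ ≤ _ := hterm

/-- Plancherel-type inequality for an oscillatory integral with phase `x · Φ(ξ)`, where the
push-forward of `μ` under `Φ` is at most `M` times Lebesgue measure. -/
lemma lintegral_oscillatory_sq_le {X : Type*} [MeasurableSpace X] (μ : Measure X)
    [SFinite μ] {Φ : X → ℝ × ℝ} (hΦ : Measurable Φ) {h : X → ℂ} (hh : Integrable h μ)
    {M : ℝ≥0∞} (hM : ∀ f : ℝ × ℝ → ℝ≥0∞, Measurable f → ∫⁻ ξ, f (Φ ξ) ∂μ ≤ M * ∫⁻ x, f x) :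
    ∫⁻ x : ℝ × ℝ, ‖∫ ξ, osc (x.1 * (Φ ξ).1 + x.2 * (Φ ξ).2) * h ξ ∂μ‖ₑ ^ 2 ≤
      ENNReal.ofReal ((2 * π) ^ 2) * M * ∫⁻ ξ, ‖h ξ‖ₑ ^ 2 ∂μ := by
  set I : ℝ × ℝ → ℂ := fun x => ∫ ξ, osc (x.1 * (Φ ξ).1 + x.2 * (Φ ξ).2) * h ξ ∂μ with hI
  have hIm : AEMeasurable I := by
    have : AEStronglyMeasurable (fun z : (ℝ × ℝ) × X =>
        osc (z.1.1 * (Φ z.2).1 + z.1.2 * (Φ z.2).2) * h z.2) (volume.prod μ) := by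
      refine AEStronglyMeasurable.mul (Measurable.aestronglyMeasurable (by fun_prop)) ?_
      exact hh.1.comp_snd
    exact this.integral_prod_right'.aemeasurable
  set W : ℕ → ℝ × ℝ → ℝ≥0∞ := fun n x =>
    ENNReal.ofReal (Real.exp (-(1 / ((n : ℝ) + 1)) * (x.1 ^ 2 + x.2 ^ 2))) with hW
  have hlim : ∀ x, Filter.Tendsto (fun n => W n x * ‖I x‖ₑ ^ 2) Filter.atTop
      (nhds (‖I x‖ₑ ^ 2)) := by
    intro x
    have h1 : Filter.Tendsto (fun n => W n x) Filter.atTop (nhds 1) := by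
      have : Filter.Tendsto (fun n : ℕ => Real.exp (-(1 / ((n : ℝ) + 1)) * (x.1 ^ 2 + x.2 ^ 2)))
          Filter.atTop (nhds (Real.exp (-0 * (x.1 ^ 2 + x.2 ^ 2)))) :=
        (Real.continuous_exp.tendsto _).comp
          ((tendsto_one_div_add_atTop_nhds_zero_nat.neg).mul_const _)
      have h2 := ENNReal.tendsto_ofReal this
      rwa [neg_zero, zero_mul, Real.exp_zero, ENNReal.ofReal_one] at h2
    simpa using ENNReal.Tendsto.mul_const h1 (Or.inl one_ne_zero)
  calc _ = ∫⁻ x, Filter.liminf (fun n => W n x * ‖I x‖ₑ ^ 2) Filter.atTop :=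
        lintegral_congr fun x => ((hlim x).liminf_eq).symm
    _ ≤ Filter.liminf (fun n => ∫⁻ x, W n x * ‖I x‖ₑ ^ 2) Filter.atTop := by
        refine lintegral_liminf_le' fun n => ?_
        refine AEMeasurable.mul (Measurable.aemeasurable ?_) (hIm.enorm.pow_const 2)
        simp only [hW]; fun_prop
    _ ≤ _ := by
        refine Filter.liminf_le_of_le ?_ ?_
        · exact ⟨0, by simp⟩
        intro b hb
        obtain ⟨n, hn⟩ := hb.exists
        exact hn.trans (lintegral_gaussian_oscillatory_sq_le μ hΦ hh hM (by positivity))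

/-- One-dimensional substitution with derivative bounded below. -/
lemma lintegral_comp_le_of_deriv_ge {s : Set ℝ} (hs : MeasurableSet s) {ψ ψ' : ℝ → ℝ}
    (hψ : ∀ x ∈ s, HasDerivAt ψ (ψ' x) x) (hinj : InjOn ψ s) {M : ℝ} (hM : 0 < M)
    (hd : ∀ x ∈ s, M⁻¹ ≤ |ψ' x|) (f : ℝ → ℝ≥0∞) :
    ∫⁻ x in s, f (ψ x) ≤ ENNReal.ofReal M * ∫⁻ y, f y := by
  calc ∫⁻ x in s, f (ψ x) ≤ ∫⁻ x in s, ENNReal.ofReal M * (ENNReal.ofReal |ψ' x| * f (ψ x)) := by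
        refine setLIntegral_mono' hs fun x hx => ?_
        rw [← mul_assoc, ← ENNReal.ofReal_mul hM.le]
        have : 1 ≤ M * |ψ' x| := by
          have := mul_le_mul_of_nonneg_left (hd x hx) hM.le
          rwa [mul_inv_cancel₀ hM.ne'] at this
        calc f (ψ x) = ENNReal.ofReal 1 * f (ψ x) := by simp
          _ ≤ _ := by gcongr
    _ = ENNReal.ofReal M * ∫⁻ x in s, ENNReal.ofReal |ψ' x| * f (ψ x) :=
        lintegral_const_mul' _ _ ENNReal.ofReal_ne_top
    _ = ENNReal.ofReal M * ∫⁻ y in ψ '' s, f y := by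
        rw [lintegral_image_eq_lintegral_abs_deriv_mul hs (fun x hx => (hψ x hx).hasDerivWithinAt)
          hinj]
    _ ≤ _ := by gcongr; exact Measure.restrict_le_self

lemma lintegral_mul_rpow_le {X : Type*} [MeasurableSpace X] {μ : Measure X} {k f : X → ℝ≥0∞}
    (hk : Measurable k) (hf : Measurable f) {p σ : ℝ} (hσ0 : 0 ≤ σ)
    (hσ1 : σ ≤ 1) {N₁ N₂ : ℝ≥0∞} (hN₁ : ∫⁻ x, k x ∂μ ≤ N₁) (hN₂ : ∀ x, k x ≤ N₂) :
    ∫⁻ x, k x * f x ^ (p * σ) ∂μ ≤ N₁ ^ (1 - σ) * N₂ ^ σ * (∫⁻ x, f x ^ p ∂μ) ^ σ := by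
  have h1 : ∀ x, k x * f x ^ (p * σ) = k x ^ (1 - σ) * (k x * f x ^ p) ^ σ := by
    intro x
    rw [ENNReal.mul_rpow_of_nonneg _ _ hσ0, ← ENNReal.rpow_mul, ← mul_assoc,
      ← ENNReal.rpow_add_of_nonneg _ _ (by linarith) hσ0]
    simp
  simp_rw [h1]
  calc _ ≤ (∫⁻ x, k x ∂μ) ^ (1 - σ) * (∫⁻ x, k x * f x ^ p ∂μ) ^ σ :=
        ENNReal.lintegral_mul_norm_pow_le hk.aemeasurable (by fun_prop) (by linarith) hσ0 (by ring)
    _ ≤ N₁ ^ (1 - σ) * (N₂ * ∫⁻ x, f x ^ p ∂μ) ^ σ := by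
        refine mul_le_mul' (ENNReal.rpow_le_rpow hN₁ (by linarith)) (ENNReal.rpow_le_rpow ?_ hσ0)
        rw [← lintegral_const_mul _ (by fun_prop)]
        exact lintegral_mono fun x => mul_le_mul_left (hN₂ x) _
    _ = _ := by rw [ENNReal.mul_rpow_of_nonneg _ _ hσ0, mul_assoc]

lemma lintegral_Ioc_rpow {q R : ℝ} (hq : 2 < q) (hR : 0 ≤ R) :
    ∫⁻ t in Ioc 0 R, ENNReal.ofReal (t ^ (q - 3)) = ENNReal.ofReal (R ^ (q - 2) / (q - 2)) := by
  have hi : IntervalIntegrable (fun t : ℝ => t ^ (q - 3)) volume 0 R :=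
    intervalIntegral.intervalIntegrable_rpow' (by linarith)
  rw [← ofReal_integral_eq_lintegral_ofReal
    ((intervalIntegrable_iff_integrableOn_Ioc_of_le hR).1 hi)
    ((ae_restrict_mem measurableSet_Ioc).mono fun t ht => Real.rpow_nonneg ht.1.le _),
    ← intervalIntegral.integral_of_le hR, integral_rpow (Or.inl (by linarith))]
  congr 1
  have : q - 3 + 1 = q - 2 := by ring
  rw [this, Real.zero_rpow (by linarith), sub_zero]

/-- Real interpolation between an `L²` bound and the `L¹`, `L^∞` bounds of the kernel. -/
lemma lintegral_rpow_le_of_kernel {X Z : Type*} [MeasurableSpace X] [MeasurableSpace Z]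
    {μ : Measure X} [SFinite μ] {ν : Measure Z} {T : (X → ℂ) → Z → ℂ}
    {k : Z → X → ℝ≥0∞} {N₁ N₂ : ℝ} (hN₁ : 0 < N₁) (hN₂ : 0 < N₂) {A : ℝ≥0∞} {p q σ : ℝ}
    (hp : 1 ≤ p) (hq : 2 < q) (hσ0 : 0 ≤ σ) (hσ1 : σ ≤ 1) (hpq : p * σ * (q - 2) = q - p)
    (hadd : ∀ f g, Integrable f μ → Integrable g μ → T (f + g) = T f + T g)
    (hmeas : ∀ g, Integrable g μ → AEMeasurable (T g) ν)
    (hkm : ∀ z, Measurable (k z)) (hk₁ : ∀ z, ∫⁻ x, k z x ∂μ ≤ ENNReal.ofReal N₁)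
    (hk₂ : ∀ z x, k z x ≤ ENNReal.ofReal N₂)
    (hT : ∀ g, Integrable g μ → ∀ z, ‖T g z‖ₑ ≤ ∫⁻ x, k z x * ‖g x‖ₑ ∂μ)
    (hL2 : ∀ g, Integrable g μ → ∫⁻ z, ‖T g z‖ₑ ^ 2 ∂ν ≤ A * ∫⁻ x, ‖g x‖ₑ ^ 2 ∂μ)
    {g : X → ℂ} (hg : Integrable g μ) (hgm : Measurable g)
    (hgp : ∫⁻ x, ‖g x‖ₑ ^ p ∂μ ≠ ⊤) :
    ∫⁻ z, ‖T g z‖ₑ ^ q ∂ν ≤ ENNReal.ofReal (4 * q / (q - 2) * 2 ^ (q - 2)) * A *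
      ENNReal.ofReal (N₁ ^ (1 - σ) * N₂ ^ σ) ^ (q - 2) * (∫⁻ x, ‖g x‖ₑ ^ p ∂μ) ^ (q / p) := by
  have hq0 : 0 < q := by linarith
  have hp0 : 0 < p := by linarith
  set N := ∫⁻ x, ‖g x‖ₑ ^ p ∂μ with hN
  have hgen : Measurable fun x => ‖g x‖ₑ := hgm.enorm
  rcases eq_or_ne N 0 with hN0 | hN0
  · have h0 : (fun x => ‖g x‖ₑ) =ᵐ[μ] 0 := by
      have := (lintegral_eq_zero_iff (by fun_prop)).1 hN0
      filter_upwards [this] with x hx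
      simpa [hp0, hp0.le, ENNReal.rpow_eq_zero_iff, hp0.not_gt] using hx
    have hT0 : ∀ z, ‖T g z‖ₑ = 0 := by
      intro z
      refine le_antisymm ((hT g hg z).trans_eq ?_) bot_le
      rw [lintegral_eq_zero_iff (f := fun x => k z x * ‖g x‖ₑ) ((hkm z).mul hgen)]
      filter_upwards [h0] with x hx
      simp only [Pi.zero_apply] at hx
      simp [hx]
    simp [hT0, hq0]
  set B : ℝ := N₁ ^ (1 - σ) * N₂ ^ σ with hB
  have hB0 : 0 < B := by positivity
  set n : ℝ := N.toReal with hn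
  have hn0 : 0 < n := ENNReal.toReal_pos hN0 hgp
  have hNn : N = ENNReal.ofReal n := (ENNReal.ofReal_toReal hgp).symm
  set M : ℝ := 2 * B * n ^ σ with hM
  have hM0 : 0 < M := by positivity
  set β : ℝ := 1 - p * σ with hβ
  have hnorm : Measurable fun x => ‖g x‖ := hgm.norm
  set G : ℝ → Set X := fun τ => {y | τ ≤ M * ‖g y‖ ^ β} with hG
  have hGm : ∀ τ, MeasurableSet (G τ) := fun τ => by
    refine measurableSet_le measurable_const ?_
    fun_prop
  have hbad : ∀ τ, 0 < τ → ∀ z, ‖T ((G τ)ᶜ.indicator g) z‖ₑ ≤ ENNReal.ofReal (τ / 2) := by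
    intro τ hτ z
    refine (hT _ (hg.indicator (hGm τ).compl) z).trans ?_
    calc ∫⁻ x, k z x * ‖(G τ)ᶜ.indicator g x‖ₑ ∂μ
        ≤ ∫⁻ x, ENNReal.ofReal (τ / M) * (k z x * ‖g x‖ₑ ^ (p * σ)) ∂μ := by
          refine lintegral_mono fun x => ?_
          rw [mul_left_comm]
          refine mul_le_mul_right ?_ _
          by_cases hx : x ∈ G τ
          · simp [hx]
          rw [indicator_of_mem (by exact hx)]
          rcases eq_or_ne (g x) 0 with h0 | h0
          · simp [h0]
          have ha : 0 < ‖g x‖ := norm_pos_iff.2 h0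
          have hx' : M * ‖g x‖ ^ β < τ := not_le.1 hx
          rw [← ofReal_norm, ENNReal.ofReal_rpow_of_pos ha,
            ← ENNReal.ofReal_mul (by positivity)]
          refine ENNReal.ofReal_le_ofReal ?_
          have h1 : ‖g x‖ = ‖g x‖ ^ β * ‖g x‖ ^ (p * σ) := by
            rw [← Real.rpow_add ha, hβ]; simp
          calc ‖g x‖ = ‖g x‖ ^ β * ‖g x‖ ^ (p * σ) := h1
            _ ≤ τ / M * ‖g x‖ ^ (p * σ) := by
              gcongr
              rw [le_div_iff₀ hM0, mul_comm]
              exact hx'.le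
      _ = ENNReal.ofReal (τ / M) * ∫⁻ x, k z x * ‖g x‖ₑ ^ (p * σ) ∂μ :=
          lintegral_const_mul _ (by have := hkm z; fun_prop)
      _ ≤ ENNReal.ofReal (τ / M) * (ENNReal.ofReal N₁ ^ (1 - σ) * ENNReal.ofReal N₂ ^ σ *
            N ^ σ) := by
          gcongr
          exact lintegral_mul_rpow_le (hkm z) hgen hσ0 hσ1 (hk₁ z) (hk₂ z)
      _ = ENNReal.ofReal (τ / 2) := by
          rw [hNn, ENNReal.ofReal_rpow_of_pos hN₁, ENNReal.ofReal_rpow_of_pos hN₂,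
            ENNReal.ofReal_rpow_of_pos hn0, ← ENNReal.ofReal_mul (by positivity),
            ← ENNReal.ofReal_mul (by positivity), ← ENNReal.ofReal_mul (by positivity)]
          congr 1
          rw [← hB, hM]
          field_simp
  have hdist : ∀ τ, 0 < τ → ν {z | τ < ‖T g z‖} ≤
      ENNReal.ofReal (4 / τ ^ 2) * (A * ∫⁻ x in G τ, ‖g x‖ₑ ^ 2 ∂μ) := by
    intro τ hτ
    have hsum : T g = T ((G τ).indicator g) + T ((G τ)ᶜ.indicator g) := by
      rw [← hadd _ _ (hg.indicator (hGm τ)) (hg.indicator (hGm τ).compl),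
        indicator_self_add_compl]
    have hsub : {z | τ < ‖T g z‖} ⊆
        {z | ENNReal.ofReal (τ ^ 2 / 4) ≤ ‖T ((G τ).indicator g) z‖ₑ ^ 2} := by
      intro z hz
      have h1 : ‖T g z‖ ≤ ‖T ((G τ).indicator g) z‖ + τ / 2 := by
        rw [hsum]
        refine (norm_add_le _ _).trans ?_
        gcongr
        have := hbad τ hτ z
        rw [← ofReal_norm] at this
        exact (ENNReal.ofReal_le_ofReal_iff (by positivity)).1 this
      have h2 : τ / 2 ≤ ‖T ((G τ).indicator g) z‖ := by
        have : τ < ‖T g z‖ := hz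
        linarith
      simp only [mem_ofPred_eq]
      rw [← ofReal_norm, ← ENNReal.ofReal_pow (norm_nonneg _)]
      refine ENNReal.ofReal_le_ofReal ?_
      nlinarith
    have hch := mul_meas_ge_le_lintegral₀ (μ := ν)
      (((hmeas _ (hg.indicator (hGm τ))).enorm).pow_const 2) (ENNReal.ofReal (τ ^ 2 / 4))
    have hL := hL2 _ (hg.indicator (hGm τ))
    have hind : ∫⁻ x, ‖(G τ).indicator g x‖ₑ ^ 2 ∂μ = ∫⁻ x in G τ, ‖g x‖ₑ ^ 2 ∂μ := by
      rw [← lintegral_indicator (hGm τ)]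
      refine lintegral_congr fun x => ?_
      by_cases hx : x ∈ G τ <;> simp [hx]
    rw [hind] at hL
    calc ν {z | τ < ‖T g z‖} ≤ _ := measure_mono hsub
      _ = ENNReal.ofReal (4 / τ ^ 2) * (ENNReal.ofReal (τ ^ 2 / 4) * _) := by
          rw [← mul_assoc, ← ENNReal.ofReal_mul (by positivity)]
          have : 4 / τ ^ 2 * (τ ^ 2 / 4) = 1 := by field_simp
          rw [this, ENNReal.ofReal_one, one_mul]
      _ ≤ _ := mul_le_mul_right (hch.trans hL) _
  have hlc : ∫⁻ z, ‖T g z‖ₑ ^ q ∂ν = ENNReal.ofReal q *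
      ∫⁻ t in Ioi 0, ν {z | t < ‖T g z‖} * ENNReal.ofReal (t ^ (q - 1)) := by
    rw [← lintegral_rpow_eq_lintegral_meas_lt_mul ν (.of_forall fun z => norm_nonneg _)
      (hmeas g hg).norm hq0]
    refine lintegral_congr fun z => ?_
    rw [← ofReal_norm, ENNReal.ofReal_rpow_of_nonneg (norm_nonneg _) hq0.le]
  rw [hlc]
  have hswap : ∫⁻ t in Ioi (0 : ℝ), (∫⁻ x in G t, ‖g x‖ₑ ^ 2 ∂μ) * ENNReal.ofReal (t ^ (q - 3)) ≤
      ENNReal.ofReal (M ^ (q - 2) / (q - 2)) * N := by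
    have e1 : ∀ t : ℝ, (∫⁻ x in G t, ‖g x‖ₑ ^ 2 ∂μ) * ENNReal.ofReal (t ^ (q - 3)) =
        ∫⁻ x, {z : ℝ × X | z.1 ≤ M * ‖g z.2‖ ^ β}.indicator
          (fun z => ‖g z.2‖ₑ ^ 2 * ENNReal.ofReal (z.1 ^ (q - 3))) (t, x) ∂μ := by
      intro t
      rw [← lintegral_indicator (hGm t), ← lintegral_mul_const _
        ((hgen.pow_const 2).indicator (hGm t))]
      refine lintegral_congr fun x => ?_
      by_cases hx : t ≤ M * ‖g x‖ ^ β
      · simp [indicator, hG, hx]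
      · simp [indicator, hG, hx]
    simp_rw [e1]
    rw [lintegral_lintegral_swap]
    · rw [hN, ← lintegral_const_mul _ (by fun_prop)]
      refine lintegral_mono fun x => ?_
      have e2 : ∀ t : ℝ, {z : ℝ × X | z.1 ≤ M * ‖g z.2‖ ^ β}.indicator
          (fun z => ‖g z.2‖ₑ ^ 2 * ENNReal.ofReal (z.1 ^ (q - 3))) (t, x) =
          (Iic (M * ‖g x‖ ^ β)).indicator
            (fun t => ‖g x‖ₑ ^ 2 * ENNReal.ofReal (t ^ (q - 3))) t := fun t => rfl
      simp_rw [e2]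
      rw [lintegral_indicator measurableSet_Iic, Measure.restrict_restrict measurableSet_Iic,
        Iic_inter_Ioi, lintegral_const_mul _ (by fun_prop), lintegral_Ioc_rpow hq (by positivity)]
      rcases eq_or_ne (g x) 0 with h0 | h0
      · simp [h0]
      have ha : 0 < ‖g x‖ := norm_pos_iff.2 h0
      rw [← ofReal_norm, ENNReal.ofReal_rpow_of_pos ha, ← ENNReal.ofReal_pow ha.le,
        ← ENNReal.ofReal_mul (by positivity), ← ENNReal.ofReal_mul (by
          have : 0 < q - 2 := by linarith
          positivity)]
      refine ENNReal.ofReal_le_ofReal (le_of_eq ?_)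
      have e3 : p = 2 + β * (q - 2) := by rw [hβ]; linarith
      rw [Real.mul_rpow hM0.le (by positivity), ← Real.rpow_mul ha.le]
      conv_rhs => rw [e3, Real.rpow_add ha, Real.rpow_two]
      ring
    · refine Measurable.aemeasurable ?_
      refine Measurable.indicator (by fun_prop) ?_
      exact measurableSet_le measurable_fst (by fun_prop)
  calc _ ≤ ENNReal.ofReal q * ∫⁻ t in Ioi (0 : ℝ), 4 * A *
        ((∫⁻ x in G t, ‖g x‖ₑ ^ 2 ∂μ) * ENNReal.ofReal (t ^ (q - 3))) := by
        gcongr ENNReal.ofReal q * ?_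
        refine setLIntegral_mono' measurableSet_Ioi fun t ht => ?_
        have ht' : 0 < t := ht
        calc _ ≤ ENNReal.ofReal (4 / t ^ 2) * (A * ∫⁻ x in G t, ‖g x‖ₑ ^ 2 ∂μ) *
              ENNReal.ofReal (t ^ (q - 1)) := by gcongr; exact hdist t ht'
          _ = (ENNReal.ofReal (4 / t ^ 2) * ENNReal.ofReal (t ^ (q - 1))) *
              (A * ∫⁻ x in G t, ‖g x‖ₑ ^ 2 ∂μ) := by ring
          _ = (4 * ENNReal.ofReal (t ^ (q - 3))) * (A * ∫⁻ x in G t, ‖g x‖ₑ ^ 2 ∂μ) := by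
              congr 1
              rw [show (4 : ℝ≥0∞) = ENNReal.ofReal 4 by simp,
                ← ENNReal.ofReal_mul (by positivity), ← ENNReal.ofReal_mul (by positivity)]
              congr 1
              have : q - 1 = (q - 3) + 2 := by ring
              rw [this, Real.rpow_add ht', Real.rpow_two]
              field_simp
          _ = _ := by ring
    _ ≤ ENNReal.ofReal q * (4 * A * (ENNReal.ofReal (M ^ (q - 2) / (q - 2)) * N)) := by
        gcongr ENNReal.ofReal q * ?_
        have hmm : Measurable fun t : ℝ =>
            (∫⁻ x in G t, ‖g x‖ₑ ^ 2 ∂μ) * ENNReal.ofReal (t ^ (q - 3)) := by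
          refine Measurable.mul ?_ (by fun_prop)
          refine Antitone.measurable fun s t hst => lintegral_mono_set fun x hx => ?_
          exact hst.trans hx
        rw [lintegral_const_mul _ hmm]
        gcongr
    _ = _ := by
        have hq2 : 0 < q - 2 := by linarith
        rw [hNn, ENNReal.ofReal_rpow_of_pos hB0, ENNReal.ofReal_rpow_of_pos hn0,
          show (4 : ℝ≥0∞) = ENNReal.ofReal 4 by simp]
        have e4 : q / p = 1 + σ * (q - 2) := by
          field_simp
          linarith
        have e5 : M ^ (q - 2) * n = 2 ^ (q - 2) * B ^ (q - 2) * n ^ (q / p) := by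
          rw [e4, Real.rpow_add hn0, Real.rpow_mul hn0.le, hM, Real.mul_rpow (by positivity)
            (by positivity), Real.mul_rpow (by positivity) (by positivity), Real.rpow_one]
          ring
        calc _ = A * (ENNReal.ofReal q * ENNReal.ofReal 4 * ENNReal.ofReal (M ^ (q - 2) / (q - 2))
              * ENNReal.ofReal n) := by ring
          _ = A * (ENNReal.ofReal (4 * q / (q - 2) * 2 ^ (q - 2)) *
              ENNReal.ofReal (B ^ (q - 2)) * ENNReal.ofReal (n ^ (q / p))) := by
            rw [← ENNReal.ofReal_mul (by positivity), ← ENNReal.ofReal_mul (by positivity),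
              ← ENNReal.ofReal_mul (by positivity), ← ENNReal.ofReal_mul (by positivity),
              ← ENNReal.ofReal_mul (by positivity)]
            congr 2
            calc _ = 4 * q / (q - 2) * (M ^ (q - 2) * n) := by field_simp
              _ = _ := by rw [e5]; ring
          _ = _ := by ring

/-- Smooth radial profiles supported in `[1 - 10⁻³, 2 + 10⁻³]`. -/
def Rad (f : ℝ → ℂ) : Prop :=
  ContDiff ℝ (⊤ : ℕ∞) f ∧ ∀ u, u ∉ Icc (1 - 1/1000 : ℝ) (2 + 1/1000) → f u = 0

/-- The profile obtained when the kernel variable is multiplied by the phase. -/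
def radD (f : ℝ → ℂ) (u : ℝ) : ℂ := Complex.I * deriv f u

/-- The profile obtained when the phase is integrated. -/
def radI (f : ℝ → ℂ) (u : ℝ) : ℂ := f u * (Complex.I * (u : ℂ))⁻¹

lemma Rad.continuous {f : ℝ → ℂ} (hf : Rad f) : Continuous f := hf.1.continuous

lemma Rad.hasDerivAt {f : ℝ → ℂ} (hf : Rad f) (u : ℝ) : HasDerivAt f (deriv f u) u :=
  (hf.1.differentiable (by simp)).differentiableAt.hasDerivAt

lemma Rad.eventually_eq_zero {f : ℝ → ℂ} (hf : Rad f) {u : ℝ}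
    (hu : u ∉ Icc (1 - 1/1000 : ℝ) (2 + 1/1000)) : f =ᶠ[nhds u] 0 := by
  filter_upwards [isClosed_Icc.isOpen_compl.mem_nhds hu] with x hx using hf.2 x hx

lemma Rad.radD {f : ℝ → ℂ} (hf : Rad f) : Rad (radD f) := by
  refine ⟨contDiff_const.mul ?_, fun u hu => ?_⟩
  · exact ((contDiff_infty_iff_deriv (𝕜 := ℝ)).1 hf.1).2
  · have : deriv f u = 0 := by
      rw [(hf.eventually_eq_zero hu).deriv_eq]; simp
    simp [_root_.radD, this]

lemma Rad.radI {f : ℝ → ℂ} (hf : Rad f) : Rad (radI f) := by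
  refine ⟨contDiff_iff_contDiffAt.2 fun u => ?_, fun u hu => ?_⟩
  · rcases eq_or_ne u 0 with rfl | h0
    · have : _root_.radI f =ᶠ[nhds 0] fun _ => 0 := by
        filter_upwards [hf.eventually_eq_zero (u := 0) (by norm_num)] with x hx
        simp [_root_.radI, hx]
      exact contDiffAt_const.congr_of_eventuallyEq this
    · refine hf.1.contDiffAt.mul (ContDiffAt.inv ?_ (by simp [h0]))
      exact contDiffAt_const.mul Complex.ofRealCLM.contDiff.contDiffAt
  · simp [_root_.radI, hf.2 u hu]

/-- Families (indexed by `M ≥ 1`) of angular cutoffs adapted to the scale `M⁻¹`. -/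
inductive Adm : (ℝ → ℝ → ℝ) → Prop
  | base (Q : ℝ → ℝ) (hQ : ContDiff ℝ (⊤ : ℕ∞) Q)
      (h0 : ∀ x, x ∉ Icc (1 - 1/1000 : ℝ) (2 + 1/1000) → Q x = 0) :
      Adm fun M θ => Q (M ^ 2 * (1 - Real.cos θ))
  | add (χ₁ χ₂ : ℝ → ℝ → ℝ) : Adm χ₁ → Adm χ₂ → Adm fun M θ => χ₁ M θ + χ₂ M θ
  | mul_sin (χ : ℝ → ℝ → ℝ) : Adm χ → Adm fun M θ => M * Real.sin θ * χ M θ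
  | mul_cos (χ : ℝ → ℝ → ℝ) : Adm χ → Adm fun M θ => Real.cos θ * χ M θ
  | mul_eps (χ : ℝ → ℝ → ℝ) : Adm χ → Adm fun M θ => -(M ^ 2)⁻¹ * χ M θ

lemma Adm.exists_hasDerivAt {χ : ℝ → ℝ → ℝ} (h : Adm χ) :
    ∃ χ', Adm χ' ∧ ∀ M θ, 0 < M → HasDerivAt (χ M) (M * χ' M θ) θ := by
  induction h with
  | base Q hQ h0 =>
    refine ⟨_, Adm.mul_sin _ (Adm.base (deriv Q) ((contDiff_infty_iff_deriv (𝕜 := ℝ)).1 hQ).2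
      fun x hx => ?_), fun M θ hM => ?_⟩
    · have : Q =ᶠ[nhds x] fun _ => 0 := by
        filter_upwards [isClosed_Icc.isOpen_compl.mem_nhds hx] with y hy using h0 y hy
      rw [this.deriv_eq]; simp
    · have h1 : HasDerivAt (fun θ : ℝ => M ^ 2 * (1 - Real.cos θ)) (M ^ 2 * Real.sin θ) θ := by
        simpa using ((Real.hasDerivAt_cos θ).const_sub 1).const_mul (M ^ 2)
      have h2 := ((hQ.differentiable (by simp)).differentiableAt.hasDerivAt
        (x := M ^ 2 * (1 - Real.cos θ))).comp θ h1
      exact h2.congr_deriv (by ring)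
  | add χ₁ χ₂ _ _ ih₁ ih₂ =>
    obtain ⟨a, ha, ha'⟩ := ih₁
    obtain ⟨b, hb, hb'⟩ := ih₂
    refine ⟨_, Adm.add _ _ ha hb, fun M θ hM => ?_⟩
    exact ((ha' M θ hM).add (hb' M θ hM)).congr_deriv (by ring)
  | mul_sin χ h ih =>
    obtain ⟨a, ha, ha'⟩ := ih
    refine ⟨_, Adm.add _ _ (Adm.mul_cos _ h) (Adm.mul_sin _ ha), fun M θ hM => ?_⟩
    exact (((Real.hasDerivAt_sin θ).const_mul M).mul (ha' M θ hM)).congr_deriv (by ring)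
  | mul_cos χ h ih =>
    obtain ⟨a, ha, ha'⟩ := ih
    refine ⟨_, Adm.add _ _ (Adm.mul_eps _ (Adm.mul_sin _ h)) (Adm.mul_cos _ ha),
      fun M θ hM => ?_⟩
    exact ((Real.hasDerivAt_cos θ).mul (ha' M θ hM)).congr_deriv (by field_simp)
  | mul_eps χ h ih =>
    obtain ⟨a, ha, ha'⟩ := ih
    refine ⟨_, Adm.mul_eps _ ha, fun M θ hM => ?_⟩
    exact ((ha' M θ hM).const_mul (-(M ^ 2)⁻¹)).congr_deriv (by ring)

lemma Adm.eq_zero {χ : ℝ → ℝ → ℝ} (h : Adm χ) {M θ : ℝ}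
    (hθ : 2 + 1/1000 < M ^ 2 * (1 - Real.cos θ)) : χ M θ = 0 := by
  induction h with
  | base Q hQ h0 => exact h0 _ fun h => absurd h.2 (not_le.2 hθ)
  | add χ₁ χ₂ _ _ ih₁ ih₂ => simp [ih₁, ih₂]
  | mul_sin χ h ih => simp [ih]
  | mul_cos χ h ih => simp [ih]
  | mul_eps χ h ih => simp [ih]

lemma Adm.exists_bound {χ : ℝ → ℝ → ℝ} (h : Adm χ) :
    ∃ C, 0 ≤ C ∧ ∀ M θ, 1 ≤ M → |χ M θ| ≤ C := by
  induction h with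
  | base Q hQ h0 =>
    have hc : HasCompactSupport Q := HasCompactSupport.intro isCompact_Icc h0
    obtain ⟨C, hC⟩ := hc.exists_bound_of_continuous hQ.continuous
    exact ⟨C, (norm_nonneg _).trans (hC 0), fun M θ _ => hC _⟩
  | add χ₁ χ₂ _ _ ih₁ ih₂ =>
    obtain ⟨a, ha, ha'⟩ := ih₁
    obtain ⟨b, hb, hb'⟩ := ih₂
    exact ⟨a + b, by positivity, fun M θ hM =>
      (abs_add_le _ _).trans (add_le_add (ha' M θ hM) (hb' M θ hM))⟩
  | mul_sin χ h ih =>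
    obtain ⟨a, ha, ha'⟩ := ih
    refine ⟨3 * a, by positivity, fun M θ hM => ?_⟩
    by_cases hθ : 2 + 1/1000 < M ^ 2 * (1 - Real.cos θ)
    · change |M * Real.sin θ * χ M θ| ≤ 3 * a
      rw [h.eq_zero hθ]; simpa using ha
    · rw [abs_mul]
      change |M * Real.sin θ| * |χ M θ| ≤ 3 * a
      refine mul_le_mul ?_ (ha' M θ hM) (abs_nonneg _) (by norm_num)
      refine abs_le_of_sq_le_sq ?_ (by norm_num)
      have h1 : (M * Real.sin θ) ^ 2 = M ^ 2 * (1 - Real.cos θ) * (1 + Real.cos θ) := by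
        have := Real.sin_sq θ
        rw [mul_pow, this]; ring
      rw [h1]
      have h2 := Real.cos_le_one θ
      have h3 : 0 ≤ M ^ 2 * (1 - Real.cos θ) := mul_nonneg (sq_nonneg _) (by linarith)
      nlinarith [Real.neg_one_le_cos θ]
  | mul_cos χ h ih =>
    obtain ⟨a, ha, ha'⟩ := ih
    refine ⟨a, ha, fun M θ hM => ?_⟩
    rw [abs_mul]
    exact (mul_le_of_le_one_left (abs_nonneg _) (Real.abs_cos_le_one θ)).trans (ha' M θ hM)
  | mul_eps χ h ih =>
    obtain ⟨a, ha, ha'⟩ := ih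
    refine ⟨a, ha, fun M θ hM => ?_⟩
    rw [abs_mul, abs_neg, abs_of_nonneg (by positivity)]
    exact (mul_le_of_le_one_left (abs_nonneg _)
      (inv_le_one_of_one_le₀ (one_le_pow₀ hM))).trans (ha' M θ hM)

lemma Adm.periodic {χ : ℝ → ℝ → ℝ} (h : Adm χ) (M : ℝ) : χ M (-π) = χ M π := by
  induction h with
  | base Q hQ h0 => simp
  | add χ₁ χ₂ _ _ ih₁ ih₂ => simp [ih₁, ih₂]
  | mul_sin χ h ih => simp
  | mul_cos χ h ih => simp [ih]
  | mul_eps χ h ih => simp [ih]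

lemma Adm.continuous {χ : ℝ → ℝ → ℝ} (h : Adm χ) {M : ℝ} (hM : 0 < M) : Continuous (χ M) := by
  obtain ⟨χ', -, h'⟩ := h.exists_hasDerivAt
  exact continuous_iff_continuousAt.2 fun θ => (h' M θ hM).continuousAt

/-- Phase of the wave kernel in polar coordinates. -/
def phs (c : ℝ) (v : ℝ × ℝ) (θ : ℝ) : ℝ := c - (v.1 * Real.cos θ + v.2 * Real.sin θ)

/-- Angular derivative of `phs`. -/
def phsD (v : ℝ × ℝ) (θ : ℝ) : ℝ := v.1 * Real.sin θ - v.2 * Real.cos θ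

lemma hasDerivAt_phs (c : ℝ) (v : ℝ × ℝ) (θ : ℝ) : HasDerivAt (phs c v) (phsD v θ) θ := by
  have := (((Real.hasDerivAt_cos θ).const_mul v.1).add
    ((Real.hasDerivAt_sin θ).const_mul v.2)).const_sub c
  exact this.congr_deriv (by simp only [phsD]; ring)

lemma hasDerivAt_phsD (c : ℝ) (v : ℝ × ℝ) (θ : ℝ) : HasDerivAt (phsD v) (c - phs c v θ) θ := by
  have := ((Real.hasDerivAt_sin θ).const_mul v.1).sub ((Real.hasDerivAt_cos θ).const_mul v.2)
  exact this.congr_deriv (by simp only [phs]; ring)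

@[fun_prop]
lemma continuous_phs (c : ℝ) (v : ℝ × ℝ) : Continuous (phs c v) := by unfold phs; fun_prop

@[fun_prop]
lemma continuous_phsD (v : ℝ × ℝ) : Continuous (phsD v) := by unfold phsD; fun_prop

/-- The parameter measure `du dθ` on `[1/2, 3] × (-π, π]`. -/
def polMeas : Measure (ℝ × ℝ) :=
  (volume.restrict (Ioc (1/2 : ℝ) 3)).prod (volume.restrict (Ioc (-π) π))

instance : IsFiniteMeasure polMeas := by unfold polMeas; infer_instance

/-- The rescaled polar oscillatory integral. -/
def oscInt (f : ℝ → ℂ) (χ : ℝ → ℂ) (c lam : ℝ) (v : ℝ × ℝ) : ℂ :=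
  ∫ z, osc (lam * z.1 * phs c v z.2) * (f z.1 * χ z.2) ∂polMeas

lemma integrable_polMeas {F : ℝ × ℝ → ℂ} (hF : Continuous F) : Integrable F polMeas := by
  have : polMeas = volume.restrict (Ioc (1/2 : ℝ) 3 ×ˢ Ioc (-π) π) := by
    rw [polMeas, Measure.prod_restrict, Measure.volume_eq_prod]
  rw [this]
  exact (hF.continuousOn.integrableOn_compact (isCompact_Icc.prod isCompact_Icc)).mono_set
    (prod_mono Ioc_subset_Icc_self Ioc_subset_Icc_self)

@[fun_prop]
lemma continuous_osc_comp {X : Type*} [TopologicalSpace X] {g : X → ℝ} (hg : Continuous g) :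
    Continuous fun x => osc (g x) := continuous_osc.comp hg

lemma hasDerivAt_osc_comp {g : ℝ → ℝ} {g' x : ℝ} (hg : HasDerivAt g g' x) :
    HasDerivAt (fun y => osc (g y)) ((g' : ℂ) * (Complex.I * osc (g x))) x := by
  have h : HasDerivAt (fun y => Complex.I * ((g y : ℝ) : ℂ)) (Complex.I * (g' : ℂ)) x :=
    hg.ofReal_comp.const_mul Complex.I
  exact h.cexp.congr_deriv (by simp only [osc]; ring)

lemma integral_mul_osc_rad {f : ℝ → ℂ} (hf : Rad f) {lam : ℝ} (hl : lam ≠ 0) (s : ℝ) :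
    ∫ u in Ioc (1/2 : ℝ) 3, (s : ℂ) * (osc (lam * u * s) * f u) =
      (lam : ℂ)⁻¹ * ∫ u in Ioc (1/2 : ℝ) 3, osc (lam * u * s) * radD f u := by
  have hfc := hf.continuous
  have hd : ∀ u ∈ uIcc (1/2 : ℝ) 3, HasDerivAt (fun u : ℝ => osc (lam * u * s))
      (((lam * s : ℝ) : ℂ) * (Complex.I * osc (lam * u * s))) u := by
    intro u _
    have h1 : HasDerivAt (fun u : ℝ => lam * u * s) (lam * s) u := by
      simpa [mul_right_comm] using (hasDerivAt_id u).const_mul (lam * s)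
    exact hasDerivAt_osc_comp h1
  have hdf : Continuous (deriv f) := hf.1.continuous_deriv (by simp)
  have hibp := intervalIntegral.integral_deriv_mul_eq_sub (a := (1/2 : ℝ)) (b := 3)
    (u := fun u : ℝ => osc (lam * u * s)) (v := f) hd (fun u _ => hf.hasDerivAt u)
    (Continuous.intervalIntegrable (by fun_prop) _ _)
    (Continuous.intervalIntegrable hdf _ _)
  rw [hf.2 (1/2) (by norm_num), hf.2 3 (by norm_num), intervalIntegral.integral_add
    (Continuous.intervalIntegrable (by fun_prop) _ _)
    (Continuous.intervalIntegrable (by fun_prop) _ _)] at hibp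
  rw [intervalIntegral.integral_of_le (by norm_num),
    intervalIntegral.integral_of_le (by norm_num)] at hibp
  have e1 : ∫ u in Ioc (1/2 : ℝ) 3, osc (lam * u * s) * radD f u =
      Complex.I * ∫ u in Ioc (1/2 : ℝ) 3, osc (lam * u * s) * deriv f u := by
    rw [← integral_const_mul]
    exact integral_congr_ae (.of_forall fun u => by simp only [radD]; ring)
  have e2 : ∫ u in Ioc (1/2 : ℝ) 3,
      ((lam * s : ℝ) : ℂ) * (Complex.I * osc (lam * u * s)) * f u =
      (lam * Complex.I) * ∫ u in Ioc (1/2 : ℝ) 3, (s : ℂ) * (osc (lam * u * s) * f u) := by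
    rw [← integral_const_mul]
    exact integral_congr_ae (.of_forall fun u => by push_cast; ring)
  rw [e2] at hibp
  rw [e1]
  have hl' : (lam : ℂ) ≠ 0 := by exact_mod_cast hl
  generalize (∫ u in Ioc (1/2 : ℝ) 3, (s : ℂ) * (osc (lam * u * s) * f u)) = X at hibp ⊢
  generalize (∫ u in Ioc (1/2 : ℝ) 3, osc (lam * u * s) * deriv f u) = Y at hibp ⊢
  field_simp
  linear_combination (-Complex.I) * hibp + (lam * X) * Complex.I_sq

lemma oscInt_phs {f : ℝ → ℂ} (hf : Rad f) {χ : ℝ → ℂ} (hχ : Continuous χ) (c : ℝ) {lam : ℝ}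
    (hl : lam ≠ 0) (v : ℝ × ℝ) :
    oscInt f (fun θ => (phs c v θ : ℂ) * χ θ) c lam v =
      (lam : ℂ)⁻¹ * oscInt (radD f) χ c lam v := by
  have hfc := hf.continuous
  have hfd := hf.radD.continuous
  unfold oscInt polMeas
  have hc1 : Continuous fun z : ℝ × ℝ =>
      osc (lam * z.1 * phs c v z.2) * (f z.1 * ((phs c v z.2 : ℂ) * χ z.2)) := by fun_prop
  have hc2 : Continuous fun z : ℝ × ℝ =>
      osc (lam * z.1 * phs c v z.2) * (radD f z.1 * χ z.2) := by fun_prop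
  rw [integral_prod_symm _ (integrable_polMeas hc1), integral_prod_symm _ (integrable_polMeas hc2),
    ← integral_const_mul]
  refine integral_congr_ae (.of_forall fun θ => ?_)
  simp only
  calc _ = (∫ u in Ioc (1/2 : ℝ) 3, (phs c v θ : ℂ) * (osc (lam * u * phs c v θ) * f u)) * χ θ := by
        rw [← integral_mul_const]
        exact integral_congr_ae (.of_forall fun u => by ring)
    _ = (lam : ℂ)⁻¹ * ((∫ u in Ioc (1/2 : ℝ) 3, osc (lam * u * phs c v θ) * radD f u) * χ θ) := by
        rw [integral_mul_osc_rad hf hl]; ring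
    _ = _ := by
        rw [← integral_mul_const]
        congr 1
        exact integral_congr_ae (.of_forall fun u => by ring)

lemma oscInt_phsD {f : ℝ → ℂ} (hf : Rad f) {χ χ' : ℝ → ℂ} (hχ : ∀ θ, HasDerivAt χ (χ' θ) θ)
    (hχ' : Continuous χ') (hper : χ (-π) = χ π) (c : ℝ) {lam : ℝ} (hl : lam ≠ 0) (v : ℝ × ℝ) :
    oscInt f (fun θ => (phsD v θ : ℂ) * χ θ) c lam v =
      -(lam : ℂ)⁻¹ * oscInt (radI f) χ' c lam v := by
  have hfc := hf.continuous
  have hfd := hf.radI.continuous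
  have hχc : Continuous χ := continuous_iff_continuousAt.2 fun θ => (hχ θ).continuousAt
  have hl' : (lam : ℂ) ≠ 0 := by exact_mod_cast hl
  have key : ∀ u : ℝ, u ≠ 0 →
      ∫ θ in Ioc (-π) π, osc (lam * u * phs c v θ) * ((phsD v θ : ℂ) * χ θ) =
      -(lam : ℂ)⁻¹ * (Complex.I * (u : ℂ))⁻¹ *
        ∫ θ in Ioc (-π) π, osc (lam * u * phs c v θ) * χ' θ := by
    intro u hu
    have hd : ∀ θ ∈ uIcc (-π) π, HasDerivAt (fun θ : ℝ => osc (lam * u * phs c v θ))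
        (((lam * u * phsD v θ : ℝ) : ℂ) * (Complex.I * osc (lam * u * phs c v θ))) θ := by
      intro θ _
      exact hasDerivAt_osc_comp ((hasDerivAt_phs c v θ).const_mul (lam * u))
    have hibp := intervalIntegral.integral_deriv_mul_eq_sub (a := -π) (b := π)
      (u := fun θ : ℝ => osc (lam * u * phs c v θ)) (v := χ) hd (fun θ _ => hχ θ)
      (Continuous.intervalIntegrable (by fun_prop) _ _)
      (Continuous.intervalIntegrable hχ' _ _)
    rw [hper, intervalIntegral.integral_add
      (Continuous.intervalIntegrable (by fun_prop) _ _)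
      (Continuous.intervalIntegrable (by fun_prop) _ _)] at hibp
    have hle : -π ≤ π := by linarith [Real.pi_pos]
    rw [intervalIntegral.integral_of_le hle, intervalIntegral.integral_of_le hle] at hibp
    have e0 : phs c v (-π) = phs c v π := by simp [phs]
    have e2 : ∫ θ in Ioc (-π) π,
        ((lam * u * phsD v θ : ℝ) : ℂ) * (Complex.I * osc (lam * u * phs c v θ)) * χ θ =
        (lam * u * Complex.I) *
          ∫ θ in Ioc (-π) π, osc (lam * u * phs c v θ) * ((phsD v θ : ℂ) * χ θ) := by
      rw [← integral_const_mul]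
      exact integral_congr_ae (.of_forall fun u => by push_cast; ring)
    rw [e2, e0, sub_self] at hibp
    have hu' : (u : ℂ) ≠ 0 := by exact_mod_cast hu
    generalize (∫ θ in Ioc (-π) π, osc (lam * u * phs c v θ) * ((phsD v θ : ℂ) * χ θ)) = X
      at hibp ⊢
    generalize (∫ θ in Ioc (-π) π, osc (lam * u * phs c v θ) * χ' θ) = Y at hibp ⊢
    field_simp
    linear_combination hibp
  unfold oscInt polMeas
  have hc1 : Continuous fun z : ℝ × ℝ =>
      osc (lam * z.1 * phs c v z.2) * (f z.1 * ((phsD v z.2 : ℂ) * χ z.2)) := by fun_prop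
  have hc2 : Continuous fun z : ℝ × ℝ =>
      osc (lam * z.1 * phs c v z.2) * (radI f z.1 * χ' z.2) := by fun_prop
  rw [integral_prod _ (integrable_polMeas hc1), integral_prod _ (integrable_polMeas hc2),
    ← integral_const_mul]
  refine setIntegral_congr_fun measurableSet_Ioc fun u hu => ?_
  have hu0 : u ≠ 0 := by have := hu.1; intro h; rw [h] at this; norm_num at this
  simp only
  calc _ = f u * ∫ θ in Ioc (-π) π, osc (lam * u * phs c v θ) * ((phsD v θ : ℂ) * χ θ) := by
        rw [← integral_const_mul]
        exact integral_congr_ae (.of_forall fun u => by ring)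
    _ = -(lam : ℂ)⁻¹ * (radI f u * ∫ θ in Ioc (-π) π, osc (lam * u * phs c v θ) * χ' θ) := by
        rw [key u hu0, radI]; ring
    _ = _ := by
        rw [← integral_const_mul]
        congr 1
        exact integral_congr_ae (.of_forall fun u => by ring)

lemma oscInt_add {f : ℝ → ℂ} (hf : Continuous f) {χ₁ χ₂ : ℝ → ℂ} (h₁ : Continuous χ₁)
    (h₂ : Continuous χ₂) (c lam : ℝ) (v : ℝ × ℝ) :
    oscInt f (fun θ => χ₁ θ + χ₂ θ) c lam v = oscInt f χ₁ c lam v + oscInt f χ₂ c lam v := by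
  unfold oscInt
  rw [← integral_add (integrable_polMeas (by fun_prop)) (integrable_polMeas (by fun_prop))]
  exact integral_congr_ae (.of_forall fun z => by ring)

lemma oscInt_const_mul (f χ : ℝ → ℂ) (a : ℂ) (c lam : ℝ) (v : ℝ × ℝ) :
    oscInt f (fun θ => a * χ θ) c lam v = a * oscInt f χ c lam v := by
  unfold oscInt
  rw [← integral_const_mul]
  exact integral_congr_ae (.of_forall fun z => by ring)

/-- Multiplication of `oscInt` by `|v|² - c²`. -/
lemma oscInt_mul_normSq {f : ℝ → ℂ} (hf : Rad f) {χ χ' χ'' : ℝ → ℂ}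
    (hχ : ∀ θ, HasDerivAt χ (χ' θ) θ) (hχ' : ∀ θ, HasDerivAt χ' (χ'' θ) θ)
    (hχ'' : Continuous χ'') (hper : χ (-π) = χ π) (hper' : χ' (-π) = χ' π) (c : ℝ) {lam : ℝ}
    (hl : lam ≠ 0) (v : ℝ × ℝ) :
    ((v.1 ^ 2 + v.2 ^ 2 - c ^ 2 : ℝ) : ℂ) * oscInt f χ c lam v =
      (lam : ℂ)⁻¹ * ((lam : ℂ)⁻¹ * oscInt (radD (radD f)) χ c lam v -
        2 * c * oscInt (radD f) χ c lam v - c * oscInt (radI f) χ c lam v +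
        (lam : ℂ)⁻¹ * oscInt (radD (radI f)) χ c lam v +
        (lam : ℂ)⁻¹ * oscInt (radI (radI f)) χ'' c lam v) := by
  have hfc := hf.continuous
  have hIc := hf.radI.continuous
  have hχc : Continuous χ := continuous_iff_continuousAt.2 fun θ => (hχ θ).continuousAt
  have hχc' : Continuous χ' := continuous_iff_continuousAt.2 fun θ => (hχ' θ).continuousAt
  have e1 : ((v.1 ^ 2 + v.2 ^ 2 - c ^ 2 : ℝ) : ℂ) * oscInt f χ c lam v =
      oscInt f (fun θ => (phs c v θ : ℂ) * ((phs c v θ : ℂ) * χ θ)) c lam v +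
      (oscInt f (fun θ => (-2 * c : ℂ) * ((phs c v θ : ℂ) * χ θ)) c lam v +
      oscInt f (fun θ => (phsD v θ : ℂ) * ((phsD v θ : ℂ) * χ θ)) c lam v) := by
    rw [← oscInt_add hfc (by fun_prop) (by fun_prop), ← oscInt_add hfc (by fun_prop) (by fun_prop),
      ← oscInt_const_mul]
    congr 1
    funext θ
    have h : (v.1 ^ 2 + v.2 ^ 2 - c ^ 2 : ℝ) =
        phs c v θ * phs c v θ + (-2 * c * phs c v θ + phsD v θ * phsD v θ) := by
      have := Real.sin_sq_add_cos_sq θ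
      simp only [phs, phsD]
      linear_combination (-(v.1 ^ 2 + v.2 ^ 2)) * this
    rw [h]
    push_cast
    ring
  have hpp : ∀ θ, HasDerivAt (fun θ => (phsD v θ : ℂ) * χ θ)
      (((c : ℂ) * χ θ + (-1) * ((phs c v θ : ℂ) * χ θ)) + (phsD v θ : ℂ) * χ' θ) θ := by
    intro θ
    have h1 := (hasDerivAt_phsD c v θ).ofReal_comp
    have h2 := h1.mul (hχ θ)
    exact h2.congr_deriv (by push_cast; ring)
  have hDper : phsD v (-π) = phsD v π := by simp [phsD]
  rw [e1, oscInt_phs hf (by fun_prop) c hl, oscInt_const_mul, oscInt_phs hf hχc c hl,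
    oscInt_phs hf.radD hχc c hl,
    oscInt_phsD hf hpp (by fun_prop) (by simp only [hper, hDper]) c hl,
    oscInt_add hIc (by fun_prop) (by fun_prop), oscInt_add hIc (by fun_prop) (by fun_prop),
    oscInt_const_mul, oscInt_const_mul, oscInt_phs hf.radI hχc c hl,
    oscInt_phsD hf.radI hχ' hχ'' hper' c hl]
  ring

/-- Multiplication of `oscInt` by the second coordinate. -/
lemma oscInt_mul_snd {f : ℝ → ℂ} (hf : Rad f) {χ χ' : ℝ → ℂ} (hχ : Continuous χ)
    (hχ' : ∀ θ, HasDerivAt (fun θ => (Real.cos θ : ℂ) * χ θ) (χ' θ) θ)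
    (hχc' : Continuous χ') (hper : χ (-π) = χ π) (c : ℝ) {lam : ℝ}
    (hl : lam ≠ 0) (v : ℝ × ℝ) :
    (v.2 : ℂ) * oscInt f χ c lam v =
      c * oscInt f (fun θ => (Real.sin θ : ℂ) * χ θ) c lam v -
      (lam : ℂ)⁻¹ * oscInt (radD f) (fun θ => (Real.sin θ : ℂ) * χ θ) c lam v +
      (lam : ℂ)⁻¹ * oscInt (radI f) χ' c lam v := by
  have hfc := hf.continuous
  have e1 : (v.2 : ℂ) * oscInt f χ c lam v =
      oscInt f (fun θ => (c : ℂ) * ((Real.sin θ : ℂ) * χ θ)) c lam v +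
      (oscInt f (fun θ => (-1 : ℂ) * ((phs c v θ : ℂ) * ((Real.sin θ : ℂ) * χ θ))) c lam v +
      oscInt f (fun θ => (-1 : ℂ) * ((phsD v θ : ℂ) * ((Real.cos θ : ℂ) * χ θ))) c lam v) := by
    rw [← oscInt_add hfc (by fun_prop) (by fun_prop), ← oscInt_add hfc (by fun_prop) (by fun_prop),
      ← oscInt_const_mul]
    congr 1
    funext θ
    have h : v.2 = c * Real.sin θ + ((-1) * (phs c v θ * Real.sin θ) +
        (-1) * (phsD v θ * Real.cos θ)) := by
      have := Real.sin_sq_add_cos_sq θ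
      simp only [phs, phsD]
      linear_combination (-v.2) * this
    conv_lhs => rw [h]
    push_cast
    ring
  rw [e1, oscInt_const_mul, oscInt_const_mul, oscInt_const_mul,
    oscInt_phs hf (by fun_prop) c hl,
    oscInt_phsD hf hχ' hχc' (by simp [hper]) c hl]
  ring

lemma lintegral_inv_one_add_sq_le {a : ℝ} (ha : 0 < a) (b : ℝ) :
    ∫⁻ x, ENNReal.ofReal ((1 + (a * (x - b)) ^ 2)⁻¹) ≤ ENNReal.ofReal (π / a) := by
  have h := lintegral_comp_le_of_deriv_ge (s := univ) MeasurableSet.univ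
    (ψ := fun x => a * (x - b)) (ψ' := fun _ => a)
    (fun x _ => by simpa using ((hasDerivAt_id x).sub_const b).const_mul a)
    (fun x _ y _ hxy => by simpa [ha.ne'] using hxy) (M := a⁻¹) (by positivity)
    (fun x _ => by rw [inv_inv]; exact le_abs_self a)
    (fun y => ENNReal.ofReal ((1 + y ^ 2)⁻¹))
  rw [Measure.restrict_univ] at h
  refine h.trans ?_
  rw [← ofReal_integral_eq_lintegral_ofReal integrable_inv_one_add_sq
    (.of_forall fun x => by positivity), integral_univ_inv_one_add_sq,
    ← ENNReal.ofReal_mul (by positivity)]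
  exact ENNReal.ofReal_le_ofReal (by rw [mul_comm, div_eq_mul_inv])

lemma two_mul_sq_le_one_sub_cos {x : ℝ} (hx : |x| ≤ π) :
    2 / π ^ 2 * x ^ 2 ≤ 1 - Real.cos x := by
  have h1 : |x / 2| ≤ π / 2 := by rw [abs_div, abs_two]; linarith
  have h2 := Real.mul_abs_le_abs_sin h1
  have h3 : (2 / π * |x / 2|) ^ 2 ≤ |Real.sin (x / 2)| ^ 2 :=
    pow_le_pow_left₀ (by positivity) h2 2
  rw [sq_abs, mul_pow, sq_abs] at h3
  have h4 := Real.cos_sq' (x / 2)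
  have h5 := Real.cos_sq (x / 2)
  rw [mul_div_cancel₀ x (two_ne_zero)] at h5
  have : 1 - Real.cos x = 2 * Real.sin (x / 2) ^ 2 := by linarith
  rw [this]
  calc 2 / π ^ 2 * x ^ 2 = 2 * ((2 / π) ^ 2 * (x / 2) ^ 2) := by ring
    _ ≤ _ := by linarith

lemma lintegral_comp_smul_prod {a : ℝ} (ha : a ≠ 0) {F : ℝ × ℝ → ℝ≥0∞} (hF : Measurable F) :
    ∫⁻ x : ℝ × ℝ, F (a • x) = ENNReal.ofReal ((a ^ 2)⁻¹) * ∫⁻ x, F x := by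
  have h := Measure.map_addHaar_smul (volume : Measure (ℝ × ℝ)) ha
  have hfr : Module.finrank ℝ (ℝ × ℝ) = 2 := by simp
  rw [hfr, abs_of_nonneg (by positivity)] at h
  rw [← lintegral_map hF (measurable_const_smul a), h, lintegral_smul_measure, smul_eq_mul]

lemma lintegral_polMeas_le {lam : ℝ} (hl : 0 < lam) {F : ℝ × ℝ → ℝ≥0∞} (hF : Measurable F) :
    ∫⁻ z, F (-(lam * z.1 * Real.cos z.2), -(lam * z.1 * Real.sin z.2)) ∂polMeas ≤
      ENNReal.ofReal (2 * (lam ^ 2)⁻¹) * ∫⁻ x, F x := by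
  have hpol : polMeas = volume.restrict (Ioc (1/2 : ℝ) 3 ×ˢ Ioo (-π) π) := by
    rw [polMeas, Measure.restrict_congr_set (Ioo_ae_eq_Ioc (a := -π) (b := π)).symm,
      Measure.prod_restrict, Measure.volume_eq_prod]
  have hsub : Ioc (1/2 : ℝ) 3 ×ˢ Ioo (-π) π ⊆ polarCoord.target := by
    rw [polarCoord_target]
    exact prod_mono (fun x hx => lt_trans (by norm_num) hx.1) subset_rfl
  have h := lintegral_comp_polarCoord_symm (fun x => F ((-lam) • x))
  rw [lintegral_comp_smul_prod (by simpa using hl.ne') hF, neg_sq] at h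
  rw [ENNReal.ofReal_mul zero_le_two, mul_assoc, ← h, hpol,
    ← lintegral_const_mul' _ _ ENNReal.ofReal_ne_top]
  refine (setLIntegral_mono' (measurableSet_Ioc.prod measurableSet_Ioo) fun z hz => ?_).trans
    (lintegral_mono_set hsub)
  rw [smul_eq_mul, ← mul_assoc, ← ENNReal.ofReal_mul zero_le_two]
  have e : (-lam) • (polarCoord.symm z) =
      (-(lam * z.1 * Real.cos z.2), -(lam * z.1 * Real.sin z.2)) := by
    simp [polarCoord_symm_apply, mul_assoc]
  rw [e]
  refine le_mul_of_one_le_left zero_le ?_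
  rw [← ENNReal.ofReal_one]
  exact ENNReal.ofReal_le_ofReal (by linarith [hz.1.1])

lemma oscInt_eq (f χ : ℝ → ℂ) (c lam : ℝ) (v : ℝ × ℝ) :
    oscInt f χ c lam v =
      ∫ z, osc (v.1 * -(lam * z.1 * Real.cos z.2) + v.2 * -(lam * z.1 * Real.sin z.2)) *
        (osc (lam * z.1 * c) * (f z.1 * χ z.2)) ∂polMeas := by
  unfold oscInt
  refine integral_congr_ae (.of_forall fun z => ?_)
  simp only
  rw [← mul_assoc (osc _) (osc _), ← osc_add]
  congr 2
  simp only [phs]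
  ring

lemma lintegral_oscInt_sq_le {f χ : ℝ → ℂ} (hf : Continuous f) (hχ : Continuous χ) (c : ℝ)
    {lam : ℝ} (hl : 0 < lam) :
    ∫⁻ v, ‖oscInt f χ c lam v‖ₑ ^ 2 ≤
      ENNReal.ofReal ((2 * π) ^ 2) * ENNReal.ofReal (2 * (lam ^ 2)⁻¹) *
        ((∫⁻ u in Ioc (1/2 : ℝ) 3, ‖f u‖ₑ ^ 2) * ∫⁻ θ in Ioc (-π) π, ‖χ θ‖ₑ ^ 2) := by
  simp_rw [oscInt_eq]
  refine (lintegral_oscillatory_sq_le polMeas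
    (Φ := fun z => (-(lam * z.1 * Real.cos z.2), -(lam * z.1 * Real.sin z.2))) (by fun_prop)
    (integrable_polMeas (by fun_prop)) fun F hF => lintegral_polMeas_le hl hF).trans_eq ?_
  congr 1
  rw [← lintegral_prod_mul (by fun_prop) (by fun_prop)]
  refine lintegral_congr fun z => ?_
  rw [enorm_mul, enorm_osc, one_mul, enorm_mul, mul_pow]

@[fun_prop]
lemma measurable_oscInt {f χ : ℝ → ℂ} (hf : Continuous f) (hχ : Continuous χ) (c lam : ℝ) :
    Measurable (oscInt f χ c lam) := by
  have : Continuous fun z : (ℝ × ℝ) × (ℝ × ℝ) =>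
      osc (lam * z.2.1 * phs c z.1 z.2.2) * (f z.2.1 * χ z.2.2) := by
    unfold phs; fun_prop
  exact (this.stronglyMeasurable.integral_prod_right' (ν := polMeas)).measurable

lemma Adm.lintegral_sq_le {χ : ℝ → ℝ → ℝ} (h : Adm χ) :
    ∃ C, 0 ≤ C ∧ ∀ M, 1 ≤ M → ∫⁻ θ in Ioc (-π) π, ‖(χ M θ : ℂ)‖ₑ ^ 2 ≤ ENNReal.ofReal (C / M) := by
  obtain ⟨a, ha, ha'⟩ := h.exists_bound
  refine ⟨8 * a ^ 2, by positivity, fun M hM => ?_⟩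
  have hM0 : 0 < M := by linarith
  calc ∫⁻ θ in Ioc (-π) π, ‖(χ M θ : ℂ)‖ₑ ^ 2
      ≤ ∫⁻ θ in Ioc (-π) π, (Icc (-(4 / M)) (4 / M)).indicator (fun _ => ENNReal.ofReal (a ^ 2)) θ := by
        refine setLIntegral_mono' measurableSet_Ioc fun θ hθ => ?_
        by_cases hm : θ ∈ Icc (-(4 / M)) (4 / M)
        · rw [indicator_of_mem hm, ← ofReal_norm, ← ENNReal.ofReal_pow (norm_nonneg _)]
          refine ENNReal.ofReal_le_ofReal (pow_le_pow_left₀ (norm_nonneg _) ?_ 2)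
          rw [Complex.norm_real]
          exact ha' M θ hM
        · have hz : χ M θ = 0 := by
            apply h.eq_zero
            have h1 := two_mul_sq_le_one_sub_cos (x := θ) (abs_le.2 ⟨hθ.1.le, hθ.2⟩)
            have h2 : 4 / M < |θ| := by
              rw [mem_Icc, ← abs_le, not_le] at hm; exact hm
            have h3 : 16 < M ^ 2 * θ ^ 2 := by
              rw [div_lt_iff₀ hM0] at h2
              have := pow_lt_pow_left₀ h2 (by norm_num) two_ne_zero
              rw [mul_pow, sq_abs] at this
              linarith
            have h4 : 2 / π ^ 2 > 2 / 10 := by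
              have h5 : π ^ 2 < 10 := by nlinarith [Real.pi_lt_d2, Real.pi_pos]
              gcongr
            calc (2 + 1 / 1000 : ℝ) < 2 / 10 * 16 := by norm_num
              _ ≤ 2 / π ^ 2 * (M ^ 2 * θ ^ 2) := by gcongr
              _ = M ^ 2 * (2 / π ^ 2 * θ ^ 2) := by ring
              _ ≤ _ := by gcongr
          simp [hz]
    _ ≤ ∫⁻ θ, (Icc (-(4 / M)) (4 / M)).indicator (fun _ => ENNReal.ofReal (a ^ 2)) θ :=
        setLIntegral_le_lintegral _ _
    _ = ENNReal.ofReal (8 * a ^ 2 / M) := by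
        rw [lintegral_indicator_const measurableSet_Icc, Real.volume_Icc,
          ← ENNReal.ofReal_mul (by positivity)]
        congr 1
        ring

/-- The admissible range of the scaling parameters. -/
structure Par (M lam c : ℝ) : Prop where
  one_le : 1 ≤ M
  sq_le : M ^ 2 ≤ lam
  c_lb : 1 / 4 ≤ c
  c_ub : c ≤ 20

lemma Par.one_le_lam {M lam c : ℝ} (h : Par M lam c) : 1 ≤ lam :=
  (one_le_pow₀ h.one_le).trans h.sq_le

lemma Par.pos {M lam c : ℝ} (h : Par M lam c) : 0 < M := by linarith [h.one_le]

lemma Par.lam_pos {M lam c : ℝ} (h : Par M lam c) : 0 < lam := by linarith [h.one_le_lam]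

/-- Combinations of oscillatory integrals with bounded coefficients. -/
inductive Comb : (ℝ → ℝ → ℝ → ℝ × ℝ → ℂ) → Prop
  | basic (f : ℝ → ℂ) (χ : ℝ → ℝ → ℝ) : Rad f → Adm χ →
      Comb fun M lam c v => oscInt f (fun θ => (χ M θ : ℂ)) c lam v
  | add (Y Z : ℝ → ℝ → ℝ → ℝ × ℝ → ℂ) : Comb Y → Comb Z →
      Comb fun M lam c v => Y M lam c v + Z M lam c v
  | smul (a : ℝ → ℝ → ℝ → ℂ) (D : ℝ) (Y : ℝ → ℝ → ℝ → ℝ × ℝ → ℂ) :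
      (∀ M lam c, Par M lam c → ‖a M lam c‖ ≤ D) → Comb Y →
      Comb fun M lam c v => a M lam c * Y M lam c v
  | congr (Y Z : ℝ → ℝ → ℝ → ℝ × ℝ → ℂ) : Comb Y →
      (∀ M lam c v, Par M lam c → Z M lam c v = Y M lam c v) → Comb Z

lemma Comb.bound {Y : ℝ → ℝ → ℝ → ℝ × ℝ → ℂ} (h : Comb Y) :
    ∃ C, 0 ≤ C ∧ ∀ M lam c, Par M lam c → Measurable (Y M lam c) ∧
      ∫⁻ v, ‖Y M lam c v‖ₑ ^ 2 ≤ ENNReal.ofReal (C / (lam ^ 2 * M)) := by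
  induction h with
  | basic f χ hf hχ =>
    obtain ⟨a, ha, ha'⟩ := hχ.lintegral_sq_le
    have hfb : ∃ b, 0 ≤ b ∧ ∫⁻ u in Ioc (1/2 : ℝ) 3, ‖f u‖ₑ ^ 2 ≤ ENNReal.ofReal b := by
      obtain ⟨D, hD⟩ := isCompact_Icc.exists_bound_of_continuousOn
        (s := Icc (1/2 : ℝ) 3) hf.continuous.continuousOn
      have hD0 : 0 ≤ D := (norm_nonneg _).trans (hD 1 (by norm_num))
      refine ⟨D ^ 2 * (3 - 1/2), by positivity, ?_⟩
      calc _ ≤ ∫⁻ u in Ioc (1/2 : ℝ) 3, ENNReal.ofReal (D ^ 2) := by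
            refine setLIntegral_mono' measurableSet_Ioc fun u hu => ?_
            rw [← ofReal_norm, ← ENNReal.ofReal_pow (norm_nonneg _)]
            exact ENNReal.ofReal_le_ofReal
              (pow_le_pow_left₀ (norm_nonneg _) (hD u (Ioc_subset_Icc_self hu)) 2)
        _ = _ := by
            rw [setLIntegral_const, Real.volume_Ioc, ← ENNReal.ofReal_mul (by positivity)]
    obtain ⟨b, hb, hb'⟩ := hfb
    refine ⟨(2 * π) ^ 2 * 2 * b * a, by positivity, fun M lam c hP => ?_⟩
    have hχc := hχ.continuous hP.pos
    have hχc' : Continuous fun θ => (χ M θ : ℂ) := by fun_prop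
    refine ⟨measurable_oscInt hf.continuous hχc' c lam, ?_⟩
    have hl := hP.lam_pos
    have hM := hP.pos
    refine (lintegral_oscInt_sq_le hf.continuous hχc' c hl).trans ?_
    calc _ ≤ ENNReal.ofReal ((2 * π) ^ 2) * ENNReal.ofReal (2 * (lam ^ 2)⁻¹) *
          (ENNReal.ofReal b * ENNReal.ofReal (a / M)) := by
          gcongr
          exact ha' M hP.one_le
      _ = _ := by
          rw [← ENNReal.ofReal_mul (by positivity), ← ENNReal.ofReal_mul (by positivity),
            ← ENNReal.ofReal_mul (by positivity)]
          congr 1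
          field_simp
  | add Y Z _ _ ih₁ ih₂ =>
    obtain ⟨a, ha, ha'⟩ := ih₁
    obtain ⟨b, hb, hb'⟩ := ih₂
    refine ⟨2 * a + 2 * b, by positivity, fun M lam c hP => ?_⟩
    obtain ⟨h1, h2⟩ := ha' M lam c hP
    obtain ⟨h3, h4⟩ := hb' M lam c hP
    have hl := hP.lam_pos
    have hM := hP.pos
    refine ⟨h1.add h3, ?_⟩
    calc _ ≤ ∫⁻ v, (2 * ‖Y M lam c v‖ₑ ^ 2 + 2 * ‖Z M lam c v‖ₑ ^ 2) := by
          refine lintegral_mono fun v => ?_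
          simp only [← ofReal_norm]
          rw [← ENNReal.ofReal_pow (norm_nonneg _), ← ENNReal.ofReal_pow (norm_nonneg _),
            ← ENNReal.ofReal_pow (norm_nonneg _), ← ENNReal.ofReal_ofNat 2,
            ← ENNReal.ofReal_mul (by norm_num), ← ENNReal.ofReal_mul (by norm_num),
            ← ENNReal.ofReal_add (by positivity) (by positivity)]
          refine ENNReal.ofReal_le_ofReal ?_
          have := norm_add_le (Y M lam c v) (Z M lam c v)
          have := pow_le_pow_left₀ (norm_nonneg _) this 2
          nlinarith [sq_nonneg (‖Y M lam c v‖ - ‖Z M lam c v‖)]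
      _ = 2 * (∫⁻ v, ‖Y M lam c v‖ₑ ^ 2) + 2 * ∫⁻ v, ‖Z M lam c v‖ₑ ^ 2 := by
          rw [lintegral_add_left (by fun_prop), lintegral_const_mul _ (by fun_prop),
            lintegral_const_mul _ (by fun_prop)]
      _ ≤ 2 * ENNReal.ofReal (a / (lam ^ 2 * M)) + 2 * ENNReal.ofReal (b / (lam ^ 2 * M)) := by
          gcongr
      _ = _ := by
          rw [← ENNReal.ofReal_ofNat 2, ← ENNReal.ofReal_mul (by norm_num),
            ← ENNReal.ofReal_mul (by norm_num),
            ← ENNReal.ofReal_add (by positivity) (by positivity)]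
          congr 1
          ring
  | smul a D Y ha _ ih =>
    obtain ⟨b, hb, hb'⟩ := ih
    refine ⟨D ^ 2 * b, by positivity, fun M lam c hP => ?_⟩
    obtain ⟨h1, h2⟩ := hb' M lam c hP
    refine ⟨h1.const_mul _, ?_⟩
    calc _ = ‖a M lam c‖ₑ ^ 2 * ∫⁻ v, ‖Y M lam c v‖ₑ ^ 2 := by
          rw [← lintegral_const_mul _ (by fun_prop)]
          exact lintegral_congr fun v => by rw [enorm_mul, mul_pow]
      _ ≤ ENNReal.ofReal (D ^ 2) * ENNReal.ofReal (b / (lam ^ 2 * M)) := by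
          gcongr
          rw [← ofReal_norm, ← ENNReal.ofReal_pow (norm_nonneg _)]
          exact ENNReal.ofReal_le_ofReal (pow_le_pow_left₀ (norm_nonneg _) (ha M lam c hP) 2)
      _ = _ := by
          rw [← ENNReal.ofReal_mul (by positivity), mul_div_assoc]
  | congr Y Z _ h ih =>
    obtain ⟨b, hb, hb'⟩ := ih
    refine ⟨b, hb, fun M lam c hP => ?_⟩
    have : Z M lam c = Y M lam c := funext fun v => h M lam c v hP
    simp only [this]
    exact hb' M lam c hP

lemma Comb.mul_fst {Y : ℝ → ℝ → ℝ → ℝ × ℝ → ℂ} (h : Comb Y) :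
    Comb fun M lam c v => ((lam * (v.1 ^ 2 + v.2 ^ 2 - c ^ 2) : ℝ) : ℂ) * Y M lam c v := by
  induction h with
  | basic f χ hf hχ =>
    obtain ⟨χ₁, h₁, hd₁⟩ := hχ.exists_hasDerivAt
    obtain ⟨χ₂, h₂, hd₂⟩ := h₁.exists_hasDerivAt
    have hinv : ∀ M lam c, Par M lam c → ‖(lam : ℂ)⁻¹‖ ≤ 1 := fun M lam c hP => by
      rw [norm_inv, Complex.norm_real, Real.norm_of_nonneg hP.lam_pos.le]
      exact inv_le_one_of_one_le₀ hP.one_le_lam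
    have hc : ∀ c M lam, Par M lam c → ‖(c : ℂ)‖ ≤ 20 := fun c M lam hP => by
      rw [Complex.norm_real, Real.norm_of_nonneg (by linarith [hP.c_lb])]
      exact hP.c_ub
    refine Comb.congr _ _ (Comb.add _ _ (Comb.smul (fun _ lam _ => (lam : ℂ)⁻¹) 1 _ hinv
      (Comb.basic _ χ hf.radD.radD hχ))
      (Comb.add _ _ (Comb.smul (fun _ _ c => -2 * (c : ℂ)) 40 _ (fun M lam c hP => ?_)
        (Comb.basic _ χ hf.radD hχ))
      (Comb.add _ _ (Comb.smul (fun _ _ c => -(c : ℂ)) 20 _ (fun M lam c hP => ?_)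
        (Comb.basic _ χ hf.radI hχ))
      (Comb.add _ _ (Comb.smul (fun _ lam _ => (lam : ℂ)⁻¹) 1 _ hinv
        (Comb.basic _ χ hf.radI.radD hχ))
        (Comb.smul (fun M lam _ => (lam : ℂ)⁻¹ * (M : ℂ) ^ 2) 1 _ (fun M lam c hP => ?_)
        (Comb.basic _ χ₂ hf.radI.radI h₂)))))) fun M lam c v hP => ?_
    · rw [norm_mul, norm_neg]
      have := hc c M lam hP
      have h2 : ‖(2 : ℂ)‖ = 2 := by simp
      rw [h2]
      linarith
    · rw [norm_neg]; exact hc c M lam hP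
    · rw [norm_mul, norm_inv, norm_pow, Complex.norm_real, Complex.norm_real,
        Real.norm_of_nonneg hP.lam_pos.le, Real.norm_of_nonneg hP.pos.le, inv_mul_le_one₀ hP.lam_pos]
      exact hP.sq_le
    · have hd₁' : ∀ θ, HasDerivAt (fun θ => (χ M θ : ℂ)) ((M * χ₁ M θ : ℝ) : ℂ) θ :=
        fun θ => (hd₁ M θ hP.pos).ofReal_comp
      have hd₂' : ∀ θ, HasDerivAt (fun θ => ((M * χ₁ M θ : ℝ) : ℂ))
          ((M : ℂ) ^ 2 * (χ₂ M θ : ℂ)) θ :=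
        fun θ => ((hd₂ M θ hP.pos).const_mul M).ofReal_comp.congr_deriv (by push_cast; ring)
      have hcont := h₂.continuous hP.pos
      have key := oscInt_mul_normSq hf hd₁' hd₂' (by fun_prop) (by simp only [hχ.periodic M])
        (by simp only [h₁.periodic M]) c hP.lam_pos.ne' v
      rw [oscInt_const_mul] at key
      have hl : (lam : ℂ) ≠ 0 := by exact_mod_cast hP.lam_pos.ne'
      simp only
      rw [Complex.ofReal_mul, mul_assoc, key, ← mul_assoc, mul_inv_cancel₀ hl]
      ring
  | add Y Z _ _ ih₁ ih₂ =>
    exact Comb.congr _ _ (Comb.add _ _ ih₁ ih₂) fun M lam c v _ => by simp only; ring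
  | smul a D Y ha _ ih =>
    exact Comb.congr _ _ (Comb.smul a D _ ha ih) fun M lam c v _ => by simp only; ring
  | congr Y Z _ h ih =>
    exact Comb.congr _ _ ih fun M lam c v hP => by rw [h M lam c v hP]

lemma Comb.mul_snd {Y : ℝ → ℝ → ℝ → ℝ × ℝ → ℂ} (h : Comb Y) :
    Comb fun M lam c v => ((M * v.2 : ℝ) : ℂ) * Y M lam c v := by
  induction h with
  | basic f χ hf hχ =>
    have hs := Adm.mul_sin _ hχ
    obtain ⟨χ₁, h₁, hd₁⟩ := (Adm.mul_cos _ hχ).exists_hasDerivAt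
    refine Comb.congr _ _ (Comb.add _ _ (Comb.smul (fun _ _ c => (c : ℂ)) 20 _
      (fun M lam c hP => ?_) (Comb.basic _ _ hf hs))
      (Comb.add _ _ (Comb.smul (fun _ lam _ => -(lam : ℂ)⁻¹) 1 _ (fun M lam c hP => ?_)
        (Comb.basic _ _ hf.radD hs))
        (Comb.smul (fun M lam _ => (lam : ℂ)⁻¹ * (M : ℂ) ^ 2) 1 _ (fun M lam c hP => ?_)
        (Comb.basic _ χ₁ hf.radI h₁)))) fun M lam c v hP => ?_
    · rw [Complex.norm_real, Real.norm_of_nonneg (by linarith [hP.c_lb])]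
      exact hP.c_ub
    · rw [norm_neg, norm_inv, Complex.norm_real, Real.norm_of_nonneg hP.lam_pos.le]
      exact inv_le_one_of_one_le₀ hP.one_le_lam
    · rw [norm_mul, norm_inv, norm_pow, Complex.norm_real, Complex.norm_real,
        Real.norm_of_nonneg hP.lam_pos.le, Real.norm_of_nonneg hP.pos.le, inv_mul_le_one₀ hP.lam_pos]
      exact hP.sq_le
    · have hd₁' : ∀ θ, HasDerivAt (fun θ => (Real.cos θ : ℂ) * (χ M θ : ℂ))
          ((M : ℂ) * (χ₁ M θ : ℂ)) θ := fun θ => by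
        have := (hd₁ M θ hP.pos).ofReal_comp
        simpa using this
      have hχc := hχ.continuous hP.pos
      have hcont := h₁.continuous hP.pos
      have key := oscInt_mul_snd hf (by fun_prop) hd₁' (by fun_prop)
        (by simp only [hχ.periodic M]) c hP.lam_pos.ne' v
      have e : ∀ F : ℝ → ℂ, oscInt F (fun θ => ((M * Real.sin θ * χ M θ : ℝ) : ℂ)) c lam v =
          M * oscInt F (fun θ => (Real.sin θ : ℂ) * (χ M θ : ℂ)) c lam v := fun F => by
        rw [← oscInt_const_mul]
        congr 1
        funext θ
        push_cast
        ring
      rw [oscInt_const_mul] at key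
      simp only
      rw [Complex.ofReal_mul, mul_assoc, key, e, e]
      ring
  | add Y Z _ _ ih₁ ih₂ =>
    exact Comb.congr _ _ (Comb.add _ _ ih₁ ih₂) fun M lam c v _ => by simp only; ring
  | smul a D Y ha _ ih =>
    exact Comb.congr _ _ (Comb.smul a D _ ha ih) fun M lam c v _ => by simp only; ring
  | congr Y Z _ h ih =>
    exact Comb.congr _ _ ih fun M lam c v hP => by rw [h M lam c v hP]

/-- The weight localizing to the `λ⁻¹ × M⁻¹` neighbourhood of `(±c, 0)` on the circle `|v| = c`. -/
def weight (M lam c : ℝ) (v : ℝ × ℝ) : ℝ :=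
  (1 + (lam * (v.1 ^ 2 + v.2 ^ 2 - c ^ 2)) ^ 2) * (1 + (M * v.2) ^ 2)

lemma weight_pos (M lam c : ℝ) (v : ℝ × ℝ) : 0 < weight M lam c v := by
  unfold weight; positivity

@[fun_prop]
lemma continuous_weight (M lam c : ℝ) : Continuous (weight M lam c) := by
  unfold weight; fun_prop

lemma inv_one_add_sin_sq_le {B : ℝ} (hB : 0 < B) {θ : ℝ} (hθ : |θ| ≤ π) :
    (1 + (B * Real.sin θ) ^ 2)⁻¹ ≤ (1 + (2 / π * B * (θ - 0)) ^ 2)⁻¹ +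
      (1 + (2 / π * B * (θ - π)) ^ 2)⁻¹ + (1 + (2 / π * B * (θ - -π)) ^ 2)⁻¹ := by
  have key : ∀ a : ℝ, |θ - a| ≤ π / 2 → |Real.sin θ| = |Real.sin (θ - a)| →
      (1 + (B * Real.sin θ) ^ 2)⁻¹ ≤ (1 + (2 / π * B * (θ - a)) ^ 2)⁻¹ := by
    intro a ha hs
    have h := Real.mul_abs_le_abs_sin ha
    rw [← hs] at h
    have h2 : |2 / π * B * (θ - a)| ≤ |B * Real.sin θ| := by
      rw [abs_mul, abs_mul B, abs_of_pos hB, abs_of_pos (show 0 < 2 / π * B by positivity)]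
      calc 2 / π * B * |θ - a| = B * (2 / π * |θ - a|) := by ring
        _ ≤ _ := by gcongr
    have h3 := sq_le_sq.2 h2
    gcongr
  have hp1 : 0 ≤ (1 + (2 / π * B * (θ - 0)) ^ 2)⁻¹ := by positivity
  have hp2 : 0 ≤ (1 + (2 / π * B * (θ - π)) ^ 2)⁻¹ := by positivity
  have hp3 : 0 ≤ (1 + (2 / π * B * (θ - -π)) ^ 2)⁻¹ := by positivity
  obtain ⟨h1, h2⟩ := abs_le.1 hθ
  rcases le_total |θ| (π / 2) with h | h
  · have := key 0 (by simpa using h) (by simp)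
    linarith
  · rcases le_total 0 θ with h0 | h0
    · rw [abs_of_nonneg h0] at h
      have := key π (abs_le.2 ⟨by linarith, by linarith⟩) (by rw [Real.sin_sub_pi, abs_neg])
      linarith
    · rw [abs_of_nonpos h0] at h
      have := key (-π) (abs_le.2 ⟨by linarith, by linarith⟩)
        (by rw [sub_neg_eq_add, Real.sin_add_pi, abs_neg])
      linarith

lemma lintegral_inv_one_add_sin_sq_le {B : ℝ} (hB : 0 < B) :
    ∫⁻ θ in Ioo (-π) π, ENNReal.ofReal ((1 + (B * Real.sin θ) ^ 2)⁻¹) ≤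
      ENNReal.ofReal (3 * π ^ 2 / (2 * B)) := by
  have hB' : 0 < 2 / π * B := by positivity
  calc _ ≤ ∫⁻ θ in Ioo (-π) π, (ENNReal.ofReal ((1 + (2 / π * B * (θ - 0)) ^ 2)⁻¹) +
        ENNReal.ofReal ((1 + (2 / π * B * (θ - π)) ^ 2)⁻¹) +
        ENNReal.ofReal ((1 + (2 / π * B * (θ - -π)) ^ 2)⁻¹)) := by
        refine setLIntegral_mono' measurableSet_Ioo fun θ hθ => ?_
        rw [← ENNReal.ofReal_add (by positivity) (by positivity),
          ← ENNReal.ofReal_add (by positivity) (by positivity)]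
        exact ENNReal.ofReal_le_ofReal
          (inv_one_add_sin_sq_le hB (abs_le.2 ⟨hθ.1.le, hθ.2.le⟩))
    _ ≤ ∫⁻ θ, (ENNReal.ofReal ((1 + (2 / π * B * (θ - 0)) ^ 2)⁻¹) +
        ENNReal.ofReal ((1 + (2 / π * B * (θ - π)) ^ 2)⁻¹) +
        ENNReal.ofReal ((1 + (2 / π * B * (θ - -π)) ^ 2)⁻¹)) := setLIntegral_le_lintegral _ _
    _ ≤ ENNReal.ofReal (π / (2 / π * B)) + ENNReal.ofReal (π / (2 / π * B)) +
        ENNReal.ofReal (π / (2 / π * B)) := by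
        rw [lintegral_add_left (by fun_prop), lintegral_add_left (by fun_prop)]
        exact add_le_add (add_le_add (lintegral_inv_one_add_sq_le hB' _)
          (lintegral_inv_one_add_sq_le hB' _)) (lintegral_inv_one_add_sq_le hB' _)
    _ = _ := by
        rw [← ENNReal.ofReal_add (by positivity) (by positivity),
          ← ENNReal.ofReal_add (by positivity) (by positivity)]
        congr 1
        field_simp
        ring

lemma lintegral_inv_weight_le {M lam c : ℝ} (hP : Par M lam c) :
    ∫⁻ v, ENNReal.ofReal ((weight M lam c v)⁻¹) ≤ ENNReal.ofReal (6 * π ^ 3 / (lam * M)) := by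
  have hM := hP.pos
  have hl := hP.lam_pos
  rw [← lintegral_comp_polarCoord_symm, polarCoord_target, Measure.volume_eq_prod,
    ← Measure.prod_restrict]
  have hpt : ∀ p ∈ Ioi (0 : ℝ) ×ˢ Ioo (-π) π, ENNReal.ofReal p.1 •
      ENNReal.ofReal ((weight M lam c (polarCoord.symm p))⁻¹) ≤
      ENNReal.ofReal (p.1 * (1 + (lam / 4 * (p.1 - c)) ^ 2)⁻¹) *
        ENNReal.ofReal ((1 + (M * p.1 * Real.sin p.2) ^ 2)⁻¹) := by
    rintro ⟨R, θ⟩ ⟨hR, hθ⟩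
    simp only [mem_Ioi] at hR
    rw [smul_eq_mul, ← ENNReal.ofReal_mul hR.le, ← ENNReal.ofReal_mul (by positivity)]
    refine ENNReal.ofReal_le_ofReal ?_
    simp only [polarCoord_symm_apply, weight]
    rw [mul_inv, ← mul_assoc]
    have h1 : (R * Real.cos θ) ^ 2 + (R * Real.sin θ) ^ 2 - c ^ 2 = (R + c) * (R - c) := by
      linear_combination R ^ 2 * Real.sin_sq_add_cos_sq θ
    have h2 : (lam / 4 * (R - c)) ^ 2 ≤ (lam * ((R + c) * (R - c))) ^ 2 := by
      have : (1 / 4 : ℝ) ^ 2 ≤ (R + c) ^ 2 :=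
        pow_le_pow_left₀ (by norm_num) (by linarith [hP.c_lb]) 2
      calc (lam / 4 * (R - c)) ^ 2 = (1 / 4) ^ 2 * (lam * (R - c)) ^ 2 := by ring
        _ ≤ (R + c) ^ 2 * (lam * (R - c)) ^ 2 := by gcongr
        _ = _ := by ring
    rw [h1, mul_assoc M R]
    gcongr
  calc _ ≤ ∫⁻ p, ENNReal.ofReal (p.1 * (1 + (lam / 4 * (p.1 - c)) ^ 2)⁻¹) *
        ENNReal.ofReal ((1 + (M * p.1 * Real.sin p.2) ^ 2)⁻¹)
          ∂((volume.restrict (Ioi (0 : ℝ))).prod (volume.restrict (Ioo (-π) π))) := by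
        rw [Measure.prod_restrict]
        exact setLIntegral_mono' (measurableSet_Ioi.prod measurableSet_Ioo) hpt
    _ = ∫⁻ R in Ioi (0 : ℝ), ENNReal.ofReal (R * (1 + (lam / 4 * (R - c)) ^ 2)⁻¹) *
        ∫⁻ θ in Ioo (-π) π, ENNReal.ofReal ((1 + (M * R * Real.sin θ) ^ 2)⁻¹) := by
        rw [lintegral_prod _ (by fun_prop)]
        refine lintegral_congr fun R => ?_
        simp only
        rw [lintegral_const_mul _ (by fun_prop)]
    _ ≤ ∫⁻ R in Ioi (0 : ℝ), ENNReal.ofReal (3 * π ^ 2 / (2 * M)) *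
        ENNReal.ofReal ((1 + (lam / 4 * (R - c)) ^ 2)⁻¹) := by
        refine setLIntegral_mono' measurableSet_Ioi fun R hR => ?_
        have hR' : 0 < R := hR
        refine (mul_le_mul_right (lintegral_inv_one_add_sin_sq_le (by positivity)) _).trans ?_
        rw [← ENNReal.ofReal_mul (by positivity), ← ENNReal.ofReal_mul (by positivity)]
        refine ENNReal.ofReal_le_ofReal (le_of_eq ?_)
        field_simp
    _ ≤ ∫⁻ R, ENNReal.ofReal (3 * π ^ 2 / (2 * M)) *
        ENNReal.ofReal ((1 + (lam / 4 * (R - c)) ^ 2)⁻¹) := setLIntegral_le_lintegral _ _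
    _ ≤ ENNReal.ofReal (3 * π ^ 2 / (2 * M)) * ENNReal.ofReal (π / (lam / 4)) := by
        rw [lintegral_const_mul _ (by fun_prop)]
        gcongr
        exact lintegral_inv_one_add_sq_le (by positivity) c
    _ = _ := by
        rw [← ENNReal.ofReal_mul (by positivity)]
        congr 1
        field_simp
        ring

lemma lintegral_weight_mul_le {f : ℝ → ℂ} {χ : ℝ → ℝ → ℝ} (hf : Rad f) (hχ : Adm χ) :
    ∃ C, 0 ≤ C ∧ ∀ M lam c, Par M lam c →
      ∫⁻ v, ENNReal.ofReal (weight M lam c v) * ‖oscInt f (fun θ => (χ M θ : ℂ)) c lam v‖ₑ ^ 2 ≤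
        ENNReal.ofReal (C / (lam ^ 2 * M)) := by
  have h0 := Comb.basic f χ hf hχ
  obtain ⟨C₁, h₁, H₁⟩ := h0.bound
  obtain ⟨C₂, h₂, H₂⟩ := h0.mul_fst.bound
  obtain ⟨C₃, h₃, H₃⟩ := h0.mul_snd.bound
  obtain ⟨C₄, h₄, H₄⟩ := h0.mul_snd.mul_fst.bound
  refine ⟨C₁ + C₂ + C₃ + C₄, by positivity, fun M lam c hP => ?_⟩
  have hM := hP.pos
  have hl := hP.lam_pos
  obtain ⟨m₁, H₁⟩ := H₁ M lam c hP
  obtain ⟨m₂, H₂⟩ := H₂ M lam c hP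
  obtain ⟨m₃, H₃⟩ := H₃ M lam c hP
  obtain ⟨m₄, H₄⟩ := H₄ M lam c hP
  calc _ = ∫⁻ v, (‖oscInt f (fun θ => (χ M θ : ℂ)) c lam v‖ₑ ^ 2 +
        ‖((lam * (v.1 ^ 2 + v.2 ^ 2 - c ^ 2) : ℝ) : ℂ) *
          oscInt f (fun θ => (χ M θ : ℂ)) c lam v‖ₑ ^ 2 +
        ‖((M * v.2 : ℝ) : ℂ) * oscInt f (fun θ => (χ M θ : ℂ)) c lam v‖ₑ ^ 2 +
        ‖((lam * (v.1 ^ 2 + v.2 ^ 2 - c ^ 2) : ℝ) : ℂ) * (((M * v.2 : ℝ) : ℂ) *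
          oscInt f (fun θ => (χ M θ : ℂ)) c lam v)‖ₑ ^ 2) := by
        refine lintegral_congr fun v => ?_
        simp only [← ofReal_norm, norm_mul, Complex.norm_real, Real.norm_eq_abs]
        rw [← ENNReal.ofReal_pow (by positivity), ← ENNReal.ofReal_pow (by positivity),
          ← ENNReal.ofReal_pow (by positivity), ← ENNReal.ofReal_pow (by positivity),
          ← ENNReal.ofReal_mul (weight_pos _ _ _ _).le,
          ← ENNReal.ofReal_add (by positivity) (by positivity),
          ← ENNReal.ofReal_add (by positivity) (by positivity),
          ← ENNReal.ofReal_add (by positivity) (by positivity)]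
        congr 1
        simp only [mul_pow, sq_abs, weight]
        ring
    _ ≤ ENNReal.ofReal (C₁ / (lam ^ 2 * M)) + ENNReal.ofReal (C₂ / (lam ^ 2 * M)) +
        ENNReal.ofReal (C₃ / (lam ^ 2 * M)) + ENNReal.ofReal (C₄ / (lam ^ 2 * M)) := by
        rw [lintegral_add_left (by fun_prop), lintegral_add_left (by fun_prop),
          lintegral_add_left (by fun_prop)]
        exact add_le_add (add_le_add (add_le_add H₁ H₂) H₃) H₄
    _ = _ := by
        rw [← ENNReal.ofReal_add (by positivity) (by positivity),
          ← ENNReal.ofReal_add (by positivity) (by positivity),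
          ← ENNReal.ofReal_add (by positivity) (by positivity)]
        congr 1
        ring

/-- `L¹` bound for the rescaled kernel. -/
lemma lintegral_oscInt_le {f : ℝ → ℂ} {χ : ℝ → ℝ → ℝ} (hf : Rad f) (hχ : Adm χ) :
    ∃ C, 0 ≤ C ∧ ∀ M lam c, Par M lam c →
      ∫⁻ v, ‖oscInt f (fun θ => (χ M θ : ℂ)) c lam v‖ₑ ≤
        ENNReal.ofReal (C * (lam ^ (3/2 : ℝ) * M)⁻¹) := by
  obtain ⟨C, hC, H⟩ := lintegral_weight_mul_le hf hχ
  refine ⟨(6 * π ^ 3) ^ (1/2 : ℝ) * C ^ (1/2 : ℝ), by positivity, fun M lam c hP => ?_⟩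
  have hM := hP.pos
  have hl := hP.lam_pos
  have hχc := hχ.continuous hM
  have hm : Measurable (oscInt f (fun θ => (χ M θ : ℂ)) c lam) :=
    measurable_oscInt hf.continuous (by fun_prop) _ _
  have hw : Measurable (weight M lam c) := (continuous_weight M lam c).measurable
  have hh := ENNReal.lintegral_mul_le_Lp_mul_Lq volume Real.HolderConjugate.two_two
    (f := fun v => ENNReal.ofReal ((weight M lam c v)⁻¹) ^ (1/2 : ℝ))
    (g := fun v => (ENNReal.ofReal (weight M lam c v) *
      ‖oscInt f (fun θ => (χ M θ : ℂ)) c lam v‖ₑ ^ 2) ^ (1/2 : ℝ))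
    (by fun_prop) (by fun_prop)
  have e : ∀ x : ℝ≥0∞, (x ^ (1/2 : ℝ)) ^ (2 : ℝ) = x := fun x => by
    rw [← ENNReal.rpow_mul]; norm_num
  simp only [e] at hh
  calc _ = ∫⁻ v, ((fun v => ENNReal.ofReal ((weight M lam c v)⁻¹) ^ (1/2 : ℝ)) *
        fun v => (ENNReal.ofReal (weight M lam c v) *
          ‖oscInt f (fun θ => (χ M θ : ℂ)) c lam v‖ₑ ^ 2) ^ (1/2 : ℝ)) v := by
        refine lintegral_congr fun v => ?_
        have hv := weight_pos M lam c v
        rw [Pi.mul_apply, ← ENNReal.mul_rpow_of_nonneg _ _ (by norm_num), ← mul_assoc,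
          ← ENNReal.ofReal_mul (by positivity), inv_mul_cancel₀ hv.ne', ENNReal.ofReal_one,
          one_mul, ← ENNReal.rpow_natCast, ← ENNReal.rpow_mul]
        norm_num
    _ ≤ _ := hh
    _ ≤ ENNReal.ofReal (6 * π ^ 3 / (lam * M)) ^ (1/2 : ℝ) *
        ENNReal.ofReal (C / (lam ^ 2 * M)) ^ (1/2 : ℝ) := by
        gcongr
        · exact lintegral_inv_weight_le hP
        · exact H M lam c hP
    _ = _ := by
        rw [ENNReal.ofReal_rpow_of_nonneg (by positivity) (by norm_num),
          ENNReal.ofReal_rpow_of_nonneg (by positivity) (by norm_num),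
          ← ENNReal.ofReal_mul (by positivity)]
        congr 1
        rw [Real.div_rpow (by positivity) (by positivity), Real.div_rpow hC (by positivity),
          Real.mul_rpow hl.le hM.le, Real.mul_rpow (by positivity) hM.le,
          ← Real.rpow_natCast lam 2, ← Real.rpow_mul hl.le]
        have h1 : lam ^ (3/2 : ℝ) = lam ^ (1/2 : ℝ) * lam ^ (((2 : ℕ) : ℝ) * (1/2)) := by
          rw [← Real.rpow_add hl]; norm_num
        have h2 : M ^ (1/2 : ℝ) * M ^ (1/2 : ℝ) = M := by
          rw [← Real.rpow_add hM]; norm_num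
        rw [h1]
        nth_rewrite 3 [← h2]
        field_simp

lemma exists_decay {f : ℝ → ℂ} (hf : Rad f) :
    ∃ D, 0 ≤ D ∧ ∀ lam s, 0 < lam →
      ‖∫ u in Ioc (1/2 : ℝ) 3, osc (lam * u * s) * f u‖ ≤ D * (1 + lam * |s|)⁻¹ := by
  refine ⟨(∫ u in Ioc (1/2 : ℝ) 3, ‖f u‖) + ∫ u in Ioc (1/2 : ℝ) 3, ‖radD f u‖, by positivity,
    fun lam s hl => ?_⟩
  have hle : ∀ g : ℝ → ℂ, ‖∫ u in Ioc (1/2 : ℝ) 3, osc (lam * u * s) * g u‖ ≤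
      ∫ u in Ioc (1/2 : ℝ) 3, ‖g u‖ := fun g => by
    refine (norm_integral_le_integral_norm _).trans_eq ?_
    exact integral_congr_ae (.of_forall fun u => by simp [norm_osc])
  have h := integral_mul_osc_rad hf hl.ne' s
  rw [integral_const_mul] at h
  have h2 : lam * |s| * ‖∫ u in Ioc (1/2 : ℝ) 3, osc (lam * u * s) * f u‖ ≤
      ∫ u in Ioc (1/2 : ℝ) 3, ‖radD f u‖ := by
    have h3 := congrArg norm h
    rw [norm_mul, norm_mul, norm_inv, Complex.norm_real, Complex.norm_real, Real.norm_eq_abs,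
      Real.norm_of_nonneg hl.le] at h3
    rw [mul_assoc, h3, ← mul_assoc, mul_inv_cancel₀ hl.ne', one_mul]
    exact hle _
  rw [← div_eq_mul_inv, le_div_iff₀ (by positivity), mul_comm, add_mul, one_mul]
  exact add_le_add (hle f) h2

lemma exists_sub_mul_cos_ge {c R : ℝ} (hc : 1 / 4 ≤ c) (hR : 0 ≤ R) :
    ∃ θ₀, ∀ x ∈ Icc 0 π, (x - θ₀) ^ 2 / 60 ≤ |c - R * Real.cos x| := by
  have hπ := Real.pi_lt_d2
  have hπ0 := Real.pi_pos
  have hπsq : π ^ 2 < 10 := by nlinarith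
  rcases le_or_gt c R with h | h
  · have hR : 0 < R := by linarith
    refine ⟨Real.arccos (c / R), fun x hx => ?_⟩
    set a := Real.arccos (c / R) with ha
    have hcos : Real.cos a = c / R :=
      Real.cos_arccos (by have : 0 ≤ c / R := by positivity
                          linarith) (div_le_one_of_le₀ h hR.le)
    have ha0 : 0 ≤ a := Real.arccos_nonneg _
    have ha1 : a ≤ π / 2 := Real.arccos_le_pi_div_two.2 (by positivity)
    have e : c - R * Real.cos x = 2 * R * (Real.sin ((x + a) / 2) * Real.sin ((x - a) / 2)) := by
      have := Real.cos_sub_cos x a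
      have h1 : c = R * Real.cos a := by rw [hcos]; field_simp
      rw [h1]
      linear_combination (-R) * this
    obtain ⟨hx0, hx1⟩ := hx
    have h1 : 2 / π * ((x + a) / 6) ≤ |Real.sin ((x + a) / 2)| := by
      rcases le_total ((x + a) / 2) (π / 2) with h2 | h2
      · refine le_trans ?_ (le_abs_self _)
        refine le_trans ?_ (Real.mul_le_sin (by linarith) h2)
        gcongr
        norm_num
      · refine le_trans ?_ (le_abs_self _)
        rw [← Real.sin_pi_sub]
        refine le_trans ?_ (Real.mul_le_sin (by linarith) (by linarith))
        gcongr
        linarith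
    have h2 : 2 / π * |(x - a) / 2| ≤ |Real.sin ((x - a) / 2)| :=
      Real.mul_abs_le_abs_sin (abs_le.2 ⟨by linarith, by linarith⟩)
    have h3 : |x - a| ≤ x + a := abs_le.2 ⟨by linarith, by linarith⟩
    rw [e, abs_mul (2 * R), abs_mul (Real.sin _), abs_of_pos (show 0 < 2 * R by positivity)]
    calc (x - a) ^ 2 / 60 ≤ 2 * (1 / 4) * ((2 / π * (|x - a| / 6)) * (2 / π * |(x - a) / 2|)) := by
          rw [abs_div, abs_two, ← sq_abs (x - a)]
          have : 2 * (1 / 4) * ((2 / π * (|x - a| / 6)) * (2 / π * (|x - a| / 2))) =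
            |x - a| ^ 2 / (6 * π ^ 2) := by field_simp; ring
          rw [this]
          gcongr
          linarith
      _ ≤ 2 * R * ((2 / π * ((x + a) / 6)) * (2 / π * |(x - a) / 2|)) := by
          gcongr
          linarith
      _ ≤ _ := by gcongr
  · refine ⟨0, fun x hx => ?_⟩
    refine le_trans ?_ (le_abs_self _)
    have hx2 : x ^ 2 ≤ 10 := by nlinarith [hx.1, hx.2]
    have hc1 := two_mul_sq_le_one_sub_cos (x := x) (by rw [abs_of_nonneg hx.1]; exact hx.2)
    have hc2 : x ^ 2 / 5 ≤ 1 - Real.cos x := by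
      refine le_trans ?_ hc1
      have : (2 : ℝ) / 10 ≤ 2 / π ^ 2 := by gcongr
      nlinarith [sq_nonneg x]
    rcases le_total 0 (Real.cos x) with h0 | h0
    · nlinarith [mul_le_mul_of_nonneg_right h.le h0]
    · nlinarith [mul_nonneg hR (neg_nonneg.2 h0)]

lemma integrable_inv_one_add_mul_sq {a : ℝ} (ha : a ≠ 0) (b : ℝ) :
    Integrable fun x : ℝ => (1 + (a * (x - b)) ^ 2)⁻¹ :=
  (integrable_inv_one_add_sq.comp_mul_left' ha).comp_sub_right b

lemma integral_inv_one_add_mul_sq {a : ℝ} (ha : 0 < a) (b : ℝ) :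
    ∫ x : ℝ, (1 + (a * (x - b)) ^ 2)⁻¹ = π / a := by
  rw [integral_sub_right_eq_self (fun x : ℝ => (1 + (a * x) ^ 2)⁻¹) b,
    Measure.integral_comp_mul_left (fun x : ℝ => (1 + x ^ 2)⁻¹) a, integral_univ_inv_one_add_sq,
    abs_of_pos (inv_pos.2 ha), smul_eq_mul, inv_mul_eq_div]

lemma integral_inv_one_add_phs_le {c lam : ℝ} (hc : 1 / 4 ≤ c) (hl : 0 < lam) (v : ℝ × ℝ) :
    ∫ θ in Ioc (-π) π, (1 + lam * |phs c v θ|)⁻¹ ≤ 2 * (π / √(lam / 60)) := by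
  set w : ℂ := ⟨v.1, v.2⟩ with hw
  set R : ℝ := ‖w‖
  set α := w.arg
  have h1 : v.1 = R * Real.cos α := (Complex.norm_mul_cos_arg w).symm
  have h2 : v.2 = R * Real.sin α := (Complex.norm_mul_sin_arg w).symm
  set G : ℝ → ℝ := fun x => (1 + lam * |c - R * Real.cos x|)⁻¹ with hG
  have hGc : Continuous G := by
    refine Continuous.inv₀ (by fun_prop) fun x => ?_
    positivity
  have hGper : Function.Periodic G (2 * π) := fun x => by simp [hG]
  have e : ∫ θ in Ioc (-π) π, (1 + lam * |phs c v θ|)⁻¹ = ∫ x in Ioc (-π) π, G x := by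
    have hle : -π ≤ π := by linarith [Real.pi_pos]
    rw [← intervalIntegral.integral_of_le hle, ← intervalIntegral.integral_of_le hle]
    have h3 : ∀ θ, (1 + lam * |phs c v θ|)⁻¹ = G (θ - α) := fun θ => by
      simp only [hG, phs, h1, h2, Real.cos_sub]
      congr 4
      ring
    simp_rw [h3]
    rw [intervalIntegral.integral_comp_sub_right]
    have h4 := hGper.intervalIntegral_add_eq (-π - α) (-π)
    have h5 : -π - α + 2 * π = π - α := by ring
    have h6 : -π + 2 * π = π := by ring
    rwa [h5, h6] at h4
  obtain ⟨θ₀, hθ₀⟩ := exists_sub_mul_cos_ge hc (norm_nonneg w)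
  have ha : 0 < √(lam / 60) := Real.sqrt_pos.2 (by positivity)
  have hsq : ∀ y : ℝ, (√(lam / 60) * y) ^ 2 = lam * (y ^ 2 / 60) := fun y => by
    rw [mul_pow, Real.sq_sqrt (by positivity)]; ring
  have i1 := integrable_inv_one_add_mul_sq ha.ne' θ₀
  have i2 := integrable_inv_one_add_mul_sq ha.ne' (-θ₀)
  rw [e]
  calc ∫ x in Ioc (-π) π, G x ≤ ∫ x in Ioc (-π) π, ((1 + (√(lam / 60) * (x - θ₀)) ^ 2)⁻¹ +
        (1 + (√(lam / 60) * (x - -θ₀)) ^ 2)⁻¹) := by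
        refine setIntegral_mono_on
          (hGc.continuousOn.integrableOn_compact isCompact_Icc |>.mono_set Ioc_subset_Icc_self)
          (i1.add i2).integrableOn measurableSet_Ioc fun x hx => ?_
        have p1 : 0 ≤ (1 + (√(lam / 60) * (x - θ₀)) ^ 2)⁻¹ := by positivity
        have p2 : 0 ≤ (1 + (√(lam / 60) * (x - -θ₀)) ^ 2)⁻¹ := by positivity
        rcases le_total 0 x with h0 | h0
        · have h3 := hθ₀ x ⟨h0, hx.2⟩
          refine le_trans ?_ (le_add_of_nonneg_right p2)
          rw [hsq]
          simp only [hG]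
          gcongr
        · have h3 := hθ₀ (-x) ⟨by linarith, by linarith [hx.1]⟩
          refine le_trans ?_ (le_add_of_nonneg_left p1)
          rw [hsq]
          simp only [hG]
          rw [Real.cos_neg] at h3
          have : (x - -θ₀) ^ 2 = (-x - θ₀) ^ 2 := by ring
          rw [this]
          gcongr
    _ ≤ ∫ x, ((1 + (√(lam / 60) * (x - θ₀)) ^ 2)⁻¹ + (1 + (√(lam / 60) * (x - -θ₀)) ^ 2)⁻¹) :=
        setIntegral_le_integral (i1.add i2) (.of_forall fun x => by
          simp only [Pi.zero_apply]; positivity)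
    _ = _ := by
        rw [integral_add i1 i2, integral_inv_one_add_mul_sq ha, integral_inv_one_add_mul_sq ha]
        ring

/-- `L^∞` bound for the rescaled kernel. -/
lemma norm_oscInt_le {f : ℝ → ℂ} {χ : ℝ → ℝ → ℝ} (hf : Rad f) (hχ : Adm χ) :
    ∃ C, 0 ≤ C ∧ ∀ M lam c, Par M lam c → ∀ v,
      ‖oscInt f (fun θ => (χ M θ : ℂ)) c lam v‖ ≤ C * lam ^ (-1/2 : ℝ) := by
  obtain ⟨D, hD, hD'⟩ := exists_decay hf
  obtain ⟨a, ha, ha'⟩ := hχ.exists_bound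
  refine ⟨D * a * (2 * (π * √60)), by positivity, fun M lam c hP v => ?_⟩
  have hl := hP.lam_pos
  have hχc := hχ.continuous hP.pos
  have hfc := hf.continuous
  have hc : Continuous fun z : ℝ × ℝ =>
      osc (lam * z.1 * phs c v z.2) * (f z.1 * (χ M z.2 : ℂ)) := by fun_prop
  have hpc : Continuous fun θ => (1 + lam * |phs c v θ|)⁻¹ :=
    Continuous.inv₀ (by fun_prop) fun x => by positivity
  unfold oscInt polMeas
  rw [integral_prod_symm _ (integrable_polMeas hc)]
  calc _ ≤ ∫ θ in Ioc (-π) π, D * a * (1 + lam * |phs c v θ|)⁻¹ := by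
        refine norm_integral_le_of_norm_le ((hpc.continuousOn.integrableOn_compact
          isCompact_Icc |>.mono_set Ioc_subset_Icc_self).const_mul _) (.of_forall fun θ => ?_)
        simp only
        have : ∫ u in Ioc (1/2 : ℝ) 3, osc (lam * u * phs c v θ) * (f u * (χ M θ : ℂ)) =
            (∫ u in Ioc (1/2 : ℝ) 3, osc (lam * u * phs c v θ) * f u) * (χ M θ : ℂ) := by
          rw [← integral_mul_const]
          exact integral_congr_ae (.of_forall fun u => by ring)
        rw [this, norm_mul, Complex.norm_real]
        calc _ ≤ D * (1 + lam * |phs c v θ|)⁻¹ * a := by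
              gcongr
              · exact hD' _ _ hl
              · exact ha' M θ hP.one_le
          _ = _ := by ring
    _ ≤ D * a * (2 * (π / √(lam / 60))) := by
        rw [integral_const_mul]
        gcongr
        exact integral_inv_one_add_phs_le hP.c_lb hl v
    _ = _ := by
        have h1 : lam ^ (-1/2 : ℝ) = (√lam)⁻¹ := by
          rw [Real.sqrt_eq_rpow, ← Real.rpow_neg hl.le]; norm_num
        rw [h1, Real.sqrt_div hl.le]
        have : 0 < √lam := Real.sqrt_pos.2 hl
        field_simp

open FourierTransform in
lemma exists_inverse_fourier {Q : ℝ × ℝ → ℂ} (hQ : ContDiff ℝ (⊤ : ℕ∞) Q)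
    (hc : HasCompactSupport Q) :
    ∃ κ : ℝ × ℝ → ℂ, Integrable κ ∧
      (∀ x, κ x = (((2 * π) ^ (-2 : ℤ) : ℝ) : ℂ) *
        ∫ ξ : ℝ × ℝ, osc (x.1 * ξ.1 + x.2 * ξ.2) * Q ξ) ∧
      ∀ η : ℝ × ℝ, ∫ x : ℝ × ℝ, osc (-(x.1 * η.1 + x.2 * η.2)) * κ x = Q η := by
  have hpi : (2 * π : ℝ) ≠ 0 := by positivity
  set e := Complex.equivRealProdCLM with he
  have hcS : HasCompactSupport (Q ∘ e) := hc.comp_homeomorph e.toHomeomorph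
  set S : SchwartzMap ℂ ℂ := hcS.toSchwartzMap (hQ.comp e.contDiff) with hS
  have hSv : ∀ z : ℂ, S z = Q (z.re, z.im) := fun z => rfl
  have hcv : ∀ F : ℂ → ℂ, ∫ z : ℂ, F z = ∫ x : ℝ × ℝ, F (⟨x.1, x.2⟩ : ℂ) := fun F =>
    ((Complex.volume_preserving_equiv_real_prod.symm).integral_comp
      Complex.measurableEquivRealProd.symm.measurableEmbedding F).symm
  have hin : ∀ z w : ℂ, inner ℝ z w = z.re * w.re + z.im * w.im := fun z w => by
    simp [Complex.inner, mul_comm]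
  set R : ℝ := -(2 * π)⁻¹ with hR
  have hR0 : R ≠ 0 := by simp [hR, Real.pi_ne_zero]
  refine ⟨fun x => (((2 * π) ^ (-2 : ℤ) : ℝ) : ℂ) * (𝓕 S) (R • (⟨x.1, x.2⟩ : ℂ)), ?_, fun x => ?_,
    fun η => ?_⟩
  · refine Integrable.const_mul ?_ _
    have h1 : Integrable (fun z : ℂ => (𝓕 S) (R • z)) :=
      ((𝓕 S).integrable (μ := volume)).comp_smul hR0
    exact ((Complex.volume_preserving_equiv_real_prod.symm).integrable_comp_emb
      Complex.measurableEquivRealProd.symm.measurableEmbedding).2 h1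
  · simp only
    congr 1
    rw [SchwartzMap.fourier_coe, Real.fourier_eq', hcv]
    refine integral_congr_ae (.of_forall fun ξ => ?_)
    simp only [hSv, hin, smul_eq_mul, osc]
    congr 2
    simp only [Complex.smul_re, Complex.smul_im, smul_eq_mul, hR]
    rw [mul_comm Complex.I]
    congr 2
    field_simp
    ring
  · have h1 : ∫ x : ℝ × ℝ, osc (-(x.1 * η.1 + x.2 * η.2)) *
        ((((2 * π) ^ (-2 : ℤ) : ℝ) : ℂ) * (𝓕 S) (R • (⟨x.1, x.2⟩ : ℂ))) =
        ∫ z : ℂ, (fun w : ℂ => osc (2 * π * (w.re * η.1 + w.im * η.2)) *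
        ((((2 * π) ^ (-2 : ℤ) : ℝ) : ℂ) * (𝓕 S) w)) (R • z) := by
      rw [hcv]
      refine integral_congr_ae (.of_forall fun x => ?_)
      simp only [Complex.smul_re, Complex.smul_im, smul_eq_mul, hR]
      congr 2
      field_simp
      ring
    have h5 := Measure.integral_comp_smul (volume : Measure ℂ) (fun w : ℂ =>
      osc (2 * π * (w.re * η.1 + w.im * η.2)) * ((((2 * π) ^ (-2 : ℤ) : ℝ) : ℂ) * (𝓕 S) w)) R
    refine h1.trans (h5.trans ?_)
    have h2 : S (⟨η.1, η.2⟩ : ℂ) = 𝓕⁻ (𝓕 S) (⟨η.1, η.2⟩ : ℂ) := by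
      rw [FourierTransform.fourierInv_fourier_eq]
    have h3 : ∫ w : ℂ, osc (2 * π * (w.re * η.1 + w.im * η.2)) *
        ((((2 * π) ^ (-2 : ℤ) : ℝ) : ℂ) * (𝓕 S) w) =
        (((2 * π) ^ (-2 : ℤ) : ℝ) : ℂ) * Q η := by
      have : Q η = S (⟨η.1, η.2⟩ : ℂ) := rfl
      rw [this, h2, SchwartzMap.fourierInv_coe, Real.fourierInv_eq', ← integral_const_mul]
      refine integral_congr_ae (.of_forall fun w => ?_)
      simp only [hin, smul_eq_mul, osc]
      rw [mul_comm Complex.I]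
      ring
    rw [h3, Complex.finrank_real_complex, Complex.real_smul, ← mul_assoc, ← Complex.ofReal_mul]
    have h4 : |(R ^ 2)⁻¹| * (2 * π) ^ (-2 : ℤ) = 1 := by
      rw [abs_of_nonneg (by positivity), hR]
      field_simp
    rw [h4]; simp

lemma ft2_eq (g : ℝ × ℝ → ℂ) (ξ : ℝ × ℝ) :
    ft2 g ξ = ∫ y : ℝ × ℝ, osc (-(y.1 * ξ.1 + y.2 * ξ.2)) * g y := by
  simp only [ft2, osc, Complex.ofReal_neg, neg_mul, mul_neg]

lemma integrable_osc_mul {X : Type*} [MeasurableSpace X] {μ : Measure X} {f : X → ℝ}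
    (hf : Measurable f) {g : X → ℂ} (hg : Integrable g μ) :
    Integrable (fun x => osc (f x) * g x) μ :=
  hg.bdd_mul (measurable_osc.comp hf).aestronglyMeasurable (c := 1)
    (.of_forall fun _ => (norm_osc _).le)

lemma integral_mul_ft2 {Q : ℝ × ℝ → ℂ} (hQ : Integrable Q) {g : ℝ × ℝ → ℂ} (hg : Integrable g)
    {f : ℝ × ℝ → ℝ} (hf : Measurable f) (a b : ℝ) :
    ∫ ξ : ℝ × ℝ, osc (a * ξ.1 + b * ξ.2 + f ξ) * Q ξ * ft2 g ξ =
      ∫ y : ℝ × ℝ, (∫ ξ : ℝ × ℝ, osc ((a - y.1) * ξ.1 + (b - y.2) * ξ.2 + f ξ) * Q ξ) * g y := by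
  have h1 : ∀ ξ y : ℝ × ℝ, osc (a * ξ.1 + b * ξ.2 + f ξ) * Q ξ *
      (osc (-(y.1 * ξ.1 + y.2 * ξ.2)) * g y) =
      osc ((a - y.1) * ξ.1 + (b - y.2) * ξ.2 + f ξ) * (Q ξ * g y) := fun ξ y => by
    have : (a - y.1) * ξ.1 + (b - y.2) * ξ.2 + f ξ =
      (a * ξ.1 + b * ξ.2 + f ξ) + -(y.1 * ξ.1 + y.2 * ξ.2) := by ring
    rw [this, osc_add _ (-(y.1 * ξ.1 + y.2 * ξ.2))]; ring
  simp_rw [ft2_eq, ← integral_const_mul, ← integral_mul_const, h1]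
  rw [integral_integral_swap]
  · simp only [mul_assoc]
  · exact integrable_osc_mul (by fun_prop) (hQ.mul_prod hg)

lemma ft2_multiplier {Q : ℝ × ℝ → ℂ} (hQ : ContDiff ℝ (⊤ : ℕ∞) Q)
    (hc : HasCompactSupport Q) {g : ℝ × ℝ → ℂ} (hg : Integrable g) (η : ℝ × ℝ) :
    ft2 (fun x => (((2 * π) ^ (-2 : ℤ) : ℝ) : ℂ) *
      ∫ ξ : ℝ × ℝ, osc (x.1 * ξ.1 + x.2 * ξ.2) * Q ξ * ft2 g ξ) η = Q η * ft2 g η := by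
  obtain ⟨κ, hκ, hκ1, hκ2⟩ := exists_inverse_fourier hQ hc
  have hQi : Integrable Q := hQ.continuous.integrable_of_hasCompactSupport hc
  have h1 : ∀ x : ℝ × ℝ, (((2 * π) ^ (-2 : ℤ) : ℝ) : ℂ) *
      ∫ ξ : ℝ × ℝ, osc (x.1 * ξ.1 + x.2 * ξ.2) * Q ξ * ft2 g ξ = ∫ y, g y * κ (x - y) := by
    intro x
    have := integral_mul_ft2 hQi hg (f := fun _ => 0) measurable_const x.1 x.2
    simp only [add_zero] at this
    rw [this, ← integral_const_mul]
    refine integral_congr_ae (.of_forall fun y => ?_)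
    simp only
    rw [hκ1]
    simp only [Prod.fst_sub, Prod.snd_sub]
    ring
  simp_rw [h1]
  rw [ft2_eq]
  simp_rw [← integral_const_mul]
  rw [integral_integral_swap]
  · have h2 : ∀ y : ℝ × ℝ, ∫ x : ℝ × ℝ, osc (-(x.1 * η.1 + x.2 * η.2)) * (g y * κ (x - y)) =
        Q η * (osc (-(y.1 * η.1 + y.2 * η.2)) * g y) := by
      intro y
      rw [← hκ2 η, ← integral_mul_const,
        ← integral_sub_right_eq_self (fun x : ℝ × ℝ => osc (-(x.1 * η.1 + x.2 * η.2)) * κ x *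
          (osc (-(y.1 * η.1 + y.2 * η.2)) * g y)) y]
      refine integral_congr_ae (.of_forall fun x => ?_)
      simp only [Prod.fst_sub, Prod.snd_sub]
      have : -(x.1 * η.1 + x.2 * η.2) = -((x.1 - y.1) * η.1 + (x.2 - y.2) * η.2) +
        -(y.1 * η.1 + y.2 * η.2) := by ring
      rw [this, osc_add]; ring
    simp_rw [h2, integral_const_mul, ft2_eq]
  · exact integrable_osc_mul (by fun_prop)
      (hg.convolution_integrand (ContinuousLinearMap.mul ℝ ℂ) hκ)

lemma ft2_eq_zero_of_not_integrable {g : ℝ × ℝ → ℂ} (hg : ¬ Integrable g) (ξ : ℝ × ℝ) :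
    ft2 g ξ = 0 := by
  rw [ft2_eq]
  refine integral_undef fun h => hg ?_
  have := integrable_osc_mul (f := fun y : ℝ × ℝ => y.1 * ξ.1 + y.2 * ξ.2) (by fun_prop) h
  refine this.congr (.of_forall fun y => ?_)
  simp only
  rw [← mul_assoc, ← osc_add, add_neg_cancel]
  simp [osc]

/-- Smooth real profiles supported in `[1 - 10⁻³, 2 + 10⁻³]`. -/
def IsBump (f : ℝ → ℝ) : Prop :=
  ContDiff ℝ (⊤ : ℕ∞) f ∧ ∀ u, u ∉ Icc (1 - 1/1000 : ℝ) (2 + 1/1000) → f u = 0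

lemma IsLPBump.isBump {φ : ℝ → ℝ} (h : IsLPBump φ) : IsBump φ :=
  ⟨h.1, fun _ hu => by_contra fun h0 => hu (h.2.2.1 h0)⟩

lemma IsBump.exists_bound {f : ℝ → ℝ} (hf : IsBump f) : ∃ C, 0 ≤ C ∧ ∀ u, |f u| ≤ C := by
  have hc : HasCompactSupport f := HasCompactSupport.intro isCompact_Icc hf.2
  obtain ⟨C, hC⟩ := hc.exists_bound_of_continuous hf.1.continuous
  exact ⟨C, (norm_nonneg _).trans (hC 0), hC⟩

lemma IsBump.rpow_mul {f : ℝ → ℝ} (hf : IsBump f) (a : ℝ) : IsBump fun u => u ^ a * f u := by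
  refine ⟨contDiff_iff_contDiffAt.2 fun u => ?_, fun u hu => by simp [hf.2 u hu]⟩
  rcases eq_or_ne u 0 with rfl | h0
  · have : (fun u => u ^ a * f u) =ᶠ[nhds 0] fun _ => 0 := by
      filter_upwards [isClosed_Icc.isOpen_compl.mem_nhds
        (show (0 : ℝ) ∈ (Icc (1 - 1/1000 : ℝ) (2 + 1/1000))ᶜ by
          simp only [mem_compl_iff, mem_Icc, not_and, not_le]; intro h; norm_num at h)] with x hx
      simp [hf.2 x hx]
    exact contDiffAt_const.congr_of_eventuallyEq this
  · exact (Real.contDiffAt_rpow_const_of_ne h0).mul hf.1.contDiffAt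

lemma IsBump.rad {f : ℝ → ℝ} (hf : IsBump f) : Rad fun u => (f u : ℂ) :=
  ⟨Complex.ofRealCLM.contDiff.comp hf.1, fun u hu => by simp [hf.2 u hu]⟩

lemma enorm2_nonneg (ξ : ℝ × ℝ) : 0 ≤ enorm2 ξ := Real.sqrt_nonneg _

lemma enorm2_sq (ξ : ℝ × ℝ) : enorm2 ξ ^ 2 = ξ.1 ^ 2 + ξ.2 ^ 2 :=
  Real.sq_sqrt (by positivity)

lemma continuous_enorm2 : Continuous enorm2 := by unfold enorm2; fun_prop

@[fun_prop]
lemma measurable_enorm2 : Measurable enorm2 := continuous_enorm2.measurable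

lemma abs_fst_le_enorm2 (ξ : ℝ × ℝ) : |ξ.1| ≤ enorm2 ξ :=
  Real.abs_le_sqrt (by nlinarith [sq_nonneg ξ.2])

lemma abs_snd_le_enorm2 (ξ : ℝ × ℝ) : |ξ.2| ≤ enorm2 ξ :=
  Real.abs_le_sqrt (by nlinarith [sq_nonneg ξ.1])

lemma enorm2_pos {ξ : ℝ × ℝ} (h : ξ ≠ 0) : 0 < enorm2 ξ := by
  refine (enorm2_nonneg ξ).lt_of_ne' fun h0 => h ?_
  exact Prod.ext (abs_nonpos_iff.1 (h0 ▸ abs_fst_le_enorm2 ξ))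
    (abs_nonpos_iff.1 (h0 ▸ abs_snd_le_enorm2 ξ))

lemma contDiffAt_enorm2 {ξ : ℝ × ℝ} (h : ξ ≠ 0) : ContDiffAt ℝ (⊤ : ℕ∞) enorm2 ξ := by
  refine ContDiffAt.sqrt (by fun_prop) ?_
  rw [← enorm2_sq]
  exact (pow_pos (enorm2_pos h) 2).ne'

/-- The frequency cutoff to `|ξ| ~ lam`, `1 + ξ₁/|ξ| ~ M⁻²`. -/
def cutoff (f h : ℝ → ℝ) (lam M : ℝ) (ξ : ℝ × ℝ) : ℝ :=
  f (lam⁻¹ * enorm2 ξ) * h (M ^ 2 * (ξ.1 / enorm2 ξ + 1))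

lemma cutoff_eq_zero {f h : ℝ → ℝ} (hf : IsBump f) {lam M : ℝ} {ξ : ℝ × ℝ}
    (hξ : lam⁻¹ * enorm2 ξ ∉ Icc (1 - 1/1000 : ℝ) (2 + 1/1000)) : cutoff f h lam M ξ = 0 := by
  simp [cutoff, hf.2 _ hξ]

lemma contDiff_cutoff {f h : ℝ → ℝ} (hf : IsBump f) (hh : IsBump h) (lam M : ℝ) :
    ContDiff ℝ (⊤ : ℕ∞) (cutoff f h lam M) := by
  refine contDiff_iff_contDiffAt.2 fun ξ => ?_
  rcases eq_or_ne ξ 0 with rfl | h0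
  · have h1 : Filter.Tendsto (fun ξ => lam⁻¹ * enorm2 ξ) (nhds 0) (nhds 0) := by
      have : Continuous fun ξ => lam⁻¹ * enorm2 ξ := continuous_const.mul continuous_enorm2
      simpa [enorm2] using this.tendsto 0
    have : cutoff f h lam M =ᶠ[nhds 0] fun _ => 0 := by
      filter_upwards [h1.eventually (gt_mem_nhds (show (0 : ℝ) < 1 - 1/1000 by norm_num))] with x hx
      exact cutoff_eq_zero hf fun h => absurd h.1 (not_le.2 hx)
    exact contDiffAt_const.congr_of_eventuallyEq this
  · have h1 := contDiffAt_enorm2 h0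
    refine ContDiffAt.mul (hf.1.contDiffAt.comp ξ (contDiffAt_const.mul h1))
      (hh.1.contDiffAt.comp ξ (contDiffAt_const.mul (ContDiffAt.add ?_ contDiffAt_const)))
    exact contDiffAt_fst.div h1 (enorm2_pos h0).ne'

lemma hasCompactSupport_cutoff {f h : ℝ → ℝ} (hf : IsBump f) {lam : ℝ} (hl : 0 < lam) (M : ℝ) :
    HasCompactSupport (cutoff f h lam M) := by
  refine HasCompactSupport.intro
    (K := Icc (-(3 * lam)) (3 * lam) ×ˢ Icc (-(3 * lam)) (3 * lam))
    (isCompact_Icc.prod isCompact_Icc) fun ξ hξ => cutoff_eq_zero hf fun h => hξ ?_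
  have h2 : enorm2 ξ ≤ 3 * lam := by
    have := h.2
    rw [inv_mul_le_iff₀ hl] at this
    linarith
  exact ⟨abs_le.1 ((abs_fst_le_enorm2 ξ).trans h2), abs_le.1 ((abs_snd_le_enorm2 ξ).trans h2)⟩

lemma contDiff_ofReal_cutoff {f h : ℝ → ℝ} (hf : IsBump f) (hh : IsBump h) (lam M : ℝ) :
    ContDiff ℝ (⊤ : ℕ∞) fun ξ => (cutoff f h lam M ξ : ℂ) :=
  Complex.ofRealCLM.contDiff.comp (contDiff_cutoff hf hh lam M)

lemma hasCompactSupport_ofReal_cutoff {f h : ℝ → ℝ} (hf : IsBump f) {lam : ℝ} (hl : 0 < lam)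
    (M : ℝ) : HasCompactSupport fun ξ => (cutoff f h lam M ξ : ℂ) :=
  (hasCompactSupport_cutoff hf hl M).comp_left Complex.ofReal_zero

lemma integrable_cutoff {f h : ℝ → ℝ} (hf : IsBump f) (hh : IsBump h) {lam : ℝ} (hl : 0 < lam)
    (M : ℝ) : Integrable fun ξ => (cutoff f h lam M ξ : ℂ) :=
  (contDiff_ofReal_cutoff hf hh lam M).continuous.integrable_of_hasCompactSupport
    (hasCompactSupport_ofReal_cutoff hf hl M)

lemma integral_osc_cutoff {f h : ℝ → ℝ} (hf : IsBump f) {lam : ℝ} (hl : 0 < lam) (M c : ℝ)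
    (v : ℝ × ℝ) :
    ∫ ξ : ℝ × ℝ, osc (v.1 * ξ.1 + v.2 * ξ.2 + c * enorm2 ξ) * (cutoff f h lam M ξ : ℂ) =
      (lam ^ 2 : ℝ) * oscInt (fun u => ((u * f u : ℝ) : ℂ))
        (fun θ => (h (M ^ 2 * (1 - Real.cos θ)) : ℂ)) c lam v := by
  set F : ℝ × ℝ → ℂ := fun ξ =>
    osc (v.1 * ξ.1 + v.2 * ξ.2 + c * enorm2 ξ) * (cutoff f h lam M ξ : ℂ) with hF
  have h1 := Measure.integral_comp_smul (volume : Measure (ℝ × ℝ)) F (-lam)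
  have h2 : |(((-lam) ^ Module.finrank ℝ (ℝ × ℝ))⁻¹)| = (lam ^ 2)⁻¹ := by
    simp
  rw [h2] at h1
  have h3 : ∫ ξ, F ξ = (lam ^ 2 : ℝ) * ∫ x, F (-lam • x) := by
    rw [h1, Complex.real_smul, ← mul_assoc, ← Complex.ofReal_mul, mul_inv_cancel₀ (by positivity)]
    simp
  rw [h3]
  congr 1
  rw [← integral_comp_polarCoord_symm]
  have h4 : ∀ p ∈ polarCoord.target, p.1 • F (-lam • polarCoord.symm p) =
      osc (lam * p.1 * phs c v p.2) *
        (((p.1 * f p.1 : ℝ) : ℂ) * (h (M ^ 2 * (1 - Real.cos p.2)) : ℂ)) := by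
    intro p hp
    have hp1 : 0 < p.1 := hp.1
    have he : enorm2 (-lam • polarCoord.symm p) = lam * p.1 := by
      rw [enorm2, Real.sqrt_eq_iff_mul_self_eq_of_pos (by positivity)]
      simp only [polarCoord_symm_apply, Prod.smul_fst, Prod.smul_snd, smul_eq_mul]
      linear_combination (-(lam ^ 2 * p.1 ^ 2)) * Real.sin_sq_add_cos_sq p.2
    rw [hF]
    simp only [cutoff, he]
    simp only [polarCoord_symm_apply, Prod.smul_fst, Prod.smul_snd, smul_eq_mul,
      Complex.real_smul]
    have e1 : lam⁻¹ * (lam * p.1) = p.1 := by field_simp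
    have e2 : -lam * (p.1 * Real.cos p.2) / (lam * p.1) + 1 = 1 - Real.cos p.2 := by
      field_simp; ring
    have e3 : v.1 * (-lam * (p.1 * Real.cos p.2)) + v.2 * (-lam * (p.1 * Real.sin p.2)) +
        c * (lam * p.1) = lam * p.1 * phs c v p.2 := by
      simp only [phs]; ring
    rw [e1, e2, e3]
    push_cast
    ring
  rw [setIntegral_congr_fun polarCoord.open_target.measurableSet h4]
  have h5 : polMeas = volume.restrict (Ioc (1/2 : ℝ) 3 ×ˢ Ioc (-π) π) := by
    rw [polMeas, Measure.prod_restrict, Measure.volume_eq_prod]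
  have h6 : (polarCoord.target : Set (ℝ × ℝ)) =ᵐ[volume] (Ioi (0 : ℝ) ×ˢ Ioc (-π) π) := by
    rw [polarCoord_target, Measure.volume_eq_prod]
    exact Measure.set_prod_ae_eq (Filter.EventuallyEq.refl _ _) Ioo_ae_eq_Ioc
  rw [oscInt, h5, Measure.restrict_congr_set h6]
  refine setIntegral_eq_of_subset_of_forall_sdiff_eq_zero (measurableSet_Ioi.prod measurableSet_Ioc)
    (prod_mono (fun x hx => lt_trans (by norm_num) hx.1) le_rfl) fun p hp => ?_
  have : p.1 ∉ Icc (1 - 1/1000 : ℝ) (2 + 1/1000) := fun h =>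
    hp.2 ⟨⟨by linarith [h.1], by linarith [h.2]⟩, hp.1.2⟩
  simp [hf.2 _ this]

lemma continuous_integral_osc_mul {X : Type*} [TopologicalSpace X] [FirstCountableTopology X]
    {h : ℝ × ℝ → ℂ} (hh : Integrable h) {Θ : X → ℝ × ℝ → ℝ}
    (h1 : ∀ x, Measurable (Θ x)) (h2 : ∀ ξ, Continuous fun x => Θ x ξ) :
    Continuous fun x => ∫ ξ, osc (Θ x ξ) * h ξ := by
  refine continuous_of_dominated (bound := fun ξ => ‖h ξ‖)
    (fun x => (integrable_osc_mul (h1 x) hh).1) (fun x => .of_forall fun ξ => ?_) hh.norm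
    (.of_forall fun ξ => (continuous_osc.comp (h2 ξ)).mul continuous_const)
  rw [norm_mul, norm_osc, one_mul]

lemma continuous_ft2 {g : ℝ × ℝ → ℂ} (hg : Integrable g) : Continuous (ft2 g) := by
  have : ft2 g = fun ξ => ∫ y : ℝ × ℝ, osc (-(y.1 * ξ.1 + y.2 * ξ.2)) * g y := funext (ft2_eq g)
  rw [this]
  exact continuous_integral_osc_mul hg (fun x => by fun_prop) fun y => by fun_prop

lemma lintegral_ft2_sq_le {g : ℝ × ℝ → ℂ} (hg : Integrable g) :
    ∫⁻ ξ, ‖ft2 g ξ‖ₑ ^ 2 ≤ ENNReal.ofReal ((2 * π) ^ 2) * ∫⁻ y, ‖g y‖ₑ ^ 2 := by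
  have h := lintegral_oscillatory_sq_le volume (Φ := fun y : ℝ × ℝ => -y) measurable_neg hg
    (M := 1) (fun f hf => by rw [lintegral_neg_eq_self, one_mul])
  rw [mul_one] at h
  refine le_trans (le_of_eq (lintegral_congr fun ξ => ?_)) h
  rw [ft2_eq]
  congr 2
  refine integral_congr_ae (.of_forall fun y => ?_)
  simp only [Prod.fst_neg, Prod.snd_neg]
  congr 2
  ring

/-- The oscillatory integral defining `𝒰_t` on a localized frequency region; `z = ((r, x₃), t)`. -/
def locU (f h : ℝ → ℝ) (lam M : ℝ) (g : ℝ × ℝ → ℂ) (z : (ℝ × ℝ) × ℝ) : ℂ :=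
  ∫ ξ : ℝ × ℝ, osc ((z.1.1 ^ 2 + z.2 ^ 2) / 2 * ξ.1 + z.1.2 * ξ.2 + z.2 * z.1.1 * enorm2 ξ) *
    ((cutoff f h lam M ξ : ℂ) * ft2 g ξ)

lemma integrable_cutoff_mul_ft2 {f h : ℝ → ℝ} (hf : IsBump f) (hh : IsBump h) {lam : ℝ}
    (hl : 0 < lam) (M : ℝ) {g : ℝ × ℝ → ℂ} (hg : Integrable g) :
    Integrable fun ξ => (cutoff f h lam M ξ : ℂ) * ft2 g ξ :=
  ((contDiff_ofReal_cutoff hf hh lam M).continuous.mul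
    (continuous_ft2 hg)).integrable_of_hasCompactSupport
    (hasCompactSupport_ofReal_cutoff hf hl M).mul_right

lemma continuous_locU {f h : ℝ → ℝ} (hf : IsBump f) (hh : IsBump h) {lam : ℝ}
    (hl : 0 < lam) (M : ℝ) {g : ℝ × ℝ → ℂ} (hg : Integrable g) :
    Continuous (locU f h lam M g) :=
  continuous_integral_osc_mul (integrable_cutoff_mul_ft2 hf hh hl M hg) (fun x => by fun_prop)
    fun y => by fun_prop

/-- The frequency region `1 + ξ₁/|ξ| ≥ a`. -/
def coneRegion (a : ℝ) : Set (ℝ × ℝ) := {ξ | 0 < enorm2 ξ ∧ a ≤ ξ.1 / enorm2 ξ + 1}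

lemma measurableSet_coneRegion (a : ℝ) : MeasurableSet (coneRegion a) :=
  (measurableSet_lt measurable_const measurable_enorm2).inter
    (measurableSet_le measurable_const
      ((measurable_fst.div measurable_enorm2).add measurable_const))

lemma lintegral_coneRegion_le {a : ℝ} (ha : 0 < a) {f : ℝ × ℝ → ℝ≥0∞} (hf : Measurable f) :
    ∫⁻ ξ in coneRegion a, f (ξ.1 + enorm2 ξ, ξ.2) ≤ ENNReal.ofReal a⁻¹ * ∫⁻ x, f x := by
  have hpos : ∀ x b : ℝ, (x, b) ∈ coneRegion a → 0 < x + enorm2 (x, b) := fun x b hx => by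
    have h1 : 0 < enorm2 (x, b) := hx.1
    have h2 : a ≤ x / enorm2 (x, b) + 1 := hx.2
    have h3 : 0 < (x / enorm2 (x, b) + 1) * enorm2 (x, b) := mul_pos (ha.trans_le h2) h1
    rwa [add_mul, div_mul_cancel₀ _ h1.ne', one_mul] at h3
  have hΦ : Measurable fun ξ : ℝ × ℝ => f (ξ.1 + enorm2 ξ, ξ.2) := hf.comp (by fun_prop)
  rw [← lintegral_indicator (measurableSet_coneRegion a), Measure.volume_eq_prod,
    lintegral_prod_symm' _ (hΦ.indicator (measurableSet_coneRegion a)),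
    lintegral_prod_symm' _ hf, ← lintegral_const_mul' _ _ ENNReal.ofReal_ne_top]
  refine lintegral_mono fun b => ?_
  set s : Set ℝ := {x | (x, b) ∈ coneRegion a} with hs
  have hsm : MeasurableSet s :=
    (measurable_id.prodMk measurable_const) (measurableSet_coneRegion a)
  have h1 : ∀ x, (coneRegion a).indicator (fun ξ : ℝ × ℝ => f (ξ.1 + enorm2 ξ, ξ.2)) (x, b) =
      s.indicator (fun x => f (x + enorm2 (x, b), b)) x := fun x => rfl
  simp only [h1]
  rw [lintegral_indicator hsm]
  refine lintegral_comp_le_of_deriv_ge hsm (ψ := fun x => x + enorm2 (x, b))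
    (ψ' := fun x => x / enorm2 (x, b) + 1) (fun x hx => ?_) (fun x hx y hy hxy => ?_)
    (inv_pos.2 ha) (fun x hx => ?_) (fun u => f (u, b))
  · have h2 : x ^ 2 + b ^ 2 ≠ 0 := by
      have := enorm2_sq (x, b)
      simp only at this
      rw [← this]
      exact (pow_pos hx.1 2).ne'
    have h3 := (((hasDerivAt_id' x).fun_pow 2).add_const (b ^ 2)).sqrt h2
    refine ((hasDerivAt_id x).add h3).congr_deriv ?_
    have h4 : enorm2 (x, b) ≠ 0 := hx.1.ne'
    simp only [enorm2] at h4 ⊢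
    field_simp
    simp
    ring
  · have hx1 := hpos x b hx
    have hxs := enorm2_sq (x, b)
    have hys := enorm2_sq (y, b)
    simp only at hxy hxs hys
    have h5 : (x + enorm2 (x, b)) * (x - y) = 0 := by
      have h6 : enorm2 (y, b) = x + enorm2 (x, b) - y := by linarith
      rw [h6] at hys
      nlinarith
    rcases mul_eq_zero.1 h5 with h | h
    · exact absurd h hx1.ne'
    · linarith
  · rw [inv_inv]
    exact hx.2.trans (le_abs_self _)

lemma cutoff_eq_zero_of_notMem {f h : ℝ → ℝ} (hf : IsBump f) (hh : IsBump h) {lam M : ℝ}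
    (hM : 0 < M) {ξ : ℝ × ℝ} (hξ : ξ ∉ coneRegion (999 / 1000 * (M ^ 2)⁻¹)) :
    cutoff f h lam M ξ = 0 := by
  by_cases h1 : 0 < enorm2 ξ
  · have h2 : M ^ 2 * (ξ.1 / enorm2 ξ + 1) ∉ Icc (1 - 1/1000 : ℝ) (2 + 1/1000) := fun h2 => by
      refine hξ ⟨h1, ?_⟩
      have h3 := h2.1
      rw [mul_inv_le_iff₀ (by positivity)]
      linarith
    simp [cutoff, hh.2 _ h2]
  · refine cutoff_eq_zero hf fun h => ?_
    have h3 : enorm2 ξ = 0 := le_antisymm (not_lt.1 h1) (enorm2_nonneg ξ)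
    have := h.1
    rw [h3, mul_zero] at this
    norm_num at this

lemma lintegral_cone_oscillatory_sq_le {a : ℝ} (ha : 0 < a) {h : ℝ × ℝ → ℂ} (hh : Integrable h)
    (h0 : ∀ ξ, ξ ∉ coneRegion a → h ξ = 0) :
    ∫⁻ x : ℝ × ℝ, ‖∫ ξ : ℝ × ℝ, osc (x.1 * (ξ.1 + enorm2 ξ) + x.2 * ξ.2) * h ξ‖ₑ ^ 2 ≤
      ENNReal.ofReal ((2 * π) ^ 2) * ENNReal.ofReal a⁻¹ * ∫⁻ ξ, ‖h ξ‖ₑ ^ 2 := by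
  have h1 := lintegral_oscillatory_sq_le (volume.restrict (coneRegion a))
    (Φ := fun ξ : ℝ × ℝ => (ξ.1 + enorm2 ξ, ξ.2)) (by fun_prop) hh.restrict
    fun f hf => lintegral_coneRegion_le ha hf
  refine le_trans (le_of_eq (lintegral_congr fun x => ?_)) (h1.trans ?_)
  · congr 2
    refine (setIntegral_eq_integral_of_forall_compl_eq_zero fun ξ hξ => ?_).symm
    simp [h0 ξ hξ]
  · gcongr
    exact Measure.restrict_le_self

/-- The part of space-time near the singular set `r = t`. -/
def tube (δ : ℝ) : Set ((ℝ × ℝ) × ℝ) :=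
  {z | z.2 ∈ Icc (1 : ℝ) 2 ∧ |z.1.1 - z.2| ≤ δ ∧ 0 < z.1.1}

lemma measurableSet_tube (δ : ℝ) : MeasurableSet (tube δ) :=
  (measurable_snd measurableSet_Icc).inter
    ((measurableSet_le (f := fun z : (ℝ × ℝ) × ℝ => |z.1.1 - z.2|) (by fun_prop)
      measurable_const).inter
      (measurableSet_lt (g := fun z : (ℝ × ℝ) × ℝ => z.1.1) measurable_const (by fun_prop)))

lemma lintegral_tube_locU_sq_le {f h : ℝ → ℝ} (hf : IsBump f) (hh : IsBump h) {lam M δ : ℝ}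
    (hl : 0 < lam) (hM : 0 < M) {g : ℝ × ℝ → ℂ} (hg : Integrable g) :
    ∫⁻ z in tube δ, ‖locU f h lam M g z‖ₑ ^ 2 ≤ ENNReal.ofReal (2 * δ) *
      (ENNReal.ofReal ((2 * π) ^ 2) * ENNReal.ofReal (999 / 1000 * (M ^ 2)⁻¹)⁻¹ *
        ∫⁻ ξ, ‖(cutoff f h lam M ξ : ℂ) * ft2 g ξ‖ₑ ^ 2) := by
  set K := ENNReal.ofReal ((2 * π) ^ 2) * ENNReal.ofReal (999 / 1000 * (M ^ 2)⁻¹)⁻¹ *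
        ∫⁻ ξ, ‖(cutoff f h lam M ξ : ℂ) * ft2 g ξ‖ₑ ^ 2 with hK
  have hFi := integrable_cutoff_mul_ft2 hf hh hl M hg
  set H : (ℝ × ℝ) × ℝ → ℝ≥0∞ := (tube δ).indicator fun z => ‖locU f h lam M g z‖ₑ ^ 2 with hH
  have hHm : Measurable H :=
    ((continuous_locU hf hh hl M hg).measurable.enorm.pow_const 2).indicator (measurableSet_tube δ)
  have key : ∀ w : ℝ, ∫⁻ t : ℝ, ∫⁻ x : ℝ, H ((t + w, x), t) ≤
      (Icc (-δ) δ).indicator (fun _ => K) w := by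
    intro w
    by_cases hw : w ∈ Icc (-δ) δ
    swap
    · rw [indicator_of_notMem hw]
      refine le_of_eq ?_
      have : ∀ t x : ℝ, H ((t + w, x), t) = 0 := fun t x =>
        indicator_of_notMem (fun hz => hw (by simpa [abs_le] using hz.2.1)) _
      simp [this]
    rw [indicator_of_mem hw]
    set s : Set ℝ := Icc 1 2 ∩ {t | 0 < t + w} with hs
    have hsm : MeasurableSet s :=
      measurableSet_Icc.inter (measurableSet_lt measurable_const (by fun_prop))
    set q : ℝ × ℝ → ℂ := fun ξ => osc (w ^ 2 / 2 * ξ.1) *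
      ((cutoff f h lam M ξ : ℂ) * ft2 g ξ) with hq
    have hqi : Integrable q := integrable_osc_mul (by fun_prop) hFi
    set G : ℝ × ℝ → ℝ≥0∞ := fun x =>
      ‖∫ ξ : ℝ × ℝ, osc (x.1 * (ξ.1 + enorm2 ξ) + x.2 * ξ.2) * q ξ‖ₑ ^ 2 with hG
    have hGm : Measurable G := by
      refine Measurable.pow_const (Measurable.enorm ?_) 2
      exact (continuous_integral_osc_mul hqi (fun x => by fun_prop)
        fun y => by fun_prop).measurable
    have hHG : ∀ t x : ℝ, H ((t + w, x), t) ≤ s.indicator (fun t => G (t * (t + w), x)) t := by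
      intro t x
      by_cases hz : ((t + w, x), t) ∈ tube δ
      · have hts : t ∈ s := ⟨hz.1, hz.2.2⟩
        rw [indicator_of_mem hts, hH, indicator_of_mem hz]
        refine le_of_eq ?_
        simp only [locU, hG, hq]
        congr 2
        refine integral_congr_ae (.of_forall fun ξ => ?_)
        simp only
        rw [← mul_assoc (osc _) (osc _), ← osc_add]
        congr 2
        ring
      · rw [hH, indicator_of_notMem hz]
        exact zero_le
    calc ∫⁻ t : ℝ, ∫⁻ x : ℝ, H ((t + w, x), t)
        ≤ ∫⁻ t : ℝ, s.indicator (fun t => ∫⁻ x : ℝ, G (t * (t + w), x)) t := by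
          refine lintegral_mono fun t => ?_
          by_cases ht : t ∈ s
          · rw [indicator_of_mem ht]
            refine lintegral_mono fun x => (hHG t x).trans ?_
            rw [indicator_of_mem ht]
          · rw [indicator_of_notMem ht]
            refine le_of_eq ?_
            have : ∀ x, H ((t + w, x), t) = 0 := fun x =>
              le_antisymm ((hHG t x).trans (by rw [indicator_of_notMem ht])) zero_le
            simp [this]
      _ = ∫⁻ t in s, ∫⁻ x : ℝ, G (t * (t + w), x) := lintegral_indicator hsm _
      _ ≤ ENNReal.ofReal 1 * ∫⁻ u : ℝ, ∫⁻ x : ℝ, G (u, x) := by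
          refine lintegral_comp_le_of_deriv_ge hsm (ψ := fun t => t * (t + w))
            (ψ' := fun t => 2 * t + w) (fun t _ => ?_) (fun t ht t' ht' htt => ?_) one_pos
            (fun t ht => ?_) (fun u => ∫⁻ x : ℝ, G (u, x))
          · refine ((hasDerivAt_id t).mul ((hasDerivAt_id t).add_const w)).congr_deriv ?_
            simp only [id]
            ring
          · have h1 : (t - t') * (t + t' + w) = 0 := by
              simp only at htt
              linear_combination htt
            have h2 : 0 < t + w := ht.2
            rcases mul_eq_zero.1 h1 with h | h
            · linarith
            · linarith [ht'.1.1]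
          · have h2 : 0 < t + w := ht.2
            rw [inv_one]
            exact le_trans (by linarith [ht.1.1]) (le_abs_self _)
      _ = ∫⁻ x : ℝ × ℝ, G x := by
          rw [ENNReal.ofReal_one, one_mul, Measure.volume_eq_prod,
            lintegral_prod _ hGm.aemeasurable]
      _ ≤ _ := lintegral_cone_oscillatory_sq_le (a := 999 / 1000 * (M ^ 2)⁻¹)
          (by positivity) hqi fun ξ hξ => by
          simp [hq, cutoff_eq_zero_of_notMem hf hh hM hξ]
      _ = K := by
          rw [hK]
          congr 1
          refine lintegral_congr fun ξ => ?_
          rw [hq, enorm_mul (osc _), enorm_osc, one_mul]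
  calc ∫⁻ z in tube δ, ‖locU f h lam M g z‖ₑ ^ 2 = ∫⁻ z, H z :=
        (lintegral_indicator (measurableSet_tube δ) _).symm
    _ = ∫⁻ t : ℝ, ∫⁻ r : ℝ, ∫⁻ x : ℝ, H ((r, x), t) := by
        rw [Measure.volume_eq_prod, lintegral_prod_symm' _ hHm]
        refine lintegral_congr fun t => ?_
        have : Measurable fun y : ℝ × ℝ => H (y, t) := hHm.comp (by fun_prop)
        rw [Measure.volume_eq_prod, lintegral_prod _ this.aemeasurable]
    _ = ∫⁻ t : ℝ, ∫⁻ w : ℝ, ∫⁻ x : ℝ, H ((t + w, x), t) := by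
        refine lintegral_congr fun t => ?_
        exact (lintegral_add_left_eq_self (fun r => ∫⁻ x : ℝ, H ((r, x), t)) t).symm
    _ = ∫⁻ w : ℝ, ∫⁻ t : ℝ, ∫⁻ x : ℝ, H ((t + w, x), t) := by
        refine lintegral_lintegral_swap (Measurable.aemeasurable ?_)
        refine Measurable.lintegral_prod_right'
          (f := fun p : (ℝ × ℝ) × ℝ => H ((p.1.1 + p.1.2, p.2), p.1.1)) ?_
        exact hHm.comp (by fun_prop)
    _ ≤ ∫⁻ w : ℝ, (Icc (-δ) δ).indicator (fun _ => K) w := lintegral_mono key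
    _ = _ := by
        rw [lintegral_indicator_const measurableSet_Icc, Real.volume_Icc, mul_comm]
        congr 2
        ring

lemma neg_one_le_fst_div_enorm2 (ξ : ℝ × ℝ) : -1 ≤ ξ.1 / enorm2 ξ := by
  rcases (enorm2_nonneg ξ).eq_or_lt with h | h
  · rw [← h, div_zero]; norm_num
  · rw [le_div_iff₀ h]
    linarith [neg_le_of_abs_le (abs_fst_le_enorm2 ξ)]

lemma mul_psiA_eq_cutoff (φ : ℝ → ℝ) (j m : ℤ) (ξ : ℝ × ℝ) :
    φ ((2:ℝ) ^ (-j) * enorm2 ξ) * psiA φ m ξ =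
      cutoff φ φ ((2:ℝ) ^ (j:ℝ)) ((2:ℝ) ^ ((m:ℝ) / 2)) ξ := by
  have h1 : ((2:ℝ) ^ ((m:ℝ) / 2)) ^ 2 = (2:ℝ) ^ m := by
    rw [← Real.rpow_natCast, ← Real.rpow_mul (by norm_num), ← Real.rpow_intCast]
    congr 1
    push_cast
    ring
  rw [cutoff, psiA, abs_of_nonneg (by linarith [neg_one_le_fst_div_enorm2 ξ]), h1,
    Real.rpow_intCast, zpow_neg]

lemma ft2_projJM {φ : ℝ → ℝ} (hφ : IsBump φ) (j m : ℤ) {g : ℝ × ℝ → ℂ} (hg : Integrable g)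
    (η : ℝ × ℝ) : ft2 (projJM φ j m g) η =
      (cutoff φ φ ((2:ℝ) ^ (j:ℝ)) ((2:ℝ) ^ ((m:ℝ) / 2)) η : ℂ) * ft2 g η := by
  have h : projJM φ j m g = fun x => (((2 * π) ^ (-2 : ℤ) : ℝ) : ℂ) *
      ∫ ξ : ℝ × ℝ, osc (x.1 * ξ.1 + x.2 * ξ.2) *
        (cutoff φ φ ((2:ℝ) ^ (j:ℝ)) ((2:ℝ) ^ ((m:ℝ) / 2)) ξ : ℂ) * ft2 g ξ := by
    funext x
    simp only [projJM, mul_psiA_eq_cutoff, osc]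
  rw [h]
  exact ft2_multiplier (contDiff_ofReal_cutoff hφ hφ _ _)
    (hasCompactSupport_ofReal_cutoff hφ (by positivity) _) hg η

lemma Uop_projJM {φ : ℝ → ℝ} (hφ : IsBump φ) (j m : ℤ) {g : ℝ × ℝ → ℂ} (hg : Integrable g)
    (z : (ℝ × ℝ) × ℝ) : Uop (projJM φ j m g) z.2 z.1.1 z.1.2 =
      ((|z.1.1| ^ (-(1:ℝ)/2) * ((2:ℝ) ^ (j:ℝ)) ^ (-(1:ℝ)/2) : ℝ) : ℂ) *
        locU (fun u => u ^ (-(1:ℝ)/2) * φ u) φ ((2:ℝ) ^ (j:ℝ)) ((2:ℝ) ^ ((m:ℝ) / 2)) g z := by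
  rw [Uop, locU, ← integral_const_mul]
  refine integral_congr_ae (.of_forall fun ξ => ?_)
  simp only [ft2_projJM hφ j m hg, cutoff, osc]
  set lam := (2:ℝ) ^ (j:ℝ) with hlam
  have hl : 0 < lam := by positivity
  have h1 : (|z.1.1| * enorm2 ξ) ^ (-(1:ℝ)/2) =
      |z.1.1| ^ (-(1:ℝ)/2) * lam ^ (-(1:ℝ)/2) * (lam⁻¹ * enorm2 ξ) ^ (-(1:ℝ)/2) := by
    rw [Real.mul_rpow (abs_nonneg _) (enorm2_nonneg ξ), mul_assoc, ← Real.mul_rpow hl.le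
      (mul_nonneg (inv_nonneg.2 hl.le) (enorm2_nonneg ξ)), mul_inv_cancel_left₀ hl.ne']
  rw [h1]
  push_cast
  ring

/-- The space-time weight `φ_{k,l}(r,t) |r|^{-1/2}`, restricted to `t ∈ [1,2]`. -/
def wt (φ : ℝ → ℝ) (k l : ℤ) (z : (ℝ × ℝ) × ℝ) : ℝ :=
  (Icc (1:ℝ) 2).indicator (fun t => phikl φ k l z.1.1 t * |z.1.1| ^ (-(1:ℝ)/2)) z.2

lemma measurable_wt {φ : ℝ → ℝ} (hφ : IsBump φ) (k l : ℤ) : Measurable (wt φ k l) := by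
  have hm := hφ.1.continuous.measurable
  have h1 : wt φ k l = (Prod.snd ⁻¹' Icc (1:ℝ) 2).indicator
      fun z : (ℝ × ℝ) × ℝ => phikl φ k l z.1.1 z.2 * |z.1.1| ^ (-(1:ℝ)/2) := rfl
  rw [h1]
  refine Measurable.indicator ?_ (measurable_snd measurableSet_Icc)
  unfold phikl
  refine Measurable.mul (Measurable.mul (hm.comp (by fun_prop)) (hm.comp (by fun_prop))) ?_
  fun_prop

lemma mem_of_wt_ne_zero {φ : ℝ → ℝ} (hφ : IsBump φ) {k : ℤ} (hk : k = -1 ∨ k = 0 ∨ k = 1) {l : ℤ}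
    {z : (ℝ × ℝ) × ℝ} (hz : wt φ k l z ≠ 0) :
    z ∈ tube (3 * (2:ℝ) ^ (-l)) ∧ 1/4 ≤ z.1.1 ∧ z.1.1 ≤ 10 := by
  have ht : z.2 ∈ Icc (1:ℝ) 2 := mem_of_indicator_ne_zero hz
  rw [wt, indicator_of_mem ht, phikl] at hz
  have h1 : (2:ℝ) ^ (-k) * z.1.1 ∈ Icc (1 - 1/1000 : ℝ) (2 + 1/1000) := by
    by_contra h; exact hz (by rw [hφ.2 _ h, zero_mul, zero_mul])
  have h2 : (2:ℝ) ^ l * |z.1.1 - z.2| ∈ Icc (1 - 1/1000 : ℝ) (2 + 1/1000) := by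
    by_contra h; exact hz (by rw [hφ.2 _ h, mul_zero, zero_mul])
  have h3 : |z.1.1 - z.2| ≤ 3 * (2:ℝ) ^ (-l) := by
    rw [zpow_neg, ← div_eq_mul_inv, le_div_iff₀ (by positivity), mul_comm]
    linarith [h2.2]
  have h4 : 1/4 ≤ z.1.1 ∧ z.1.1 ≤ 10 := by
    rcases hk with rfl | rfl | rfl <;> norm_num at h1 <;> constructor <;> linarith [h1.1, h1.2]
  exact ⟨⟨ht, h3, by linarith [h4.1]⟩, h4⟩

lemma exists_wt_le {φ : ℝ → ℝ} (hφ : IsBump φ) {k : ℤ} (hk : k = -1 ∨ k = 0 ∨ k = 1) :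
    ∃ B, 0 ≤ B ∧ ∀ l z, |wt φ k l z| ≤ B := by
  obtain ⟨b, hb0, hb⟩ := hφ.exists_bound
  refine ⟨b * b * 2, by positivity, fun l z => ?_⟩
  by_cases hz : wt φ k l z = 0
  · rw [hz, abs_zero]; positivity
  obtain ⟨hz1, hz2, -⟩ := mem_of_wt_ne_zero hφ hk hz
  rw [wt, indicator_of_mem hz1.1, phikl, abs_mul, abs_mul]
  refine mul_le_mul (mul_le_mul (hb _) (hb _) (abs_nonneg _) hb0) ?_ (abs_nonneg _) (by positivity)
  rw [abs_of_nonneg (by positivity), abs_of_pos hz1.2.2]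
  calc z.1.1 ^ (-(1:ℝ)/2) ≤ (1/4 : ℝ) ^ (-(1:ℝ)/2) :=
        Real.rpow_le_rpow_of_nonpos (by norm_num) hz2 (by norm_num)
    _ = 2 := by
        rw [show (1/4 : ℝ) = 2 ^ (-2 : ℝ) by norm_num [Real.rpow_neg],
          ← Real.rpow_mul (by norm_num)]
        norm_num

/-- The localized operator `g ↦ φ_{k,l} 𝒰_t 𝒫_{j,m} g`, with `lam = 2^j` and `M = 2^{m/2}`. -/
def opT (φ : ℝ → ℝ) (k l : ℤ) (lam M : ℝ) (g : ℝ × ℝ → ℂ) (z : (ℝ × ℝ) × ℝ) : ℂ :=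
  ((wt φ k l z * lam ^ (-(1:ℝ)/2) : ℝ) : ℂ) *
    locU (fun u => u ^ (-(1:ℝ)/2) * φ u) φ lam M g z

lemma phikl_mul_Uop_projJM {φ : ℝ → ℝ} (hφ : IsBump φ) (k l j m : ℤ) {g : ℝ × ℝ → ℂ}
    (hg : Integrable g) {z : (ℝ × ℝ) × ℝ} (hz : z.2 ∈ Icc (1:ℝ) 2) :
    (phikl φ k l z.1.1 z.2 : ℂ) * Uop (projJM φ j m g) z.2 z.1.1 z.1.2 =
      opT φ k l ((2:ℝ) ^ (j:ℝ)) ((2:ℝ) ^ ((m:ℝ) / 2)) g z := by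
  rw [Uop_projJM hφ j m hg, opT, wt, indicator_of_mem hz]
  push_cast
  ring

/-- The size of the kernel of `opT`. -/
def opK (φ : ℝ → ℝ) (k l : ℤ) (lam M : ℝ) (z : (ℝ × ℝ) × ℝ) (x : ℝ × ℝ) : ℝ≥0∞ :=
  ENNReal.ofReal (|wt φ k l z| * lam ^ (3/2 : ℝ)) *
    ‖oscInt (fun u => ((u * (u ^ (-(1:ℝ)/2) * φ u) : ℝ) : ℂ))
      (fun θ => (φ (M ^ 2 * (1 - Real.cos θ)) : ℂ)) (z.2 * z.1.1) lam
      ((z.1.1 ^ 2 + z.2 ^ 2) / 2 - x.1, z.1.2 - x.2)‖ₑ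

lemma IsBump.id_mul {f : ℝ → ℝ} (hf : IsBump f) : IsBump fun u => u * f u :=
  ⟨contDiff_id.mul hf.1, fun u hu => by simp [hf.2 u hu]⟩

lemma opT_add {φ : ℝ → ℝ} (hφ : IsBump φ) (k l : ℤ) {lam : ℝ} (hl : 0 < lam) (M : ℝ)
    {f g : ℝ × ℝ → ℂ} (hf : Integrable f) (hg : Integrable g) :
    opT φ k l lam M (f + g) = opT φ k l lam M f + opT φ k l lam M g := by
  have h1 : ∀ ξ, ft2 (f + g) ξ = ft2 f ξ + ft2 g ξ := fun ξ => by
    simp only [ft2_eq, Pi.add_apply, mul_add]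
    exact integral_add (integrable_osc_mul (by fun_prop) hf) (integrable_osc_mul (by fun_prop) hg)
  funext z
  simp only [opT, locU, h1, mul_add, Pi.add_apply]
  rw [integral_add, mul_add]
  · exact integrable_osc_mul (by fun_prop) (integrable_cutoff_mul_ft2 (hφ.rpow_mul _) hφ hl M hf)
  · exact integrable_osc_mul (by fun_prop) (integrable_cutoff_mul_ft2 (hφ.rpow_mul _) hφ hl M hg)

lemma measurable_opT {φ : ℝ → ℝ} (hφ : IsBump φ) (k l : ℤ) {lam : ℝ} (hl : 0 < lam) (M : ℝ)
    {g : ℝ × ℝ → ℂ} (hg : Integrable g) : Measurable (opT φ k l lam M g) :=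
  (Complex.measurable_ofReal.comp ((measurable_wt hφ k l).mul_const _)).mul
    (continuous_locU (hφ.rpow_mul _) hφ hl M hg).measurable

lemma measurable_opK {φ : ℝ → ℝ} (hφ : IsBump φ) (k l : ℤ) (lam M : ℝ) (z : (ℝ × ℝ) × ℝ) :
    Measurable (opK φ k l lam M z) := by
  refine Measurable.const_mul (Measurable.enorm ?_) _
  refine (measurable_oscInt (hφ.rpow_mul _).id_mul.rad.continuous ?_ _ _).comp (by fun_prop)
  exact Complex.continuous_ofReal.comp (hφ.1.continuous.comp (by fun_prop))

lemma enorm_opT_le {φ : ℝ → ℝ} (hφ : IsBump φ) (k l : ℤ) {lam : ℝ} (hl : 0 < lam) (M : ℝ)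
    {g : ℝ × ℝ → ℂ} (hg : Integrable g) (z : (ℝ × ℝ) × ℝ) :
    ‖opT φ k l lam M g z‖ₑ ≤ ∫⁻ x, opK φ k l lam M z x * ‖g x‖ₑ := by
  have h1 := integral_mul_ft2 (integrable_cutoff (hφ.rpow_mul (-(1:ℝ)/2)) hφ hl M) hg
    (f := fun ξ => z.2 * z.1.1 * enorm2 ξ) (by fun_prop) ((z.1.1 ^ 2 + z.2 ^ 2) / 2) z.1.2
  have h2 : opT φ k l lam M g z = ∫ x : ℝ × ℝ, ((wt φ k l z * lam ^ (3/2 : ℝ) : ℝ) : ℂ) *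
      oscInt (fun u => ((u * (u ^ (-(1:ℝ)/2) * φ u) : ℝ) : ℂ))
      (fun θ => (φ (M ^ 2 * (1 - Real.cos θ)) : ℂ)) (z.2 * z.1.1) lam
      ((z.1.1 ^ 2 + z.2 ^ 2) / 2 - x.1, z.1.2 - x.2) * g x := by
    rw [opT, locU]
    simp only [← mul_assoc]
    rw [h1, ← integral_const_mul]
    refine integral_congr_ae (.of_forall fun x => ?_)
    simp only
    have h3 := integral_osc_cutoff (h := φ) (hφ.rpow_mul (-(1:ℝ)/2)) hl M (z.2 * z.1.1)
      ((z.1.1 ^ 2 + z.2 ^ 2) / 2 - x.1, z.1.2 - x.2)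
    simp only at h3
    rw [h3]
    have h4 : lam ^ (-(1:ℝ)/2) * lam ^ 2 = lam ^ (3/2 : ℝ) := by
      rw [← Real.rpow_natCast, ← Real.rpow_add hl]
      norm_num
    rw [← h4]
    push_cast
    ring_nf
  rw [h2]
  refine (enorm_integral_le_lintegral_enorm _).trans (lintegral_mono fun x => ?_)
  rw [enorm_mul, enorm_mul, opK, ← ofReal_norm, Complex.norm_real, Real.norm_eq_abs, abs_mul,
    abs_of_nonneg (show 0 ≤ lam ^ (3/2 : ℝ) by positivity)]

lemma exists_opK_bounds {φ : ℝ → ℝ} (hφ : IsBump φ) {k : ℤ} (hk : k = -1 ∨ k = 0 ∨ k = 1) :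
    ∃ C, 0 ≤ C ∧ ∀ (l : ℤ) (lam M : ℝ), 1 ≤ M → M ^ 2 ≤ lam → ∀ z,
      ∫⁻ x, opK φ k l lam M z x ≤ ENNReal.ofReal (C * M⁻¹) ∧
      ∀ x, opK φ k l lam M z x ≤ ENNReal.ofReal (C * lam) := by
  obtain ⟨B, hB0, hB⟩ := exists_wt_le hφ hk
  have hR := (hφ.rpow_mul (-(1:ℝ)/2)).id_mul.rad
  have hA := Adm.base φ hφ.1 hφ.2
  obtain ⟨C₁, hC₁, h₁⟩ := lintegral_oscInt_le hR hA
  obtain ⟨C₂, hC₂, h₂⟩ := norm_oscInt_le hR hA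
  refine ⟨B * C₁ + B * C₂, by positivity, fun l lam M hM hMl z => ?_⟩
  have hM0 : 0 < M := by linarith
  have hl : 0 < lam := lt_of_lt_of_le (by positivity) hMl
  by_cases hz : wt φ k l z = 0
  · simp [opK, hz]
  obtain ⟨hz1, hz2, hz3⟩ := mem_of_wt_ne_zero hφ hk hz
  have ht := hz1.1
  have hP : Par M lam (z.2 * z.1.1) :=
    ⟨hM, hMl, by nlinarith [ht.1], by nlinarith [ht.1, ht.2]⟩
  constructor
  · set H : ℝ × ℝ → ℝ≥0∞ := fun v => ‖oscInt (fun u => ((u * (u ^ (-(1:ℝ)/2) * φ u) : ℝ) : ℂ))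
      (fun θ => (φ (M ^ 2 * (1 - Real.cos θ)) : ℂ)) (z.2 * z.1.1) lam v‖ₑ with hH
    have h3 : ∀ x : ℝ × ℝ, opK φ k l lam M z x =
        ENNReal.ofReal (|wt φ k l z| * lam ^ (3/2 : ℝ)) *
          H (((z.1.1 ^ 2 + z.2 ^ 2) / 2, z.1.2) - x) := fun x => rfl
    simp only [h3]
    rw [lintegral_const_mul' _ _ ENNReal.ofReal_ne_top, lintegral_sub_left_eq_self]
    calc _ ≤ ENNReal.ofReal (B * lam ^ (3/2 : ℝ)) *
          ENNReal.ofReal (C₁ * (lam ^ (3/2 : ℝ) * M)⁻¹) := by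
          gcongr
          · exact hB l z
          · exact h₁ M lam _ hP
      _ = ENNReal.ofReal (B * C₁ * M⁻¹) := by
          rw [← ENNReal.ofReal_mul (by positivity)]
          congr 1
          have : lam ^ (3/2 : ℝ) ≠ 0 := by positivity
          field_simp
      _ ≤ _ := by
          refine ENNReal.ofReal_le_ofReal ?_
          gcongr
          have : 0 ≤ B * C₂ := by positivity
          linarith
  · intro x
    rw [opK, ← ofReal_norm, ← ENNReal.ofReal_mul (by positivity)]
    refine ENNReal.ofReal_le_ofReal ?_
    calc _ ≤ B * lam ^ (3/2 : ℝ) * (C₂ * lam ^ (-1/2 : ℝ)) := by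
          gcongr
          · exact hB l z
          · exact h₂ M lam _ hP _
      _ = B * C₂ * lam := by
          have : lam ^ (3/2 : ℝ) * lam ^ (-1/2 : ℝ) = lam := by
            rw [← Real.rpow_add hl]; norm_num
          linear_combination B * C₂ * this
      _ ≤ _ := by
          gcongr
          have : 0 ≤ B * C₁ := by positivity
          linarith

lemma exists_lintegral_opT_sq_le {φ : ℝ → ℝ} (hφ : IsBump φ) {k : ℤ}
    (hk : k = -1 ∨ k = 0 ∨ k = 1) :
    ∃ C, 0 ≤ C ∧ ∀ (l : ℤ) (lam M : ℝ), 0 < M → 0 < lam → ∀ g : ℝ × ℝ → ℂ, Integrable g →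
      ∫⁻ z, ‖opT φ k l lam M g z‖ₑ ^ 2 ≤
        ENNReal.ofReal (C * (M ^ 2 * (2:ℝ) ^ (-l) * lam⁻¹)) * ∫⁻ x, ‖g x‖ₑ ^ 2 := by
  obtain ⟨B, hB0, hB⟩ := exists_wt_le hφ hk
  obtain ⟨b₁, hb₁, hf⟩ := (hφ.rpow_mul (-(1:ℝ)/2)).exists_bound
  obtain ⟨b₂, hb₂, hh⟩ := hφ.exists_bound
  refine ⟨B ^ 2 * 6 * ((2 * π) ^ 2) * (1000 / 999) * (b₁ * b₂) ^ 2 * (2 * π) ^ 2, by positivity,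
    fun l lam M hM hl g hg => ?_⟩
  set F := locU (fun u => u ^ (-(1:ℝ)/2) * φ u) φ lam M g with hF
  have h1 : ∀ z, ‖opT φ k l lam M g z‖ₑ ^ 2 ≤ (tube (3 * (2:ℝ) ^ (-l))).indicator
      (fun z => ENNReal.ofReal (B ^ 2 * lam⁻¹) * ‖F z‖ₑ ^ 2) z := by
    intro z
    by_cases hz : wt φ k l z = 0
    · simp [opT, hz]
    rw [indicator_of_mem (mem_of_wt_ne_zero hφ hk hz).1, opT, enorm_mul, mul_pow]
    gcongr
    rw [← ofReal_norm, ← ENNReal.ofReal_pow (norm_nonneg _), Complex.norm_real]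
    refine ENNReal.ofReal_le_ofReal ?_
    rw [Real.norm_eq_abs, sq_abs, mul_pow, ← sq_abs (wt φ k l z)]
    have h2 : (lam ^ (-(1:ℝ)/2)) ^ 2 = lam⁻¹ := by
      rw [← Real.rpow_natCast, ← Real.rpow_mul hl.le, ← Real.rpow_neg_one]
      norm_num
    rw [h2]
    gcongr
    exact hB l z
  have h3 : ∫⁻ ξ, ‖(cutoff (fun u => u ^ (-(1:ℝ)/2) * φ u) φ lam M ξ : ℂ) * ft2 g ξ‖ₑ ^ 2 ≤
      ENNReal.ofReal ((b₁ * b₂) ^ 2) *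
        (ENNReal.ofReal ((2 * π) ^ 2) * ∫⁻ y, ‖g y‖ₑ ^ 2) := by
    calc _ ≤ ∫⁻ ξ, ENNReal.ofReal ((b₁ * b₂) ^ 2) * ‖ft2 g ξ‖ₑ ^ 2 := by
          refine lintegral_mono fun ξ => ?_
          simp only
          rw [enorm_mul, mul_pow, ← ofReal_norm, ← ENNReal.ofReal_pow (norm_nonneg _),
            Complex.norm_real, Real.norm_eq_abs, cutoff, abs_mul]
          gcongr
          · exact hf _
          · exact hh _
      _ = ENNReal.ofReal ((b₁ * b₂) ^ 2) * ∫⁻ ξ, ‖ft2 g ξ‖ₑ ^ 2 :=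
          lintegral_const_mul' _ _ ENNReal.ofReal_ne_top
      _ ≤ _ := by
          gcongr
          exact lintegral_ft2_sq_le hg
  calc ∫⁻ z, ‖opT φ k l lam M g z‖ₑ ^ 2 ≤ ∫⁻ z, (tube (3 * (2:ℝ) ^ (-l))).indicator
        (fun z => ENNReal.ofReal (B ^ 2 * lam⁻¹) * ‖F z‖ₑ ^ 2) z := lintegral_mono h1
    _ = ENNReal.ofReal (B ^ 2 * lam⁻¹) * ∫⁻ z in tube (3 * (2:ℝ) ^ (-l)), ‖F z‖ₑ ^ 2 := by
        rw [lintegral_indicator (measurableSet_tube _),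
          lintegral_const_mul' _ _ ENNReal.ofReal_ne_top]
    _ ≤ ENNReal.ofReal (B ^ 2 * lam⁻¹) * (ENNReal.ofReal (2 * (3 * (2:ℝ) ^ (-l))) *
        (ENNReal.ofReal ((2 * π) ^ 2) * ENNReal.ofReal (999 / 1000 * (M ^ 2)⁻¹)⁻¹ *
          (ENNReal.ofReal ((b₁ * b₂) ^ 2) *
            (ENNReal.ofReal ((2 * π) ^ 2) * ∫⁻ y, ‖g y‖ₑ ^ 2)))) := by
        gcongr
        refine (lintegral_tube_locU_sq_le (hφ.rpow_mul _) hφ hl hM hg).trans ?_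
        gcongr
    _ = _ := by
        simp only [← mul_assoc]
        rw [← ENNReal.ofReal_mul (by positivity), ← ENNReal.ofReal_mul (by positivity),
          ← ENNReal.ofReal_mul (by positivity), ← ENNReal.ofReal_mul (by positivity),
          ← ENNReal.ofReal_mul (by positivity)]
        congr 2
        field_simp
        ring

lemma exists_opT_bounds {φ : ℝ → ℝ} (hφ : IsBump φ) {k : ℤ} (hk : k = -1 ∨ k = 0 ∨ k = 1) :
    ∃ C : ℝ, 0 < C ∧ ∀ j l m : ℤ, 0 ≤ m → m < j →
      (∀ z, ∫⁻ x, opK φ k l ((2:ℝ) ^ (j:ℝ)) ((2:ℝ) ^ ((m:ℝ) / 2)) z x ≤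
        ENNReal.ofReal (C * (2:ℝ) ^ (-((m:ℝ) / 2)))) ∧
      (∀ z x, opK φ k l ((2:ℝ) ^ (j:ℝ)) ((2:ℝ) ^ ((m:ℝ) / 2)) z x ≤
        ENNReal.ofReal (C * (2:ℝ) ^ (j:ℝ))) ∧
      ∀ g : ℝ × ℝ → ℂ, Integrable g →
        ∫⁻ z, ‖opT φ k l ((2:ℝ) ^ (j:ℝ)) ((2:ℝ) ^ ((m:ℝ) / 2)) g z‖ₑ ^ 2 ≤
          ENNReal.ofReal (C * (2:ℝ) ^ ((m:ℝ) - l - j)) * ∫⁻ x, ‖g x‖ₑ ^ 2 := by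
  obtain ⟨C₁, hC₁, h₁⟩ := exists_opK_bounds hφ hk
  obtain ⟨C₂, hC₂, h₂⟩ := exists_lintegral_opT_sq_le hφ hk
  refine ⟨C₁ + C₂ + 1, by positivity, fun j l m hm hmj => ?_⟩
  have hm' : (0:ℝ) ≤ m := by exact_mod_cast hm
  have hmj' : (m:ℝ) ≤ j := by exact_mod_cast hmj.le
  have h3 : ((2:ℝ) ^ ((m:ℝ) / 2)) ^ 2 = (2:ℝ) ^ (m:ℝ) := by
    rw [← Real.rpow_natCast, ← Real.rpow_mul (by norm_num)]
    congr 1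
    push_cast
    ring
  have h4 : ((2:ℝ) ^ ((m:ℝ) / 2)) ^ 2 ≤ (2:ℝ) ^ (j:ℝ) := by
    rw [h3]
    exact Real.rpow_le_rpow_of_exponent_le (by norm_num) hmj'
  have h5 := h₁ l _ _ (Real.one_le_rpow (by norm_num) (by positivity : 0 ≤ (m:ℝ) / 2)) h4
  refine ⟨fun z => (h5 z).1.trans (ENNReal.ofReal_le_ofReal ?_),
    fun z x => ((h5 z).2 x).trans (ENNReal.ofReal_le_ofReal ?_),
    fun g hg => (h₂ l _ _ (by positivity) (by positivity) g hg).trans ?_⟩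
  · rw [Real.rpow_neg (by norm_num)]
    gcongr
    linarith
  · gcongr
    linarith
  · rw [h3, sub_eq_add_neg, sub_eq_add_neg, Real.rpow_add (by norm_num),
      Real.rpow_add (by norm_num), ← Real.rpow_intCast, Int.cast_neg,
      Real.rpow_neg (by norm_num) (j:ℝ)]
    gcongr
    linarith

lemma exists_eLpNorm_opT_le_top {φ : ℝ → ℝ} (hφ : IsBump φ) {k : ℤ}
    (hk : k = -1 ∨ k = 0 ∨ k = 1) {p : ℝ≥0∞} (hp : 1 ≤ p) :
    ∃ C : ℝ, 0 < C ∧ ∀ j l m : ℤ, 0 ≤ m → m < j → ∀ g : ℝ × ℝ → ℂ, Integrable g → Measurable g →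
      eLpNorm (opT φ k l ((2:ℝ) ^ (j:ℝ)) ((2:ℝ) ^ ((m:ℝ) / 2)) g) ⊤ volume ≤
        ENNReal.ofReal (C * (2:ℝ) ^ ((j:ℝ) * p.toReal⁻¹ - (m:ℝ) / 2 * (1 - p.toReal⁻¹))) *
          eLpNorm g p volume := by
  obtain ⟨C, hC, h⟩ := exists_opT_bounds hφ hk
  refine ⟨C, hC, fun j l m hm hmj g hg hgm => ?_⟩
  obtain ⟨h1, h2, -⟩ := h j l m hm hmj
  rw [eLpNorm_exponent_top]
  refine essSup_le_of_ae_le _ (.of_forall fun z =>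
    (enorm_opT_le hφ k l (by positivity) _ hg z).trans ?_)
  rcases eq_or_ne p ⊤ with rfl | hp'
  · rw [eLpNorm_exponent_top]
    calc _ ≤ ∫⁻ x, opK φ k l ((2:ℝ) ^ (j:ℝ)) ((2:ℝ) ^ ((m:ℝ) / 2)) z x *
          eLpNormEssSup g volume := by
          refine lintegral_mono_ae ?_
          filter_upwards [ae_le_eLpNormEssSup (f := g) (μ := volume)] with x hx
          exact mul_le_mul' le_rfl hx
      _ = _ := lintegral_mul_const _ (measurable_opK hφ k l _ _ z)
      _ ≤ _ := mul_le_mul' ((h1 z).trans (le_of_eq (by simp))) le_rfl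
  · have hp1 : 1 ≤ p.toReal := by
      rw [← ENNReal.toReal_one]
      exact ENNReal.toReal_mono hp' hp
    have h3 := lintegral_mul_rpow_le (p := p.toReal) (σ := p.toReal⁻¹)
      (measurable_opK hφ k l ((2:ℝ) ^ (j:ℝ)) ((2:ℝ) ^ ((m:ℝ) / 2)) z) hgm.enorm (by positivity)
      (inv_le_one_of_one_le₀ hp1) (h1 z) (h2 z)
    rw [mul_inv_cancel₀ (by positivity)] at h3
    simp only [ENNReal.rpow_one] at h3
    refine h3.trans (le_of_eq ?_)
    rw [eLpNorm_eq_lintegral_rpow_enorm_toReal (by positivity) hp', one_div]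
    congr 1
    rw [ENNReal.ofReal_rpow_of_pos (by positivity), ENNReal.ofReal_rpow_of_pos (by positivity),
      ← ENNReal.ofReal_mul (by positivity), Real.mul_rpow hC.le (by positivity),
      Real.mul_rpow hC.le (by positivity), mul_mul_mul_comm, ← Real.rpow_add hC,
      ← Real.rpow_mul (by norm_num), ← Real.rpow_mul (by norm_num),
      ← Real.rpow_add (by norm_num)]
    rw [sub_add_cancel, Real.rpow_one]
    congr 3
    ring

lemma exists_eLpNorm_opT_two_le {φ : ℝ → ℝ} (hφ : IsBump φ) {k : ℤ}
    (hk : k = -1 ∨ k = 0 ∨ k = 1) :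
    ∃ C : ℝ, 0 < C ∧ ∀ j l m : ℤ, 0 ≤ m → m < j → ∀ g : ℝ × ℝ → ℂ, Integrable g →
      eLpNorm (opT φ k l ((2:ℝ) ^ (j:ℝ)) ((2:ℝ) ^ ((m:ℝ) / 2)) g) 2 volume ≤
        ENNReal.ofReal (C * (2:ℝ) ^ (((m:ℝ) - l - j) * 2⁻¹)) * eLpNorm g 2 volume := by
  obtain ⟨C, hC, h⟩ := exists_opT_bounds hφ hk
  refine ⟨C ^ (2⁻¹ : ℝ), by positivity, fun j l m hm hmj g hg => ?_⟩
  have h1 := (h j l m hm hmj).2.2 g hg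
  simp only [eLpNorm_eq_lintegral_rpow_enorm_toReal two_ne_zero ENNReal.ofNat_ne_top,
    ENNReal.toReal_ofNat, ENNReal.rpow_ofNat, one_div]
  refine (ENNReal.rpow_le_rpow h1 (by norm_num)).trans (le_of_eq ?_)
  rw [ENNReal.mul_rpow_of_nonneg _ _ (by norm_num), ENNReal.ofReal_rpow_of_pos (by positivity),
    Real.mul_rpow hC.le (by positivity), ← Real.rpow_mul (by norm_num)]

lemma exists_eLpNorm_opT_le_of_two_lt {φ : ℝ → ℝ} (hφ : IsBump φ) {k : ℤ}
    (hk : k = -1 ∨ k = 0 ∨ k = 1) {p q : ℝ} (hp : 1 ≤ p) (hpq : p ≤ q) (hq : 2 < q)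
    (hpq1 : p⁻¹ + q⁻¹ ≤ 1) :
    ∃ C : ℝ, 0 < C ∧ ∀ j l m : ℤ, 0 ≤ m → m < j → ∀ g : ℝ × ℝ → ℂ, Integrable g → Measurable g →
      eLpNorm g (ENNReal.ofReal p) volume ≠ ⊤ →
      eLpNorm (opT φ k l ((2:ℝ) ^ (j:ℝ)) ((2:ℝ) ^ ((m:ℝ) / 2)) g) (ENNReal.ofReal q) volume ≤
        ENNReal.ofReal (C * (2:ℝ) ^ (((m:ℝ) - l - j) * q⁻¹ + (j:ℝ) * (p⁻¹ - q⁻¹) -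
          (m:ℝ) / 2 * (1 - p⁻¹ - q⁻¹))) * eLpNorm g (ENNReal.ofReal p) volume := by
  obtain ⟨C, hC, h⟩ := exists_opT_bounds hφ hk
  have hp0 : 0 < p := by linarith
  have hq0 : 0 < q := by linarith
  have hq2 : 0 < q - 2 := by linarith
  set σ := (q - p) / (p * (q - 2)) with hσ
  have hσ0 : 0 ≤ σ := div_nonneg (by linarith) (by positivity)
  have hσ2 : p * σ * (q - 2) = q - p := by rw [hσ]; field_simp
  have hsum : q + p ≤ p * q := by
    have := mul_le_mul_of_nonneg_left hpq1 (by positivity : 0 ≤ p * q)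
    field_simp at this
    linarith
  have hσ1 : σ ≤ 1 := by
    rw [hσ, div_le_one (by positivity)]
    linarith
  set c := 4 * q / (q - 2) * 2 ^ (q - 2) with hc
  have hc0 : 0 < c := by positivity
  refine ⟨(c * C * C ^ (q - 2)) ^ q⁻¹, by positivity, fun j l m hm hmj g hg hgm hgp => ?_⟩
  obtain ⟨h1, h2, h3⟩ := h j l m hm hmj
  have hP : (0:ℝ) < (2:ℝ) ^ (j:ℝ) := by positivity
  simp only [eLpNorm_eq_lintegral_rpow_enorm_toReal (ENNReal.ofReal_pos.2 hp0).ne'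
    ENNReal.ofReal_ne_top, ENNReal.toReal_ofReal hp0.le] at hgp ⊢
  rw [eLpNorm_eq_lintegral_rpow_enorm_toReal (ENNReal.ofReal_pos.2 hq0).ne'
    ENNReal.ofReal_ne_top, ENNReal.toReal_ofReal hq0.le]
  have hgp' : ∫⁻ x, ‖g x‖ₑ ^ p ≠ ⊤ := fun h => hgp (by
    rw [h]
    exact ENNReal.top_rpow_of_pos (by positivity))
  have h4 := lintegral_rpow_le_of_kernel (μ := volume) (ν := volume)
    (T := opT φ k l ((2:ℝ) ^ (j:ℝ)) ((2:ℝ) ^ ((m:ℝ) / 2)))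
    (k := opK φ k l ((2:ℝ) ^ (j:ℝ)) ((2:ℝ) ^ ((m:ℝ) / 2)))
    (by positivity) (by positivity) hp hq hσ0 hσ1 hσ2
    (fun f g hf hg => opT_add hφ k l hP _ hf hg)
    (fun g hg => (measurable_opT hφ k l hP _ hg).aemeasurable)
    (fun z => measurable_opK hφ k l _ _ z) h1 h2
    (fun g hg z => enorm_opT_le hφ k l hP _ hg z) h3 hg hgm hgp'
  rw [← hc] at h4
  refine (ENNReal.rpow_le_rpow h4 (by positivity)).trans (le_of_eq ?_)
  rw [ENNReal.mul_rpow_of_nonneg _ _ (by positivity), ← ENNReal.rpow_mul,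
    show q / p * (1 / q) = 1 / p by field_simp]
  congr 1
  rw [ENNReal.ofReal_rpow_of_pos (by positivity), ← ENNReal.ofReal_mul hc0.le,
    ← ENNReal.ofReal_mul (by positivity), ENNReal.ofReal_rpow_of_pos (by positivity), one_div]
  congr 1
  have h5 : (C * (2:ℝ) ^ (-((m:ℝ) / 2))) ^ (1 - σ) * (C * (2:ℝ) ^ (j:ℝ)) ^ σ =
      C * (2:ℝ) ^ (-((m:ℝ) / 2) * (1 - σ) + j * σ) := by
    rw [Real.mul_rpow hC.le (by positivity), Real.mul_rpow hC.le (by positivity),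
      mul_mul_mul_comm, ← Real.rpow_add hC, ← Real.rpow_mul (by norm_num),
      ← Real.rpow_mul (by norm_num), ← Real.rpow_add (by norm_num), sub_add_cancel, Real.rpow_one]
  have h6 : c * (C * (2:ℝ) ^ ((m:ℝ) - l - j)) *
      (C * (2:ℝ) ^ (-((m:ℝ) / 2) * (1 - σ) + j * σ)) ^ (q - 2) =
      c * C * C ^ (q - 2) *
        (2:ℝ) ^ ((m:ℝ) - l - j + (-((m:ℝ) / 2) * (1 - σ) + j * σ) * (q - 2)) := by
    rw [Real.mul_rpow hC.le (by positivity), ← Real.rpow_mul (by norm_num),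
      Real.rpow_add (by norm_num)]
    ring
  rw [h5, h6, Real.mul_rpow (by positivity) (by positivity), ← Real.rpow_mul (by norm_num)]
  congr 2
  have h7 : σ * (q - 2) = q * p⁻¹ - 1 := by
    rw [hσ]
    field_simp
  have h8 : (1 - σ) * (q - 2) = q - 1 - q * p⁻¹ := by linarith
  calc _ = ((m:ℝ) - l - j + j * (σ * (q - 2)) - m / 2 * ((1 - σ) * (q - 2))) * q⁻¹ := by ring
    _ = _ := by
        rw [h7, h8]
        field_simp
        ring

lemma exists_eLpNorm_opT_le {φ : ℝ → ℝ} (hφ : IsBump φ) {k : ℤ} (hk : k = -1 ∨ k = 0 ∨ k = 1)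
    {p q : ℝ≥0∞} (hp : 1 ≤ p) (hpq : p ≤ q) (hpq1 : 1 / p + 1 / q ≤ 1) :
    ∃ C : ℝ, 0 < C ∧ ∀ j l m : ℤ, 0 ≤ m → m < j → ∀ g : ℝ × ℝ → ℂ, Integrable g → Measurable g →
      eLpNorm g p volume ≠ ⊤ →
      eLpNorm (opT φ k l ((2:ℝ) ^ (j:ℝ)) ((2:ℝ) ^ ((m:ℝ) / 2)) g) q volume ≤
        ENNReal.ofReal (C * (2:ℝ) ^ (((m:ℝ) - l - j) * (1 / q).toReal +
          (j:ℝ) * ((1 / p).toReal - (1 / q).toReal) -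
          (m:ℝ) / 2 * (1 - (1 / p).toReal - (1 / q).toReal))) * eLpNorm g p volume := by
  simp only [one_div, ENNReal.toReal_inv] at hpq1 ⊢
  rcases eq_or_ne q ⊤ with rfl | hq
  · obtain ⟨C, hC, h⟩ := exists_eLpNorm_opT_le_top hφ hk hp
    refine ⟨C, hC, fun j l m hm hmj g hg hgm _ => (h j l m hm hmj g hg hgm).trans (le_of_eq ?_)⟩
    simp
  have hp' : p ≠ ⊤ := ne_top_of_le_ne_top hq hpq
  have hp1 : 1 ≤ p.toReal := by
    rw [← ENNReal.toReal_one]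
    exact ENNReal.toReal_mono hp' hp
  have hpq' : p.toReal ≤ q.toReal := ENNReal.toReal_mono hq hpq
  have hq1 : 1 ≤ q.toReal := hp1.trans hpq'
  have h1 : p.toReal⁻¹ + q.toReal⁻¹ ≤ 1 := by
    have h2 := ENNReal.toReal_mono ENNReal.one_ne_top hpq1
    rwa [ENNReal.toReal_add (ENNReal.inv_ne_top.2 (zero_lt_one.trans_le hp).ne')
      (ENNReal.inv_ne_top.2 (zero_lt_one.trans_le (hp.trans hpq)).ne'), ENNReal.toReal_inv,
      ENNReal.toReal_inv, ENNReal.toReal_one] at h2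
  have hsum : q.toReal + p.toReal ≤ p.toReal * q.toReal := by
    have := mul_le_mul_of_nonneg_left h1 (by positivity : 0 ≤ p.toReal * q.toReal)
    field_simp at this
    linarith
  have hq2 : 2 ≤ q.toReal := by nlinarith
  rcases hq2.eq_or_lt with h2 | h2
  · have h3 : p.toReal = 2 := by
      rw [← h2] at hsum hpq'
      linarith
    obtain rfl : p = 2 := by rw [← ENNReal.ofReal_toReal hp', h3]; simp
    obtain rfl : q = 2 := by rw [← ENNReal.ofReal_toReal hq, ← h2]; simp
    obtain ⟨C, hC, h⟩ := exists_eLpNorm_opT_two_le hφ hk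
    refine ⟨C, hC, fun j l m hm hmj g hg _ _ => (h j l m hm hmj g hg).trans (le_of_eq ?_)⟩
    norm_num
  · obtain ⟨C, hC, h⟩ := exists_eLpNorm_opT_le_of_two_lt hφ hk hp1 hpq' h2 h1
    rw [ENNReal.ofReal_toReal hp', ENNReal.ofReal_toReal hq] at h
    exact ⟨C, hC, h⟩

lemma projJM_congr {φ : ℝ → ℝ} {j m : ℤ} {f g : ℝ × ℝ → ℂ} (h : ∀ ξ, ft2 f ξ = ft2 g ξ) :
    projJM φ j m f = projJM φ j m g := by
  funext x
  simp only [projJM, h]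

lemma Uop_projJM_of_ft2_eq_zero {φ : ℝ → ℝ} {j m : ℤ} {g : ℝ × ℝ → ℂ} (h : ∀ ξ, ft2 g ξ = 0)
    (t r x : ℝ) : Uop (projJM φ j m g) t r x = 0 := by
  have h1 : projJM φ j m g = fun _ => 0 := by
    funext x
    simp [projJM, h]
  have h2 : ∀ ξ, ft2 (projJM φ j m g) ξ = 0 := fun ξ => by simp [ft2, h1]
  simp [Uop, h2]

/-- Proposition 3.10 (improvement for `j > m`): for `j ≥ −1`, `k ∈ {−1,0,1}`, `l ≥ 0`,
`0 ≤ m < j`, `1 ≤ p ≤ q` and `1/p + 1/q ≤ 1`: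
`‖φ_{k,l} 𝒰_t 𝒫_{j,m} g‖_{L^q(ℝ²×[1,2])} ≲
2^{−j/2} 2^{l/q} 2^{(2/q)(m/2−l)+((j−m)/2)(1−1/p−1/q)+(3j/2)(1/p−1/q)} ‖g‖_{L^p}`,
with constant independent of `j, l, m, g`. -/
theorem singular_local_smoothing_Uop_large_j
    (φ : ℝ → ℝ) (hφ : IsLPBump φ) (p q : ℝ≥0∞)
    (hp : 1 ≤ p) (hpq : p ≤ q) (hpq1 : 1/p + 1/q ≤ 1)
    (k : ℤ) (hk : k = -1 ∨ k = 0 ∨ k = 1) :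
    ∃ C : ℝ, 0 < C ∧ ∀ j l m : ℤ, -1 ≤ j → 0 ≤ l → 0 ≤ m → m < j → ∀ g : ℝ × ℝ → ℂ,
      eLpNorm (fun z : (ℝ × ℝ) × ℝ =>
          ((phikl φ k l z.1.1 z.2 : ℝ) : ℂ) * Uop (projJM φ j m g) z.2 z.1.1 z.1.2) q
          (volume.restrict (Set.univ ×ˢ Set.Icc (1:ℝ) 2)) ≤
        ENNReal.ofReal (C * (2:ℝ) ^
            (-(j:ℝ)/2 + (l:ℝ) * (1/q).toReal +
              2 * (1/q).toReal * ((m:ℝ)/2 - (l:ℝ)) +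
              ((j:ℝ) - (m:ℝ))/2 * (1 - (1/p).toReal - (1/q).toReal) +
              3 * (j:ℝ)/2 * ((1/p).toReal - (1/q).toReal))) *
          eLpNorm g p volume := by
  obtain ⟨C, hC, h⟩ := exists_eLpNorm_opT_le hφ.isBump hk hp hpq hpq1
  refine ⟨C, hC, fun j l m _ _ hm hmj g => ?_⟩
  by_cases hg : Integrable g
  swap
  · simp only [Uop_projJM_of_ft2_eq_zero (ft2_eq_zero_of_not_integrable hg), mul_zero]
    rw [eLpNorm_zero']
    exact zero_le
  by_cases hgp : eLpNorm g p volume = ⊤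
  · rw [hgp, ENNReal.mul_top (ENNReal.ofReal_pos.2 (by positivity)).ne']
    exact le_top
  have hae := hg.1.ae_eq_mk
  have hg' := hg.congr hae
  have hft : ∀ ξ, ft2 g ξ = ft2 (hg.1.mk g) ξ := fun ξ =>
    integral_congr_ae (hae.mono fun y hy => by simp only [hy])
  rw [projJM_congr hft, eLpNorm_congr_ae hae]
  rw [eLpNorm_congr_ae hae] at hgp
  refine (eLpNorm_congr_ae ?_).trans_le ((eLpNorm_mono_measure _ Measure.restrict_le_self).trans
    ((h j l m hm hmj _ hg' hg.1.stronglyMeasurable_mk.measurable hgp).trans (le_of_eq ?_)))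
  · filter_upwards [ae_restrict_mem (MeasurableSet.univ.prod measurableSet_Icc)] with z hz
    exact phikl_mul_Uop_projJM hφ.isBump k l j m hg' hz.2
  · congr 4
    ring

end
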